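/- arXiv:2304.09743 — 4 statements merged into one kernel-verified Lean document; each statement's English description precedes it below -/
import Mathlib

section
/- For every dimension d ≥ 1, every finite set of data points 𝒳 ⊂ ℝ^d, every set 𝒰 of k ≥ 1 distinct centers in ℝ^d, and every assignment π : 𝒳 → 𝒰, there exists a threshold tree T separating 𝒰 such that cost₁(T) ≤ (1 + H_{k−1}) · cost₁(π, 𝒰). In particular, the price of explainability for k-medians is at most 1 + H_{k−1}. -/
/-- A threshold tree in `ℝ^d`: a finite binary tree whose internal nodes are
labelled by threshold cuts `(i, θ)`. -/
inductive ThresholdTree (d : ℕ) : Type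
  | leaf : ThresholdTree d
  | node (i : Fin d) (θ : ℝ) (l r : ThresholdTree d) : ThresholdTree d

namespace ThresholdTree

/-- The list of regions of the leaves of a threshold tree: the root has region
`ℝ^d`, and a node labelled `(i, θ)` splits its region `B` into
`B ∩ {x | x i ≤ θ}` (left child) and `B ∩ {x | θ < x i}` (right child). -/
def leaves {d : ℕ} : ThresholdTree d → List (Set (Fin d → ℝ))
  | leaf => [Set.univ]
  | node i θ l r =>
      (l.leaves.map fun B => B ∩ {x | x i ≤ θ}) ++
      (r.leaves.map fun B => B ∩ {x | θ < x i})

/-- A threshold tree separates a finite set `𝒰` of centers if every leaf region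
contains exactly one point of `𝒰`. -/
def Separates {d : ℕ} (T : ThresholdTree d) (𝒰 : Finset (Fin d → ℝ)) : Prop :=
  ∀ B ∈ T.leaves, ∃! u, u ∈ 𝒰 ∧ u ∈ B

end ThresholdTree

/-- The `k`-medians cost of an assignment `π` on the data set `𝒳`. -/
noncomputable def cost1 {d : ℕ} (𝒳 : Finset (Fin d → ℝ))
    (π : (Fin d → ℝ) → (Fin d → ℝ)) : ℝ :=
  ∑ x ∈ 𝒳, ∑ i, |x i - π x i|

/-- The `m`-th harmonic number. -/
noncomputable def harm (m : ℕ) : ℝ := ∑ j ∈ Finset.range m, 1 / ((j : ℝ) + 1)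


/-- product lemma: at least one ≥ exactly one -/
lemma prod_exact_one {α : Type*} [DecidableEq α] (A : Finset α) (a : α → ℝ)
    (h0 : ∀ u ∈ A, 0 ≤ a u) (h1 : ∀ u ∈ A, a u ≤ 1) :
    ∑ u ∈ A, (1 - a u) * ∏ v ∈ A.erase u, a v ≤ 1 - ∏ u ∈ A, a u := by
  induction A using Finset.induction_on with
  | empty => simp
  | insert v A hv ih =>
    have ih' := ih (fun u hu => h0 u (Finset.mem_insert_of_mem hu))
      (fun u hu => h1 u (Finset.mem_insert_of_mem hu))
    have hP0 : 0 ≤ ∏ u ∈ A, a u :=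
      Finset.prod_nonneg (fun u hu => h0 u (Finset.mem_insert_of_mem hu))
    have hP1 : ∏ u ∈ A, a u ≤ 1 :=
      Finset.prod_le_one (fun u hu => h0 u (Finset.mem_insert_of_mem hu))
        (fun u hu => h1 u (Finset.mem_insert_of_mem hu))
    have hv0 := h0 v (Finset.mem_insert_self _ _)
    have hv1 := h1 v (Finset.mem_insert_self _ _)
    rw [Finset.sum_insert hv, Finset.prod_insert hv, Finset.erase_insert hv]
    have : ∑ u ∈ A, (1 - a u) * ∏ w ∈ (insert v A).erase u, a w
        = a v * ∑ u ∈ A, (1 - a u) * ∏ w ∈ A.erase u, a w := by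
      rw [Finset.mul_sum]
      refine Finset.sum_congr rfl fun u hu => ?_
      have huv : v ≠ u := fun h => hv (h ▸ hu)
      rw [Finset.erase_insert_of_ne huv, Finset.prod_insert (fun h => hv (Finset.mem_of_mem_erase h))]
      ring
    rw [this]
    have := mul_le_mul_of_nonneg_left ih' hv0
    nlinarith [mul_nonneg (sub_nonneg.2 hP1) (sub_nonneg.2 hv1)]

lemma prod_cut {α : Type*} [DecidableEq α] (Q S : Finset α) (a : α → ℝ)
    (h0 : ∀ u ∈ Q, 0 ≤ a u) (h1 : ∀ u ∈ Q, a u ≤ 1) :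
    ∑ u ∈ Q ∩ S, (1 - a u) * ∏ v ∈ Q.erase u, a v ≤ ∏ u ∈ Q \ S, a u - ∏ u ∈ Q, a u := by
  have e1 : ∏ u ∈ Q, a u = (∏ u ∈ Q \ S, a u) * ∏ u ∈ Q ∩ S, a u := by
    rw [← Finset.prod_union (Finset.disjoint_sdiff_inter Q S), Finset.sdiff_union_inter]
  have e2 : ∑ u ∈ Q ∩ S, (1 - a u) * ∏ v ∈ Q.erase u, a v
      = (∏ u ∈ Q \ S, a u) * ∑ u ∈ Q ∩ S, (1 - a u) * ∏ v ∈ (Q ∩ S).erase u, a v := by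
    rw [Finset.mul_sum]
    refine Finset.sum_congr rfl fun u hu => ?_
    have : Q.erase u = (Q \ S) ∪ (Q ∩ S).erase u := by
      ext w; simp only [Finset.mem_erase, Finset.mem_union, Finset.mem_sdiff, Finset.mem_inter] at *
      constructor
      · rintro ⟨h, h'⟩; by_cases hw : w ∈ S <;> simp [*]
      · rintro (⟨h, h'⟩ | ⟨h, h', h''⟩)
        · exact ⟨fun e => h' (e ▸ hu.2), h⟩
        · exact ⟨h, h'⟩
    rw [this, Finset.prod_union]
    · ring
    · rw [Finset.disjoint_left]; intro w hw hw'
      simp at hw hw'; tauto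
  rw [e1, e2]
  have := prod_exact_one (Q ∩ S) a (fun u hu => h0 u (Finset.mem_inter.1 hu).1)
    (fun u hu => h1 u (Finset.mem_inter.1 hu).1)
  have hP : 0 ≤ ∏ u ∈ Q \ S, a u := Finset.prod_nonneg fun u hu => h0 u (Finset.mem_sdiff.1 hu).1
  have := mul_le_mul_of_nonneg_left this hP
  linarith

/-- `E max`-type functional. -/
noncomputable def Nf {α : Type*} (Q : Finset α) (b : α → ℝ) : ℝ :=
  ∫ x in (0:ℝ)..1, (1 - ∏ u ∈ Q, (1 - b u * x)) / x

lemma Nf_kernel {α : Type*} [DecidableEq α] (Q : Finset α) (b : α → ℝ) :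
    ∃ k : ℝ → ℝ, Continuous k ∧ ∀ x, 1 - ∏ u ∈ Q, (1 - b u * x) = x * k x := by
  induction Q using Finset.induction_on with
  | empty => exact ⟨fun _ => 0, continuous_const, by simp⟩
  | insert v A hv ih =>
    obtain ⟨k, hk, h⟩ := ih
    refine ⟨fun x => k x + b v * ∏ u ∈ A, (1 - b u * x), by fun_prop, fun x => ?_⟩
    rw [Finset.prod_insert hv]
    linear_combination h x

lemma Nf_int {α : Type*} [DecidableEq α] (Q : Finset α) (b : α → ℝ) :
    IntervalIntegrable (fun x => (1 - ∏ u ∈ Q, (1 - b u * x)) / x) MeasureTheory.volume 0 1 := by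
  obtain ⟨k, hk, h⟩ := Nf_kernel Q b
  refine (hk.intervalIntegrable 0 1).congr ?_
  intro x hx
  rw [Set.uIoc_of_le zero_le_one] at hx
  have : x ≠ 0 := hx.1.ne'
  simp only [h x]
  field_simp

lemma Nf_insert {α : Type*} [DecidableEq α] (Q : Finset α) (b : α → ℝ) (v : α) (hv : v ∉ Q) :
    Nf (insert v Q) b = Nf Q b + b v * ∫ x in (0:ℝ)..1, ∏ u ∈ Q, (1 - b u * x) := by
  unfold Nf
  rw [← intervalIntegral.integral_const_mul, ← intervalIntegral.integral_add (Nf_int Q b)]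
  · refine intervalIntegral.integral_congr_ae (Filter.Eventually.of_forall fun x hx => ?_)
    rw [Set.uIoc_of_le zero_le_one] at hx
    have : x ≠ 0 := hx.1.ne'
    rw [Finset.prod_insert hv]
    field_simp
    ring
  · apply Continuous.intervalIntegrable; fun_prop

lemma harm_succ' (m : ℕ) : (∑ j ∈ Finset.range (m+1), 1 / ((j : ℝ) + 1)) =
   (∑ j ∈ Finset.range m, 1 / ((j : ℝ) + 1)) + 1 / ((m:ℝ)+1) := Finset.sum_range_succ _ _

lemma Nf_one {α : Type*} [DecidableEq α] (Q : Finset α) (b : α → ℝ) (hb : ∀ u ∈ Q, b u = 1) :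
    Nf Q b = ∑ j ∈ Finset.range Q.card, 1 / ((j : ℝ) + 1) := by
  induction Q using Finset.induction_on with
  | empty => simp [Nf]
  | insert v A hv ih =>
    rw [Nf_insert _ _ _ hv, ih (fun u hu => hb u (Finset.mem_insert_of_mem hu)),
      Finset.card_insert_of_notMem hv, Finset.sum_range_succ, hb v (Finset.mem_insert_self _ _)]
    congr 1
    have : ∀ x : ℝ, ∏ u ∈ A, (1 - b u * x) = (1 - x) ^ A.card := by
      intro x
      rw [← Finset.prod_const]
      refine Finset.prod_congr rfl fun u hu => ?_
      rw [hb u (Finset.mem_insert_of_mem hu), one_mul]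
    simp only [this]
    have := intervalIntegral.integral_comp_sub_left (a := 0) (b := 1) (fun x : ℝ => x ^ A.card) 1
    rw [this]
    simp [integral_pow]

lemma Nf_nonneg {α : Type*} [DecidableEq α] (Q : Finset α) (b : α → ℝ)
    (h0 : ∀ u ∈ Q, 0 ≤ b u) (h1 : ∀ u ∈ Q, b u ≤ 1) : 0 ≤ Nf Q b := by
  unfold Nf
  refine intervalIntegral.integral_nonneg zero_le_one fun x hx => div_nonneg ?_ hx.1
  rw [sub_nonneg]
  refine Finset.prod_le_one (fun u hu => ?_) (fun u hu => ?_)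
  · nlinarith [h0 u hu, h1 u hu, hx.1, hx.2]
  · nlinarith [h0 u hu, h1 u hu, hx.1, hx.2]

/-- the partial derivative of `Nf`. -/
noncomputable def Gf {α : Type*} [DecidableEq α] (Q : Finset α) (b : α → ℝ) (u : α) : ℝ :=
  ∫ x in (0:ℝ)..1, ∏ v ∈ Q.erase u, (1 - b v * x)

lemma Gf_sum {α : Type*} [DecidableEq α] (Q : Finset α) (b : α → ℝ) :
    ∑ u ∈ Q, b u * Gf Q b u = 1 - ∏ u ∈ Q, (1 - b u) := by
  have h1 : ∑ u ∈ Q, b u * Gf Q b u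
      = ∫ x in (0:ℝ)..1, ∑ u ∈ Q, b u * ∏ v ∈ Q.erase u, (1 - b v * x) := by
    rw [intervalIntegral.integral_finsetSum]
    · simp [Gf]
    · intro u hu; apply Continuous.intervalIntegrable; fun_prop
  rw [h1]
  have := intervalIntegral.integral_eq_sub_of_hasDerivAt (a := 0) (b := 1)
    (f := fun x => - ∏ u ∈ Q, (1 - b u * x))
    (f' := fun x => ∑ u ∈ Q, b u * ∏ v ∈ Q.erase u, (1 - b v * x)) ?_ ?_
  · rw [this]; simp; ring
  · intro x _
    have := (HasDerivAt.fun_finsetProd (u := Q) (f := fun u x => 1 - b u * x)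
      (f' := fun u => - b u) (x := x) ?_).neg
    · refine this.congr_deriv ?_
      rw [← Finset.sum_neg_distrib]
      refine Finset.sum_congr rfl fun u hu => ?_
      simp; ring
    · intro u hu
      simpa using ((hasDerivAt_id x).const_mul (b u)).const_sub 1
  · apply Continuous.intervalIntegrable; fun_prop

lemma Nf_cut {α : Type*} [DecidableEq α] (Q S : Finset α) (b : α → ℝ)
    (h0 : ∀ u ∈ Q, 0 ≤ b u) (h1 : ∀ u ∈ Q, b u ≤ 1) :
    ∑ u ∈ Q ∩ S, b u * Gf Q b u ≤ Nf Q b - Nf (Q \ S) b := by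
  have e1 : ∑ u ∈ Q ∩ S, b u * Gf Q b u
      = ∫ x in (0:ℝ)..1, ∑ u ∈ Q ∩ S, b u * ∏ v ∈ Q.erase u, (1 - b v * x) := by
    rw [intervalIntegral.integral_finsetSum]
    · simp [Gf]
    · intro u hu; apply Continuous.intervalIntegrable; fun_prop
  unfold Nf
  rw [e1, ← intervalIntegral.integral_sub (Nf_int _ _) (Nf_int _ _)]
  refine intervalIntegral.integral_mono_on_of_le_Ioo zero_le_one ?_ ((Nf_int _ _).sub (Nf_int _ _)) ?_
  · apply Continuous.intervalIntegrable; fun_prop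
  · intro x hx
    have := prod_cut Q S (fun u => 1 - b u * x)
      (fun u hu => by nlinarith [h0 u hu, h1 u hu, hx.1, hx.2])
      (fun u hu => by nlinarith [h0 u hu, h1 u hu, hx.1, hx.2])
    rw [← sub_div, le_div_iff₀ hx.1, Finset.sum_mul]
    refine le_trans (le_of_eq ?_) (this.trans (le_of_eq ?_))
    · refine Finset.sum_congr rfl fun u hu => by ring
    · ring

lemma Nf_deriv {α : Type*} [DecidableEq α] (Q : Finset α) (b b' : α → ℝ → ℝ)
    (hb : ∀ u s, HasDerivAt (b u) (b' u s) s) (hb' : ∀ u, Continuous (b' u)) (t : ℝ) :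
    HasDerivAt (fun s => Nf Q (fun u => b u s)) (∑ u ∈ Q, b' u t * Gf Q (fun u => b u t) u) t := by
  have hbc : ∀ u, Continuous (b u) := fun u =>
    continuous_iff_continuousAt.2 fun s => (hb u s).continuousAt
  have e1 : ∑ u ∈ Q, b' u t * Gf Q (fun u => b u t) u
      = ∫ x in (0:ℝ)..1, ∑ u ∈ Q, b' u t * ∏ v ∈ Q.erase u, (1 - b v t * x) := by
    rw [intervalIntegral.integral_finsetSum]
    · simp [Gf]
    · intro u hu; apply Continuous.intervalIntegrable; fun_prop
  rw [e1]
  have hcont : Continuous (fun q : ℝ × ℝ => ∑ u ∈ Q, b' u q.1 * ∏ v ∈ Q.erase u, (1 - b v q.1 * q.2)) := by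
    refine continuous_finsetSum _ fun u _ => ?_
    refine ((hb' u).comp continuous_fst).mul (continuous_finsetProd _ fun v _ => ?_)
    exact continuous_const.sub (((hbc v).comp continuous_fst).mul continuous_snd)
  obtain ⟨C, hC⟩ := ((isCompact_closedBall t 1).prod (isCompact_Icc (a := (0:ℝ)) (b := 1))).exists_bound_of_continuousOn
    hcont.continuousOn
  refine (intervalIntegral.hasDerivAt_integral_of_dominated_loc_of_deriv_le
    (F := fun s x => (1 - ∏ u ∈ Q, (1 - b u s * x)) / x)
    (F' := fun s x => ∑ u ∈ Q, b' u s * ∏ v ∈ Q.erase u, (1 - b v s * x))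
    (bound := fun _ => C) (Metric.ball_mem_nhds t zero_lt_one) ?_ (Nf_int _ _) ?_ ?_ ?_ ?_).2
  · exact Filter.Eventually.of_forall fun s => (Nf_int _ _).aestronglyMeasurable_restrict_uIoc
  · apply Continuous.aestronglyMeasurable; fun_prop
  · refine Filter.Eventually.of_forall fun x hx s hs => ?_
    rw [Set.uIoc_of_le zero_le_one] at hx
    exact hC (s, x) ⟨Metric.ball_subset_closedBall hs, hx.1.le, hx.2⟩
  · exact intervalIntegrable_const
  · refine Filter.Eventually.of_forall fun x hx s hs => ?_
    rw [Set.uIoc_of_le zero_le_one] at hx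
    have hx0 : x ≠ 0 := hx.1.ne'
    have := ((HasDerivAt.fun_finsetProd (u := Q) (f := fun u s => 1 - b u s * x)
      (f' := fun u => - (b' u s * x)) (x := s) ?_).const_sub 1).div_const x
    · refine this.congr_deriv ?_
      rw [← Finset.sum_neg_distrib, Finset.sum_div]
      refine Finset.sum_congr rfl fun u hu => ?_
      rw [smul_eq_mul, mul_neg, neg_neg, ← mul_assoc, mul_div_assoc, div_self hx0, mul_one, mul_comm]
    · intro u hu
      simpa using ((hb u s).mul_const x).const_sub 1

/-- the comparison function -/
noncomputable def mm {α : Type*} (y : α → ℝ) (Q : Finset α) (Y t : ℝ) : ℝ :=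
  Y * t + Nf Q (fun u => Real.exp (-(Y - y u) * t))

lemma mm_mono {α : Type*} [DecidableEq α] (y : α → ℝ) (Q : Finset α) (Y Y' t : ℝ) (ht : 0 ≤ t)
    (hY : Y' ≤ Y) (hy : ∀ u ∈ Q, y u ≤ Y') : mm y Q Y' t ≤ mm y Q Y t := by
  have hd : ∀ s, HasDerivAt (fun Z => mm y Q Z t)
      (t * ∏ u ∈ Q, (1 - Real.exp (-(s - y u) * t))) s := by
    intro s
    have h1 := Nf_deriv Q (fun u Z => Real.exp (-(Z - y u) * t))
      (fun u Z => Real.exp (-(Z - y u) * t) * (-1 * t)) (by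
        intro u Z
        exact ((((hasDerivAt_id Z).sub_const (y u)).neg).mul_const t).exp) (by
        intro u; fun_prop) s
    have h2 := ((hasDerivAt_id s).mul_const t).add h1
    refine h2.congr_deriv ?_
    have h3 := Gf_sum Q (fun u => Real.exp (-(s - y u) * t))
    have : ∏ u ∈ Q, (1 - Real.exp (-(s - y u) * t)) = 1 - ∑ u ∈ Q, Real.exp (-(s - y u) * t) * Gf Q (fun u => Real.exp (-(s - y u) * t)) u := by
      linarith
    rw [this, mul_sub, Finset.mul_sum, one_mul, mul_one, sub_eq_add_neg, ← Finset.sum_neg_distrib]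
    congr 1
    refine Finset.sum_congr rfl fun u _ => by ring
  have : MonotoneOn (fun Z => mm y Q Z t) (Set.Ici Y') := by
    refine monotoneOn_of_deriv_nonneg (convex_Ici _)
      (fun s _ => (hd s).continuousAt.continuousWithinAt)
      (fun s _ => (hd s).differentiableAt.differentiableWithinAt) ?_
    intro s hs
    rw [interior_Ici] at hs
    rw [(hd s).deriv]
    refine mul_nonneg ht (Finset.prod_nonneg fun u hu => ?_)
    rw [sub_nonneg, Real.exp_le_one_iff]
    have := hy u hu
    have : Y' < s := hs
    nlinarith
  exact this Set.self_mem_Ici hY hY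

lemma mm_deriv {α : Type*} [DecidableEq α] (y : α → ℝ) (Q : Finset α) (Y t : ℝ)
    (hY : ∃ u ∈ Q, y u = Y) :
    HasDerivAt (fun s => mm y Q Y s)
      (∑ u ∈ Q, y u * (Real.exp (-(Y - y u) * t) * Gf Q (fun u => Real.exp (-(Y - y u) * t)) u)) t := by
  have h1 := Nf_deriv Q (fun u s => Real.exp (-(Y - y u) * s))
      (fun u s => Real.exp (-(Y - y u) * s) * (-(Y - y u) * 1)) (by
        intro u s
        exact ((hasDerivAt_id s).const_mul _).exp) (by
        intro u; fun_prop) t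
  have h2 := ((hasDerivAt_id t).const_mul Y).add h1
  refine h2.congr_deriv ?_
  have h3 := Gf_sum Q (fun u => Real.exp (-(Y - y u) * t))
  obtain ⟨u, hu, hyu⟩ := hY
  rw [Finset.prod_eq_zero hu (by simp [hyu]), sub_zero] at h3
  have h4 := congrArg (fun r => Y * r) h3
  simp only [Finset.mul_sum] at h4
  rw [← h4, ← Finset.sum_add_distrib]
  refine Finset.sum_congr rfl fun u _ => by ring

/-- expected value of `f` at the last surviving point -/
noncomputable def Ex {α ι : Type*} [DecidableEq α] [Fintype ι] (w : ι → ℝ) (S : ι → Finset α)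
    (f : α → ℝ) (R : Finset α) : ℝ :=
  if R.card ≤ 1 then ∑ u ∈ R, f u else
    (∑ c, if h : (R ∩ S c).Nonempty ∧ (R \ S c).Nonempty then w c * Ex w S f (R \ S c) else 0) /
    (∑ c, if (R ∩ S c).Nonempty ∧ (R \ S c).Nonempty then w c else 0)
termination_by R.card
decreasing_by
  apply Finset.card_lt_card
  obtain ⟨u, hu⟩ := h.1
  rw [Finset.mem_inter] at hu
  refine ⟨Finset.sdiff_subset, fun h' => ?_⟩
  have := h' hu.1
  rw [Finset.mem_sdiff] at this
  exact this.2 hu.2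

lemma sdiff_nohit {α : Type*} [DecidableEq α] {R S : Finset α} (h : ¬ (R ∩ S).Nonempty) :
    R \ S = R := by
  rw [Finset.not_nonempty_iff_eq_empty, ← Finset.disjoint_iff_inter_eq_empty] at h
  exact Finset.sdiff_eq_self_of_disjoint h

lemma sdiff_hit {α : Type*} [DecidableEq α] {R S : Finset α} (h : (R ∩ S).Nonempty) :
    (R \ S).card < R.card := by
  apply Finset.card_lt_card
  obtain ⟨u, hu⟩ := h
  rw [Finset.mem_inter] at hu
  refine ⟨Finset.sdiff_subset, fun h' => ?_⟩
  have := h' hu.1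
  rw [Finset.mem_sdiff] at this
  exact this.2 hu.2

lemma Ex_eq {α ι : Type*} [DecidableEq α] [Fintype ι] (w : ι → ℝ) (S : ι → Finset α)
    (f : α → ℝ) (R : Finset α) (hw : ∀ c, 0 ≤ w c) :
    ∑ c, w c * (if (R \ S c).Nonempty then Ex w S f R - Ex w S f (R \ S c) else 0) = 0 := by
  by_cases hR : R.card ≤ 1
  · refine Finset.sum_eq_zero fun c _ => ?_
    split_ifs with h
    · have : R \ S c = R :=
        Finset.eq_of_subset_of_card_le Finset.sdiff_subset (hR.trans (Finset.card_pos.2 h))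
      rw [this]; simp
    · simp
  · have hE : Ex w S f R = (∑ c, if (R ∩ S c).Nonempty ∧ (R \ S c).Nonempty then w c * Ex w S f (R \ S c) else 0) /
      (∑ c, if (R ∩ S c).Nonempty ∧ (R \ S c).Nonempty then w c else 0) := by
      rw [Ex, if_neg hR]; simp
    have h1 : ∑ c, w c * (if (R \ S c).Nonempty then Ex w S f R - Ex w S f (R \ S c) else 0)
      = Ex w S f R * (∑ c, if (R ∩ S c).Nonempty ∧ (R \ S c).Nonempty then w c else 0)
        - (∑ c, if (R ∩ S c).Nonempty ∧ (R \ S c).Nonempty then w c * Ex w S f (R \ S c) else 0) := by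
      rw [Finset.mul_sum, ← Finset.sum_sub_distrib]
      refine Finset.sum_congr rfl fun c _ => ?_
      by_cases h : (R ∩ S c).Nonempty
      · by_cases h' : (R \ S c).Nonempty
        · simp only [h, h', and_self, if_true]; ring
        · simp [h']
      · simp [h, sdiff_nohit h]
    rw [h1]
    by_cases h0 : (∑ c, if (R ∩ S c).Nonempty ∧ (R \ S c).Nonempty then w c else 0) = 0
    · rw [h0, mul_zero, zero_sub, neg_eq_zero]
      rw [Finset.sum_eq_zero_iff_of_nonneg (fun c _ => by split_ifs; exacts [hw c, le_rfl])] at h0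
      refine Finset.sum_eq_zero fun c hc => ?_
      have := h0 c hc
      split_ifs at this ⊢ with h
      · rw [this, zero_mul]
      · rfl
    · rw [hE, div_mul_cancel₀ _ h0, sub_self]

lemma Ex_le {α ι : Type*} [DecidableEq α] [Fintype ι] (w : ι → ℝ) (S : ι → Finset α)
    (f g : α → ℝ) (K : ℝ) (hK : 0 ≤ K) (hw : ∀ c, 0 ≤ w c) (R : Finset α)
    (hfg : ∀ u ∈ R, f u ≤ g u + K) :
    Ex w S f R ≤ Ex w S g R + K := by
  induction hn : R.card using Nat.strong_induction_on generalizing R with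
  | _ n ih =>
  by_cases hR : R.card ≤ 1
  · rw [Ex, Ex, if_pos hR, if_pos hR]
    rcases Nat.le_one_iff_eq_zero_or_eq_one.1 hR with h | h
    · rw [Finset.card_eq_zero] at h; simp [h, hK]
    · obtain ⟨u, rfl⟩ := Finset.card_eq_one.1 h
      simpa using hfg u (by simp)
  · rw [Ex, Ex, if_neg hR, if_neg hR]
    have hν : 0 ≤ (∑ c, if (R ∩ S c).Nonempty ∧ (R \ S c).Nonempty then w c else 0) :=
      Finset.sum_nonneg fun c _ => by split_ifs; exacts [hw c, le_rfl]
    rcases hν.eq_or_lt with h0 | h0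
    · rw [← h0]; simpa using hK
    · rw [div_le_iff₀ h0, add_mul, div_mul_cancel₀ _ h0.ne', Finset.mul_sum, ← Finset.sum_add_distrib]
      refine Finset.sum_le_sum fun c _ => ?_
      split_ifs with h
      · have := ih _ (hn ▸ sdiff_hit h.1) (R \ S c) (fun u hu => hfg u (Finset.mem_sdiff.1 hu).1) rfl
        nlinarith [hw c]
      · simp

lemma Ex_zero {α ι : Type*} [DecidableEq α] [Fintype ι] (w : ι → ℝ) (S : ι → Finset α)
     (R : Finset α) : Ex w S (fun _ => 0) R = 0 := by
  induction hn : R.card using Nat.strong_induction_on generalizing R with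
  | _ n ih =>
  rw [Ex]
  split_ifs with hR
  · simp
  · rw [Finset.sum_eq_zero, zero_div]
    intro c _
    split_ifs with h
    · rw [ih _ (hn ▸ sdiff_hit h.1) (R \ S c) rfl, mul_zero]
    · rfl

lemma Ex_empty {α ι : Type*} [DecidableEq α] [Fintype ι] (w : ι → ℝ) (S : ι → Finset α)
    (f : α → ℝ)  : Ex w S f ∅ = 0 := by
  rw [Ex]; simp

lemma Ex_nonneg {α ι : Type*} [DecidableEq α] [Fintype ι] (w : ι → ℝ) (S : ι → Finset α)
    (f : α → ℝ) (hw : ∀ c, 0 ≤ w c) (R : Finset α) (hf : ∀ u ∈ R, 0 ≤ f u) :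
    0 ≤ Ex w S f R := by
  have := Ex_le w S (fun _ => 0) f 0 le_rfl hw R (by simpa using hf)
  rw [Ex_zero] at this; linarith

lemma Ex_le_const {α ι : Type*} [DecidableEq α] [Fintype ι] (w : ι → ℝ) (S : ι → Finset α)
    (f : α → ℝ) (K : ℝ) (hK : 0 ≤ K) (hw : ∀ c, 0 ≤ w c) (R : Finset α) (hf : ∀ u ∈ R, f u ≤ K) :
    Ex w S f R ≤ K := by
  have := Ex_le w S f (fun _ => 0) K hK hw R (by simpa using hf)
  rw [Ex_zero] at this; linarith

/-- distance functional -/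
noncomputable def zz {α ι : Type*} [DecidableEq α] [Fintype ι] (w : ι → ℝ) (S : ι → Finset α)
    (u : α) : ℝ := ∑ c, if u ∈ S c then w c else 0

noncomputable def muJ {α ι : Type*} [DecidableEq α] [Fintype ι] (a b : ι → ℝ) (S : ι → Finset α)
    (Q : Finset α) : ℝ :=
  (∑ c, if (Q ∩ S c).Nonempty then a c else 0) + ∑ c, if (Q \ S c).Nonempty then b c else 0

/-- `a` : weights of the cuts not containing `p`; `b` : weights of the cuts containing `p`. -/
noncomputable def JJ {α ι : Type*} [DecidableEq α] [Fintype ι] (a b : ι → ℝ) (S : ι → Finset α)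
    (Q : Finset α) : ℝ :=
  (Ex (fun c => a c + b c) S (zz a S) Q +
    ∑ c, if h : (Q ∩ S c).Nonempty then a c * JJ a b S (Q \ S c) else 0) / muJ a b S Q
termination_by Q.card
decreasing_by
  apply Finset.card_lt_card
  obtain ⟨u, hu⟩ := h
  rw [Finset.mem_inter] at hu
  refine ⟨Finset.sdiff_subset, fun h' => ?_⟩
  have := h' hu.1
  rw [Finset.mem_sdiff] at this
  exact this.2 hu.2

lemma zz_nonneg {α ι : Type*} [DecidableEq α] [Fintype ι] (a : ι → ℝ) (S : ι → Finset α)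
    (ha : ∀ c, 0 ≤ a c) (u : α) : 0 ≤ zz a S u :=
  Finset.sum_nonneg fun c _ => by split_ifs; exacts [ha c, le_rfl]

lemma muJ_nonneg {α ι : Type*} [DecidableEq α] [Fintype ι] (a b : ι → ℝ) (S : ι → Finset α)
    (ha : ∀ c, 0 ≤ a c) (hb : ∀ c, 0 ≤ b c) (Q : Finset α) : 0 ≤ muJ a b S Q :=
  add_nonneg (Finset.sum_nonneg fun c _ => by split_ifs; exacts [ha c, le_rfl])
   (Finset.sum_nonneg fun c _ => by split_ifs; exacts [hb c, le_rfl])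

lemma zz_le_muJ {α ι : Type*} [DecidableEq α] [Fintype ι] (a b : ι → ℝ) (S : ι → Finset α)
    (ha : ∀ c, 0 ≤ a c) (hb : ∀ c, 0 ≤ b c) (Q : Finset α) (u : α) (hu : u ∈ Q) :
    zz a S u ≤ muJ a b S Q := by
  unfold muJ zz
  have : 0 ≤ ∑ c, if (Q \ S c).Nonempty then b c else 0 :=
    Finset.sum_nonneg fun c _ => by split_ifs; exacts [hb c, le_rfl]
  refine le_trans (Finset.sum_le_sum fun c _ => ?_) (le_add_of_nonneg_right this)
  by_cases h : u ∈ S c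
  · rw [if_pos h, if_pos ⟨u, Finset.mem_inter.2 ⟨hu, h⟩⟩]
  · rw [if_neg h]; split_ifs; exacts [ha c, le_rfl]

lemma Ex_zero_of_muJ {α ι : Type*} [DecidableEq α] [Fintype ι] (a b : ι → ℝ) (S : ι → Finset α)
    (ha : ∀ c, 0 ≤ a c) (hb : ∀ c, 0 ≤ b c) (Q : Finset α) (h : muJ a b S Q = 0) :
    Ex (fun c => a c + b c) S (zz a S) Q = 0 := by
  apply le_antisymm
  · exact Ex_le_const _ _ _ 0 le_rfl (fun c => add_nonneg (ha c) (hb c)) _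
      fun u hu => h ▸ zz_le_muJ a b S ha hb Q u hu
  · exact Ex_nonneg _ _ _ (fun c => add_nonneg (ha c) (hb c)) _ fun u _ => zz_nonneg a S ha u

lemma JJ_nonneg {α ι : Type*} [DecidableEq α] [Fintype ι] (a b : ι → ℝ) (S : ι → Finset α)
    (ha : ∀ c, 0 ≤ a c) (hb : ∀ c, 0 ≤ b c) (Q : Finset α) : 0 ≤ JJ a b S Q := by
  induction hn : Q.card using Nat.strong_induction_on generalizing Q with
  | _ n ih =>
  rw [JJ]
  refine div_nonneg (add_nonneg ?_ (Finset.sum_nonneg fun c _ => ?_)) (muJ_nonneg a b S ha hb Q)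
  · exact Ex_nonneg _ _ _ (fun c => add_nonneg (ha c) (hb c)) _ fun u _ => zz_nonneg a S ha u
  · split_ifs with h
    · exact mul_nonneg (ha c) (ih _ (hn ▸ sdiff_hit h) _ rfl)
    · rfl

lemma JJ_empty {α ι : Type*} [DecidableEq α] [Fintype ι] (a b : ι → ℝ) (S : ι → Finset α) :
   JJ a b S ∅ = 0 := by
  rw [JJ]; simp [Ex_empty]

lemma JJ_eq {α ι : Type*} [DecidableEq α] [Fintype ι] (a b : ι → ℝ) (S : ι → Finset α)
    (ha : ∀ c, 0 ≤ a c) (hb : ∀ c, 0 ≤ b c) (Q : Finset α) :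
    ∑ c, a c * (JJ a b S Q - JJ a b S (Q \ S c))
      + (∑ c, if (Q \ S c).Nonempty then b c else 0) * JJ a b S Q
      = Ex (fun c => a c + b c) S (zz a S) Q := by
  have h1 : ∑ c, a c * (JJ a b S Q - JJ a b S (Q \ S c))
      = JJ a b S Q * (∑ c, if (Q ∩ S c).Nonempty then a c else 0)
        - ∑ c, if (Q ∩ S c).Nonempty then a c * JJ a b S (Q \ S c) else 0 := by
    rw [Finset.mul_sum, ← Finset.sum_sub_distrib]
    refine Finset.sum_congr rfl fun c _ => ?_
    by_cases h : (Q ∩ S c).Nonempty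
    · simp only [h, if_true]; ring
    · simp [h, sdiff_nohit h]
  have h2 : JJ a b S Q * muJ a b S Q = Ex (fun c => a c + b c) S (zz a S) Q
      + ∑ c, if (Q ∩ S c).Nonempty then a c * JJ a b S (Q \ S c) else 0 := by
    by_cases h0 : muJ a b S Q = 0
    · rw [Ex_zero_of_muJ a b S ha hb Q h0, h0, mul_zero, zero_add]
      symm
      refine Finset.sum_eq_zero fun c _ => ?_
      split_ifs with h
      · have : a c ≤ muJ a b S Q := by
          obtain ⟨u, hu⟩ := h
          rw [Finset.mem_inter] at hu
          refine le_trans ?_ (zz_le_muJ a b S ha hb Q u hu.1)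
          have := Finset.single_le_sum (f := fun c => if u ∈ S c then a c else 0)
            (fun c _ => by split_ifs; exacts [ha c, le_rfl]) (Finset.mem_univ c)
          simpa [hu.2, zz] using this
        rw [le_antisymm (this.trans h0.le) (ha c), zero_mul]
      · rfl
    · rw [JJ, div_mul_cancel₀ _ h0]
      simp
  rw [h1]
  unfold muJ at h2
  linarith

/-- the case `p ∈ R`. -/
lemma Ex_le_JJ {α ι : Type*} [DecidableEq α] [Fintype ι] (a b : ι → ℝ) (S : ι → Finset α)
    (ha : ∀ c, 0 ≤ a c) (hb : ∀ c, 0 ≤ b c) (p : α)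
    (hap : ∀ c, p ∈ S c → a c = 0) (hbp : ∀ c, p ∉ S c → b c = 0)
    (R : Finset α) (hp : p ∈ R) :
    Ex (fun c => a c + b c) S (zz a S) R ≤ ∑ c, b c * JJ a b S (R \ S c) := by
  induction hn : R.card using Nat.strong_induction_on generalizing R with
  | _ n ih =>
  have hw : ∀ c, 0 ≤ a c + b c := fun c => add_nonneg (ha c) (hb c)
  have hJ := JJ_nonneg a b S ha hb
  have hB0 : 0 ≤ ∑ c, b c * JJ a b S (R \ S c) := Finset.sum_nonneg fun c _ => mul_nonneg (hb c) (hJ _)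
  set B := ∑ c, b c * JJ a b S (R \ S c) with hB
  set E := Ex (fun c => a c + b c) S (zz a S) with hE
  -- total separating rate
  set ν := (∑ c, if (R ∩ S c).Nonempty then a c else 0) + ∑ c, if (R \ S c).Nonempty then b c else 0 with hν
  have hν0 : 0 ≤ ν := muJ_nonneg a b S ha hb R
  -- if ν = 0
  rcases hν0.eq_or_lt with h0 | h0
  · have : E R = 0 := Ex_zero_of_muJ a b S ha hb R h0.symm
    rw [this]; exact hB0
  have hEq := Ex_eq (fun c => a c + b c) S (zz a S) R hw
  rw [← hE] at hEq
  -- split the equation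
  have h1 : ν * E R = ∑ c, (if (R ∩ S c).Nonempty then a c * E (R \ S c) else 0)
      + ∑ c, (if (R \ S c).Nonempty then b c * E (R \ S c) else 0) := by
    rw [hν, add_mul, Finset.sum_mul, Finset.sum_mul, ← Finset.sum_add_distrib, ← Finset.sum_add_distrib,
      ← sub_eq_zero, ← Finset.sum_sub_distrib]
    refine Eq.trans ?_ hEq
    refine Finset.sum_congr rfl fun c _ => ?_
    by_cases hc : p ∈ S c
    · rw [hap c hc]
      split_ifs <;> ring
    · have hne : (R \ S c).Nonempty := ⟨p, Finset.mem_sdiff.2 ⟨hp, hc⟩⟩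
      rw [hbp c hc, if_pos hne]
      by_cases h : (R ∩ S c).Nonempty
      · simp only [h, hne, if_true]; ring
      · simp [h, sdiff_nohit h]
  have h2 : ∑ c, (if (R ∩ S c).Nonempty then a c * E (R \ S c) else 0)
      ≤ ∑ c, (if (R ∩ S c).Nonempty then a c * ∑ c', b c' * JJ a b S ((R \ S c) \ S c') else 0) := by
    refine Finset.sum_le_sum fun c _ => ?_
    split_ifs with h
    · by_cases hc : p ∈ S c
      · simp [hap c hc]
      · exact mul_le_mul_of_nonneg_left
          (ih _ (hn ▸ sdiff_hit h) (R \ S c) (Finset.mem_sdiff.2 ⟨hp, hc⟩) rfl) (ha c)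
    · rfl
  have h3 : ∀ c', (∑ c, if (R ∩ S c).Nonempty then a c * JJ a b S ((R \ S c') \ S c) else 0)
      + E (R \ S c') ≤ ν * JJ a b S (R \ S c') := by
    intro c'
    have hj := JJ_eq a b S ha hb (R \ S c')
    set Q := R \ S c' with hQ
    rw [← hE] at hj
    rw [← hj, hν, add_mul]
    have e1 : ∑ c, a c * (JJ a b S Q - JJ a b S (Q \ S c))
        = (∑ c, if (R ∩ S c).Nonempty then a c else 0) * JJ a b S Q
         - ∑ c, if (R ∩ S c).Nonempty then a c * JJ a b S (Q \ S c) else 0 := by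
      rw [Finset.sum_mul, ← Finset.sum_sub_distrib]
      refine Finset.sum_congr rfl fun c _ => ?_
      by_cases h : (R ∩ S c).Nonempty
      · simp only [h, if_true]; ring
      · have h' : ¬ (Q ∩ S c).Nonempty := by
          rintro ⟨u, hu⟩
          refine h ⟨u, ?_⟩
          rw [Finset.mem_inter] at hu ⊢
          exact ⟨(Finset.mem_sdiff.1 hu.1).1, hu.2⟩
        simp [h, sdiff_nohit h']
    have e2 : (∑ c, if (Q \ S c).Nonempty then b c else 0) ≤ ∑ c, if (R \ S c).Nonempty then b c else 0 := by
      refine Finset.sum_le_sum fun c _ => ?_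
      by_cases h : (Q \ S c).Nonempty
      · rw [if_pos h, if_pos (h.mono (Finset.sdiff_subset_sdiff Finset.sdiff_subset le_rfl))]
      · rw [if_neg h]; split_ifs; exacts [hb c, le_rfl]
    have e3 := mul_le_mul_of_nonneg_right e2 (hJ Q)
    linarith
  have h4 : ∑ c, (if (R ∩ S c).Nonempty then a c * ∑ c', b c' * JJ a b S ((R \ S c) \ S c') else 0)
      = ∑ c', b c' * (∑ c, if (R ∩ S c).Nonempty then a c * JJ a b S ((R \ S c') \ S c) else 0) := by
    have e1 : ∀ c, (if (R ∩ S c).Nonempty then a c * ∑ c', b c' * JJ a b S ((R \ S c) \ S c') else 0)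
        = ∑ c', b c' * (if (R ∩ S c).Nonempty then a c * JJ a b S ((R \ S c') \ S c) else 0) := by
      intro c
      split_ifs
      · rw [Finset.mul_sum]
        refine Finset.sum_congr rfl fun c' _ => ?_
        rw [sdiff_right_comm]; ring
      · simp
    rw [Finset.sum_congr rfl (fun c _ => e1 c), Finset.sum_comm]
    simp only [Finset.mul_sum]
  have h5 : ∑ c, (if (R \ S c).Nonempty then b c * E (R \ S c) else 0) ≤ ∑ c', b c' * E (R \ S c') := by
    refine Finset.sum_le_sum fun c _ => ?_
    split_ifs with h
    · rfl
    · rw [Finset.not_nonempty_iff_eq_empty.1 h, hE, Ex_empty, mul_zero]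
  have h6 : ν * E R ≤ ν * B := by
    rw [h1]
    refine (add_le_add h2 h5).trans ?_
    rw [h4, hB, ← Finset.sum_add_distrib, Finset.mul_sum]
    refine Finset.sum_le_sum fun c' _ => ?_
    have := mul_le_mul_of_nonneg_left (h3 c') (hb c')
    linarith
  exact le_of_mul_le_mul_left h6 h0

lemma exp_bd {Y yu t : ℝ} (ht : 0 ≤ t) (h : yu ≤ Y) : Real.exp (-(Y - yu) * t) ≤ 1 := by
  rw [Real.exp_le_one_iff]; nlinarith

lemma mm_ge {α : Type*} [DecidableEq α] (y : α → ℝ) (Q : Finset α) (Y t : ℝ) (ht : 0 ≤ t)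
    (hy : ∀ u ∈ Q, y u ≤ Y) : Y * t ≤ mm y Q Y t := by
  have := Nf_nonneg Q (fun u => Real.exp (-(Y - y u) * t)) (fun u _ => (Real.exp_pos _).le)
    (fun u hu => exp_bd ht (hy u hu))
  unfold mm; linarith

/-- comparison principle -/
lemma comparison (δ δ' : ℝ → ℝ) (μ K : ℝ) (hμ : 0 < μ) (hd : ∀ t, 0 ≤ t → HasDerivAt δ (δ' t) t)
    (h : ∀ t, 0 ≤ t → μ * δ t ≤ δ' t) (hK : ∀ t, 0 ≤ t → δ t ≤ K) (t : ℝ) (ht : 0 ≤ t) : δ t ≤ 0 := by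
  have hg : ∀ s, 0 ≤ s → HasDerivAt (fun s => Real.exp (-μ * s) * δ s)
      (Real.exp (-μ * s) * (-μ * 1) * δ s + Real.exp (-μ * s) * δ' s) s := fun s hs =>
    (((hasDerivAt_id s).const_mul (-μ)).exp).mul (hd s hs)
  have hm : MonotoneOn (fun s => Real.exp (-μ * s) * δ s) (Set.Ici 0) := by
    refine monotoneOn_of_deriv_nonneg (convex_Ici _)
      (fun s hs => (hg s hs).continuousAt.continuousWithinAt)
      (fun s hs => (hg s (interior_subset hs)).differentiableAt.differentiableWithinAt) ?_
    intro s hs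
    have hs' : 0 ≤ s := interior_subset hs
    rw [(hg s hs').deriv]
    have := h s hs'
    have := (Real.exp_pos (-μ * s)).le
    nlinarith
  have hlim : Filter.Tendsto (fun s => Real.exp (-μ * s) * K) Filter.atTop (nhds 0) := by
    have : Filter.Tendsto (fun s => Real.exp (-μ * s)) Filter.atTop (nhds 0) := by
      refine Real.tendsto_exp_atBot.comp ?_
      exact Filter.tendsto_id.const_mul_atTop_of_neg (by linarith)
    simpa using this.mul_const K
  have : Real.exp (-μ * t) * δ t ≤ 0 := by
    refine ge_of_tendsto hlim ?_
    filter_upwards [Filter.eventually_ge_atTop t] with s hs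
    have hs0 : 0 ≤ s := ht.trans hs
    exact (hm ht hs0 hs).trans (mul_le_mul_of_nonneg_left (hK s hs0) (Real.exp_pos _).le)
  by_contra hc
  push Not at hc
  have := mul_pos (Real.exp_pos (-μ * t)) hc
  linarith

lemma JJ_le_mm {α ι : Type*} [DecidableEq α] [Fintype ι] (a b : ι → ℝ) (S : ι → Finset α)
    (ha : ∀ c, 0 ≤ a c) (hb : ∀ c, 0 ≤ b c) (Q : Finset α) (Y : ℝ)
    (hQ : Q.Nonempty) (hY : ∀ u ∈ Q, zz a S u ≤ Y)
    (t : ℝ) (ht : 0 ≤ t) :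
    t * Ex (fun c => a c + b c) S (zz a S) Q + JJ a b S Q ≤ mm (zz a S) Q Y t := by
  induction hn : Q.card using Nat.strong_induction_on generalizing Q Y t with
  | _ n ih =>
  have hw : ∀ c, 0 ≤ a c + b c := fun c => add_nonneg (ha c) (hb c)
  -- reduce to the maximum
  obtain ⟨u0, hu0, hmax⟩ := Q.exists_max_image (zz a S) hQ
  refine le_trans ?_ (mm_mono (zz a S) Q Y (zz a S u0) t ht (hY u0 hu0) hmax)
  clear hY
  set Z := zz a S u0 with hZ
  have hZ0 : 0 ≤ Z := zz_nonneg a S ha u0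
  set E := Ex (fun c => a c + b c) S (zz a S) with hE
  have hEQ : ∀ Q' ⊆ Q, E Q' ≤ Z := fun Q' hQ' =>
    Ex_le_const _ _ _ Z hZ0 hw _ fun u hu => hmax u (hQ' hu)
  rcases (muJ_nonneg a b S ha hb Q).eq_or_lt with h0 | h0
  · have h1 : E Q = 0 := Ex_zero_of_muJ a b S ha hb Q h0.symm
    have h2 : JJ a b S Q = 0 := by rw [JJ, ← h0, div_zero]
    rw [h1, h2]
    have := mm_ge (zz a S) Q Z t ht hmax
    have := mul_nonneg hZ0 ht
    linarith
  -- comparison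
  have key : ∀ s, 0 ≤ s → muJ a b S Q * ((s * E Q + JJ a b S Q) - mm (zz a S) Q Z s) ≤
      E Q - ∑ u ∈ Q, zz a S u * (Real.exp (-(Z - zz a S u) * s) *
        Gf Q (fun u => Real.exp (-(Z - zz a S u) * s)) u) := by
    intro s hs
    set δ := (s * E Q + JJ a b S Q) - mm (zz a S) Q Z s with hδ
    have hmge := mm_ge (zz a S) Q Z s hs hmax
    -- the sum of the two equations
    have e1 := JJ_eq a b S ha hb Q
    have e2 := Ex_eq (fun c => a c + b c) S (zz a S) Q hw
    rw [← hE] at e1 e2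
    have e3 : E Q = ∑ c, (a c * ((JJ a b S Q - JJ a b S (Q \ S c)) +
          s * (if (Q \ S c).Nonempty then E Q - E (Q \ S c) else 0))
        + (if (Q \ S c).Nonempty then b c * (JJ a b S Q + s * (E Q - E (Q \ S c))) else 0)) := by
      have e2' := congrArg (fun r => s * r) e2
      simp only [mul_zero, Finset.mul_sum] at e2'
      have e5 := congrArg₂ (fun r r' => r + r') e1 e2'
      simp only [add_zero] at e5
      refine e5.symm.trans ?_
      rw [Finset.sum_mul, ← Finset.sum_add_distrib, ← Finset.sum_add_distrib]
      refine Finset.sum_congr rfl fun c _ => ?_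
      split_ifs <;> ring
    -- the derivative of mm as a sum over cuts
    have e4 : ∑ u ∈ Q, zz a S u * (Real.exp (-(Z - zz a S u) * s) *
        Gf Q (fun u => Real.exp (-(Z - zz a S u) * s)) u)
        = ∑ c, a c * ∑ u ∈ Q ∩ S c, (Real.exp (-(Z - zz a S u) * s) *
        Gf Q (fun u => Real.exp (-(Z - zz a S u) * s)) u) := by
      have : ∀ G : α → ℝ, ∑ u ∈ Q, zz a S u * G u = ∑ c, a c * ∑ u ∈ Q ∩ S c, G u := by
        intro G
        simp only [zz, Finset.sum_mul, Finset.mul_sum]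
        rw [Finset.sum_comm]
        refine Finset.sum_congr rfl fun c _ => ?_
        rw [← Finset.filter_mem_eq_inter, Finset.sum_filter]
        refine Finset.sum_congr rfl fun u _ => ?_
        split_ifs <;> simp
      exact this (fun u => Real.exp (-(Z - zz a S u) * s) *
        Gf Q (fun u => Real.exp (-(Z - zz a S u) * s)) u)
    rw [e4, e3, le_sub_iff_add_le]
    unfold muJ
    rw [← Finset.sum_add_distrib, Finset.sum_mul, ← Finset.sum_add_distrib]
    refine Finset.sum_le_sum fun c _ => ?_
    have hcut := Nf_cut Q (S c) (fun u => Real.exp (-(Z - zz a S u) * s))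
      (fun u _ => (Real.exp_pos _).le) (fun u hu => exp_bd hs (hmax u hu))
    have hmmcut : ∑ u ∈ Q ∩ S c, (Real.exp (-(Z - zz a S u) * s) *
        Gf Q (fun u => Real.exp (-(Z - zz a S u) * s)) u) ≤
        mm (zz a S) Q Z s - mm (zz a S) (Q \ S c) Z s := by
      unfold mm; linarith
    have pa : (if (Q ∩ S c).Nonempty then 1 else 0) * δ + ∑ u ∈ Q ∩ S c, (Real.exp (-(Z - zz a S u) * s) *
        Gf Q (fun u => Real.exp (-(Z - zz a S u) * s)) u) ≤ ((JJ a b S Q - JJ a b S (Q \ S c)) +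
          s * (if (Q \ S c).Nonempty then E Q - E (Q \ S c) else 0)) := by
      by_cases hh : (Q ∩ S c).Nonempty
      · rw [if_pos hh]
        by_cases hne : (Q \ S c).Nonempty
        · rw [if_pos hne]
          have := ih _ (hn ▸ sdiff_hit hh) (Q \ S c) Z hne
            (fun u hu => hmax u (Finset.mem_sdiff.1 hu).1) s hs rfl
          linarith
        · rw [if_neg hne]
          rw [Finset.not_nonempty_iff_eq_empty] at hne
          have h1 : mm (zz a S) (Q \ S c) Z s = Z * s := by rw [hne]; simp [mm, Nf]
          rw [h1] at hmmcut
          rw [hne, JJ_empty]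
          have := mul_le_mul_of_nonneg_left (hEQ Q subset_rfl) hs
          linarith
      · rw [if_neg hh, sdiff_nohit hh, Finset.not_nonempty_iff_eq_empty.1 hh]
        simp
    have pb : δ ≤ JJ a b S Q + s * (E Q - E (Q \ S c)) := by
      have := mul_le_mul_of_nonneg_left (hEQ (Q \ S c) Finset.sdiff_subset) hs
      linarith
    have pa' := mul_le_mul_of_nonneg_left pa (ha c)
    have pb' := mul_le_mul_of_nonneg_left pb (hb c)
    split_ifs at pa' ⊢ <;> linarith
  have := comparison (fun s => (s * E Q + JJ a b S Q) - mm (zz a S) Q Z s)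
    (fun s => E Q - ∑ u ∈ Q, zz a S u * (Real.exp (-(Z - zz a S u) * s) *
        Gf Q (fun u => Real.exp (-(Z - zz a S u) * s)) u))
    (muJ a b S Q) (JJ a b S Q) h0 ?_ key ?_ t ht
  · simpa using this
  · intro s hs
    refine HasDerivAt.sub ?_ (mm_deriv (zz a S) Q Z s ⟨u0, hu0, rfl⟩)
    simpa using ((hasDerivAt_id s).mul_const (E Q)).add_const (JJ a b S Q)
  · intro s hs
    have := mm_ge (zz a S) Q Z s hs hmax
    have := mul_le_mul_of_nonneg_left (hEQ Q subset_rfl) hs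
    linarith

lemma JJ_le_harm {α ι : Type*} [DecidableEq α] [Fintype ι] (a b : ι → ℝ) (S : ι → Finset α)
    (ha : ∀ c, 0 ≤ a c) (hb : ∀ c, 0 ≤ b c) (Q : Finset α) :
    JJ a b S Q ≤ ∑ j ∈ Finset.range Q.card, 1 / ((j : ℝ) + 1) := by
  rcases Q.eq_empty_or_nonempty with rfl | hQ
  · simp [JJ_empty]
  · obtain ⟨u0, hu0, hmax⟩ := Q.exists_max_image (zz a S) hQ
    have := JJ_le_mm a b S ha hb Q _ hQ hmax 0 le_rfl
    unfold mm at this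
    rw [Nf_one Q _ (by simp)] at this
    simpa using this

theorem Ex_bound {α ι : Type*} [DecidableEq α] [Fintype ι] (w : ι → ℝ) (S : ι → Finset α)
    (hw : ∀ c, 0 ≤ w c) (R : Finset α) (p : α) (hp : p ∈ R) :
    Ex w S (zz w S) R ≤ (1 + ∑ j ∈ Finset.range (R.card - 1), 1 / ((j : ℝ) + 1)) * zz w S p := by
  set a : ι → ℝ := fun c => if p ∈ S c then 0 else w c with ha
  set b : ι → ℝ := fun c => if p ∈ S c then w c else 0 with hb
  have hab : (fun c => a c + b c) = w := by
    ext c; simp only [ha, hb]; split_ifs <;> simp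
  have ha0 : ∀ c, 0 ≤ a c := fun c => by simp only [ha]; split_ifs; exacts [le_rfl, hw c]
  have hb0 : ∀ c, 0 ≤ b c := fun c => by simp only [hb]; split_ifs; exacts [hw c, le_rfl]
  have hbz : ∑ c, b c = zz w S p := rfl
  have h1 : Ex w S (zz w S) R ≤ Ex w S (zz a S) R + zz w S p := by
    refine Ex_le w S _ _ _ (zz_nonneg w S hw p) hw R fun u _ => ?_
    rw [← hbz, zz, zz, ← Finset.sum_add_distrib]
    refine Finset.sum_le_sum fun c _ => ?_
    have := hw c
    simp only [ha, hb]
    split_ifs <;> linarith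
  have h2 := Ex_le_JJ a b S ha0 hb0 p (fun c hc => by simp [ha, hc]) (fun c hc => by simp [hb, hc]) R hp
  rw [hab] at h2
  have h3 : ∑ c, b c * JJ a b S (R \ S c) ≤
      ∑ c, b c * ∑ j ∈ Finset.range (R.card - 1), 1 / ((j : ℝ) + 1) := by
    refine Finset.sum_le_sum fun c _ => ?_
    by_cases hc : p ∈ S c
    · refine mul_le_mul_of_nonneg_left ((JJ_le_harm a b S ha0 hb0 _).trans ?_) (hb0 c)
      refine Finset.sum_le_sum_of_subset_of_nonneg ?_ fun j _ _ => by positivity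
      rw [Finset.range_subset_range]
      have := sdiff_hit (R := R) (S := S c) ⟨p, Finset.mem_inter.2 ⟨hp, hc⟩⟩
      omega
    · simp [hb, hc]
  rw [← Finset.sum_mul, hbz] at h3
  linarith

lemma exists_weights (V : Finset ℝ) : ∃ w : ℝ → ℝ, (∀ v, 0 ≤ w v) ∧
    ∀ a ∈ V, ∀ b ∈ V, a ≤ b → (∑ v ∈ V, if a ≤ v ∧ v < b then w v else 0) = b - a := by
  induction V using Finset.induction_on_max with
  | empty => exact ⟨fun _ => 0, by simp, by simp⟩
  | insert m V hm ih =>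
    obtain ⟨w, hw, h⟩ := ih
    have hmV : m ∉ V := fun h' => lt_irrefl _ (hm m h')
    rcases V.eq_empty_or_nonempty with rfl | hV
    · refine ⟨fun _ => 0, by simp, ?_⟩
      intro a ha b hb _
      simp at ha hb
      simp [ha, hb]
    · set T := V.max' hV with hT
      have hTV : T ∈ V := V.max'_mem hV
      have hTm : T < m := hm T hTV
      refine ⟨Function.update w T (m - T), fun v => ?_, ?_⟩
      · by_cases hv : v = T
        · rw [hv, Function.update_self]; linarith
        · rw [Function.update_of_ne hv]; exact hw v
      -- sums up to an element of V
      have hsum : ∀ a ∈ V, ∀ b ∈ V, a ≤ b →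
          (∑ v ∈ V, if a ≤ v ∧ v < b then Function.update w T (m - T) v else 0) = b - a := by
        intro a ha b hb hab
        rw [← h a ha b hb hab]
        refine Finset.sum_congr rfl fun v _ => ?_
        split_ifs with hc
        · rw [Function.update_of_ne]
          rintro rfl
          exact absurd (V.le_max' b hb) (not_le.2 hc.2)
        · rfl
      intro a ha b hb hab
      rw [Finset.sum_insert hmV]
      rcases Finset.mem_insert.1 ha with rfl | ha'
      · rcases Finset.mem_insert.1 hb with rfl | hb'
        · rw [if_neg (by simp), zero_add, sub_self]
          refine Finset.sum_eq_zero fun v hv => if_neg fun hc => absurd hc.2 (not_lt.2 hc.1)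
        · exact absurd hab (not_le.2 (hm b hb'))
      · rcases Finset.mem_insert.1 hb with rfl | hb'
        · rw [if_neg (by simp), zero_add]
          have h1 := hsum a ha' T hTV (V.le_max' a ha')
          have h2 : ∀ v ∈ V, (if a ≤ v ∧ v < b then Function.update w T (b - T) v else 0)
              = (if a ≤ v ∧ v < T then Function.update w T (b - T) v else 0)
                + (if v = T then b - T else 0) := by
            intro v hv
            have hvb := hm v hv
            by_cases hvT : v = T
            · have : a ≤ T := V.le_max' a ha'
              simp [hvT, this, hTm]
            · have : v < T := lt_of_le_of_ne (V.le_max' v hv) hvT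
              simp [hvT, this, hvb]
          rw [Finset.sum_congr rfl h2, Finset.sum_add_distrib, h1, Finset.sum_ite_eq' V T, if_pos hTV]
          ring
        · rw [if_neg (fun hc => absurd hc.2 (not_lt.2 (hm b hb').le)), zero_add]
          exact hsum a ha' b hb' hab

/-- centers separated from `x` by the cut `c`. -/
noncomputable def cutSet {d : ℕ} (V : Finset ℝ) (𝒰 : Finset (Fin d → ℝ)) (x : Fin d → ℝ)
    (c : Fin d × V) : Finset (Fin d → ℝ) :=
  open Classical in 𝒰.filter (fun u => ¬ (u c.1 ≤ c.2 ↔ x c.1 ≤ c.2))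

lemma zz_cutSet {d : ℕ} (V : Finset ℝ) (w : ℝ → ℝ)
    (hw : ∀ a ∈ V, ∀ b ∈ V, a ≤ b → (∑ v ∈ V, if a ≤ v ∧ v < b then w v else 0) = b - a)
    (𝒰 : Finset (Fin d → ℝ)) (x u : Fin d → ℝ) (hx : ∀ i, x i ∈ V) (hu : ∀ i, u i ∈ V) (huU : u ∈ 𝒰) :
    zz (fun c : Fin d × V => w c.2) (cutSet V 𝒰 x) u = ∑ i, |x i - u i| := by
  classical
  unfold zz
  rw [Fintype.sum_prod_type]
  refine Finset.sum_congr rfl fun i _ => ?_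
  have h1 : ∀ v : V, (if u ∈ cutSet V 𝒰 x (i, v) then w v else 0)
      = if ¬ (u i ≤ (v:ℝ) ↔ x i ≤ (v:ℝ)) then w v else 0 := by
    intro v
    simp [cutSet, huU]
  rw [Finset.sum_congr rfl (fun v _ => h1 v),
    Finset.sum_coe_sort V (fun v => if ¬ (u i ≤ v ↔ x i ≤ v) then w v else 0)]
  rcases le_total (x i) (u i) with h | h
  · rw [abs_of_nonpos (by linarith), neg_sub, ← hw _ (hx i) _ (hu i) h]
    refine Finset.sum_congr rfl fun v _ => if_congr ?_ rfl rfl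
    constructor
    · intro hc
      by_cases h1 : x i ≤ v
      · refine ⟨h1, not_le.1 fun h2 => hc ⟨fun _ => h1, fun _ => h2⟩⟩
      · exact absurd ⟨fun h2 => absurd (h.trans h2) h1, fun h2 => absurd h2 h1⟩ hc
    · rintro ⟨h1, h2⟩ hc
      exact absurd (hc.2 h1) (not_le.2 h2)
  · rw [abs_of_nonneg (by linarith), ← hw _ (hu i) _ (hx i) h]
    refine Finset.sum_congr rfl fun v _ => if_congr ?_ rfl rfl
    constructor
    · intro hc
      by_cases h1 : u i ≤ v
      · refine ⟨h1, not_le.1 fun h2 => hc ⟨fun _ => h2, fun _ => h1⟩⟩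
      · exact absurd ⟨fun h2 => absurd h2 h1, fun h2 => absurd (h.trans h2) h1⟩ hc
    · rintro ⟨h1, h2⟩ hc
      exact absurd (hc.1 h1) (not_le.2 h2)

lemma tree_exists {d : ℕ} (V : Finset ℝ) (w : ℝ → ℝ) (hw0 : ∀ v, 0 ≤ w v)
    (hw : ∀ a ∈ V, ∀ b ∈ V, a ≤ b → (∑ v ∈ V, if a ≤ v ∧ v < b then w v else 0) = b - a)
    (𝒰 : Finset (Fin d → ℝ)) (hU : ∀ u ∈ 𝒰, ∀ i, u i ∈ V)
    (R : Finset (Fin d → ℝ)) (hR : R ⊆ 𝒰) (hne : R.Nonempty)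
    (X : Finset (Fin d → ℝ)) (hX : ∀ x ∈ X, ∀ i, x i ∈ V) :
    ∃ T : ThresholdTree d, T.Separates R ∧
      ∃ πT : (Fin d → ℝ) → (Fin d → ℝ),
        (∀ x ∈ X, πT x ∈ R) ∧
        (∀ x ∈ X, ∀ B ∈ T.leaves, x ∈ B → πT x ∈ B) ∧
        cost1 X πT ≤ ∑ x ∈ X, Ex (fun c : Fin d × V => w c.2) (cutSet V 𝒰 x)
          (zz (fun c : Fin d × V => w c.2) (cutSet V 𝒰 x)) R := by
  classical
  induction hn : R.card using Nat.strong_induction_on generalizing R X with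
  | _ n ih =>
  by_cases h1 : R.card ≤ 1
  · obtain ⟨u, rfl⟩ := Finset.card_eq_one.1 (le_antisymm h1 (Finset.card_pos.2 hne))
    refine ⟨.leaf, ?_, fun _ => u, by simp, ?_, ?_⟩
    · intro B hB
      simp [ThresholdTree.leaves] at hB
      exact ⟨u, by simp [hB], by rintro v ⟨hv, _⟩; simpa using hv⟩
    · intro x _ B hB _
      simp [ThresholdTree.leaves] at hB
      simp [hB]
    · unfold cost1
      refine Finset.sum_le_sum fun x hx => ?_
      have huU : u ∈ 𝒰 := hR (by simp)
      rw [Ex, if_pos (by simp), Finset.sum_singleton, zz_cutSet V w hw 𝒰 x u (hX x hx) (hU u huU) huU]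
  · push Not at h1
    set wt : Fin d × V → ℝ := fun c => w c.2 with hwt
    have hwt0 : ∀ c, 0 ≤ wt c := fun c => hw0 _
    set F : (Fin d → ℝ) → Finset (Fin d → ℝ) → ℝ := fun x => Ex wt (cutSet V 𝒰 x)
          (zz wt (cutSet V 𝒰 x)) with hF
    let L : Fin d × V → Finset (Fin d → ℝ) := fun c => R.filter fun u => u c.1 ≤ c.2
    let G : Fin d × V → Finset (Fin d → ℝ) := fun c => R.filter fun u => ¬ u c.1 ≤ c.2
    have hsd : ∀ x c, R \ cutSet V 𝒰 x c = if x c.1 ≤ c.2 then L c else G c := by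
      intro x c
      ext u
      have : u ∈ R → u ∈ 𝒰 := fun h => hR h
      by_cases hx : x c.1 ≤ (c.2 : ℝ) <;> simp [L, G, cutSet, hx, Finset.mem_filter] <;> tauto
    have hLG : ∀ c x, (L c).Nonempty ∧ (G c).Nonempty ∨
       (if (R \ cutSet V 𝒰 x c).Nonempty then F x R - F x (R \ cutSet V 𝒰 x c) else 0) = 0 := by
      intro c x
      by_cases hL : (L c).Nonempty
      · by_cases hG : (G c).Nonempty
        · exact Or.inl ⟨hL, hG⟩
        · right
          rw [hsd x c]
          have hGe : G c = ∅ := Finset.not_nonempty_iff_eq_empty.1 hG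
          have hLR : L c = R := by
            refine Finset.filter_true_of_mem fun u hu => ?_
            by_contra hc
            exact hG ⟨u, Finset.mem_filter.2 ⟨hu, hc⟩⟩
          split_ifs with h2 <;> simp_all
      · right
        rw [hsd x c]
        have hLe : L c = ∅ := Finset.not_nonempty_iff_eq_empty.1 hL
        have hGR : G c = R := by
          refine Finset.filter_true_of_mem fun u hu => ?_
          intro hc
          exact hL ⟨u, Finset.mem_filter.2 ⟨hu, hc⟩⟩
        split_ifs with h2 <;> simp_all
    -- a separating cut of positive weight
    obtain ⟨c0, hc0, hL0, hG0⟩ : ∃ c, 0 < wt c ∧ (L c).Nonempty ∧ (G c).Nonempty := by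
      obtain ⟨u, hu, v, hv, huv⟩ := Finset.one_lt_card.1 h1
      have : ∃ u ∈ R, ∃ v ∈ R, ∃ i, u i < v i := by
        obtain ⟨i, hi⟩ := Function.ne_iff.1 huv
        rcases lt_or_gt_of_ne hi with h | h
        · exact ⟨u, hu, v, hv, i, h⟩
        · exact ⟨v, hv, u, hu, i, h⟩
      obtain ⟨u, hu, v, hv, i, hi⟩ := this
      have hs := hw _ (hU u (hR hu) i) _ (hU v (hR hv) i) hi.le
      obtain ⟨θ, hθ, hpos⟩ : ∃ θ ∈ V, 0 < if u i ≤ θ ∧ θ < v i then w θ else 0 := by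
        apply Finset.exists_lt_of_sum_lt
        rw [hs]; simpa using hi
      split_ifs at hpos with hc
      · exact ⟨(i, ⟨θ, hθ⟩), hpos, ⟨u, Finset.mem_filter.2 ⟨hu, hc.1⟩⟩,
          ⟨v, Finset.mem_filter.2 ⟨hv, not_le.2 hc.2⟩⟩⟩
      · exact absurd hpos (lt_irrefl _)
    -- choose a good cut
    obtain ⟨c, hLc, hGc, hgood⟩ : ∃ c, (L c).Nonempty ∧ (G c).Nonempty ∧
        ∑ x ∈ X, F x (R \ cutSet V 𝒰 x c) ≤ ∑ x ∈ X, F x R := by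
      by_contra hcon
      push Not at hcon
      have hz : ∑ c, wt c * ∑ x ∈ X, (if (R \ cutSet V 𝒰 x c).Nonempty then F x R - F x (R \ cutSet V 𝒰 x c) else 0) = 0 := by
        simp only [Finset.mul_sum]
        rw [Finset.sum_comm]
        exact Finset.sum_eq_zero fun x _ => Ex_eq wt (cutSet V 𝒰 x) _ R hwt0
      have hneg : ∀ c, (L c).Nonempty → (G c).Nonempty →
          ∑ x ∈ X, (if (R \ cutSet V 𝒰 x c).Nonempty then F x R - F x (R \ cutSet V 𝒰 x c) else 0) < 0 := by
        intro c hL hG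
        have := hcon c hL hG
        have e : ∀ x ∈ X, (if (R \ cutSet V 𝒰 x c).Nonempty then F x R - F x (R \ cutSet V 𝒰 x c) else 0)
            = F x R - F x (R \ cutSet V 𝒰 x c) := by
          intro x _
          rw [if_pos]
          rw [hsd]; split_ifs <;> assumption
        rw [Finset.sum_congr rfl e, Finset.sum_sub_distrib]
        linarith
      have : ∑ c, wt c * ∑ x ∈ X, (if (R \ cutSet V 𝒰 x c).Nonempty then F x R - F x (R \ cutSet V 𝒰 x c) else 0) < 0 := by
        have hle : ∀ c, wt c * ∑ x ∈ X, (if (R \ cutSet V 𝒰 x c).Nonempty then F x R - F x (R \ cutSet V 𝒰 x c) else 0) ≤ 0 := by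
          intro c
          by_cases h : (L c).Nonempty ∧ (G c).Nonempty
          · exact mul_nonpos_of_nonneg_of_nonpos (hwt0 c) (hneg c h.1 h.2).le
          · rw [Finset.sum_eq_zero (fun x _ => (hLG c x).resolve_left h), mul_zero]
        refine (Finset.sum_lt_sum (fun c _ => hle c) ⟨c0, Finset.mem_univ _, ?_⟩).trans_eq
          (Finset.sum_const_zero (s := Finset.univ))
        exact mul_neg_of_pos_of_neg hc0 (hneg c0 hL0 hG0)
      linarith
    have hLlt : (L c).card < n := by
      rw [← hn]
      obtain ⟨v, hv⟩ := hGc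
      rw [Finset.mem_filter] at hv
      exact Finset.card_lt_card (Finset.filter_ssubset.2 ⟨v, hv.1, hv.2⟩)
    have hGlt : (G c).card < n := by
      rw [← hn]
      obtain ⟨v, hv⟩ := hLc
      rw [Finset.mem_filter] at hv
      exact Finset.card_lt_card (Finset.filter_ssubset.2 ⟨v, hv.1, by simpa using hv.2⟩)
    obtain ⟨Tl, hTl, πl, hl1, hl2, hl3⟩ := ih _ hLlt (L c) ((Finset.filter_subset _ _).trans hR) hLc
      (X.filter fun x => x c.1 ≤ c.2) (fun x hx => hX x (Finset.mem_filter.1 hx).1) rfl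
    obtain ⟨Tr, hTr, πr, hr1, hr2, hr3⟩ := ih _ hGlt (G c) ((Finset.filter_subset _ _).trans hR) hGc
      (X.filter fun x => ¬ x c.1 ≤ c.2) (fun x hx => hX x (Finset.mem_filter.1 hx).1) rfl
    refine ⟨.node c.1 c.2 Tl Tr, ?_, fun x => if x c.1 ≤ c.2 then πl x else πr x, ?_, ?_, ?_⟩
    · intro B hB
      simp only [ThresholdTree.leaves, List.mem_append, List.mem_map] at hB
      rcases hB with ⟨B', hB', rfl⟩ | ⟨B', hB', rfl⟩
      · obtain ⟨u, ⟨hu1, hu2⟩, hu3⟩ := hTl B' hB'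
        rw [Finset.mem_filter] at hu1
        refine ⟨u, ⟨hu1.1, hu2, hu1.2⟩, ?_⟩
        rintro v ⟨hv1, hv2, hv3⟩
        exact hu3 v ⟨Finset.mem_filter.2 ⟨hv1, hv3⟩, hv2⟩
      · obtain ⟨u, ⟨hu1, hu2⟩, hu3⟩ := hTr B' hB'
        rw [Finset.mem_filter] at hu1
        refine ⟨u, ⟨hu1.1, hu2, not_le.1 hu1.2⟩, ?_⟩
        rintro v ⟨hv1, hv2, hv3⟩
        exact hu3 v ⟨Finset.mem_filter.2 ⟨hv1, not_le.2 hv3⟩, hv2⟩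
    · intro x hx
      by_cases h : x c.1 ≤ c.2
      · simp only [h, if_true]
        exact (Finset.mem_filter.1 (hl1 x (Finset.mem_filter.2 ⟨hx, h⟩))).1
      · simp only [h, if_false]
        exact (Finset.mem_filter.1 (hr1 x (Finset.mem_filter.2 ⟨hx, h⟩))).1
    · intro x hx B hB hxB
      simp only [ThresholdTree.leaves, List.mem_append, List.mem_map] at hB
      rcases hB with ⟨B', hB', rfl⟩ | ⟨B', hB', rfl⟩
      · have h : x c.1 ≤ c.2 := hxB.2
        have hx' : x ∈ X.filter (fun x : Fin d → ℝ => x c.1 ≤ (c.2 : ℝ)) := Finset.mem_filter.2 ⟨hx, h⟩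
        simp only [h, if_true]
        exact ⟨hl2 x hx' B' hB' hxB.1, (Finset.mem_filter.1 (hl1 x hx')).2⟩
      · have h : ¬ x c.1 ≤ c.2 := not_le.2 hxB.2
        have hx' : x ∈ X.filter (fun x : Fin d → ℝ => ¬ x c.1 ≤ (c.2 : ℝ)) := Finset.mem_filter.2 ⟨hx, h⟩
        simp only [h, if_false]
        exact ⟨hr2 x hx' B' hB' hxB.1, not_le.1 (Finset.mem_filter.1 (hr1 x hx')).2⟩
    · refine le_trans ?_ hgood
      rw [← Finset.sum_filter_add_sum_filter_not X (fun x => x c.1 ≤ c.2)]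
      unfold cost1 at hl3 hr3 ⊢
      rw [← Finset.sum_filter_add_sum_filter_not X (fun x => x c.1 ≤ c.2)]
      refine add_le_add (le_trans (le_of_eq ?_) (hl3.trans (le_of_eq ?_)))
        (le_trans (le_of_eq ?_) (hr3.trans (le_of_eq ?_)))
      · refine Finset.sum_congr rfl fun x hx => ?_
        simp only [(Finset.mem_filter.1 hx).2, if_true]
      · refine Finset.sum_congr rfl fun x hx => ?_
        rw [hsd x c, if_pos (Finset.mem_filter.1 hx).2]
      · refine Finset.sum_congr rfl fun x hx => ?_
        simp only [(Finset.mem_filter.1 hx).2, if_false]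
      · refine Finset.sum_congr rfl fun x hx => ?_
        rw [hsd x c, if_neg (Finset.mem_filter.1 hx).2]

/-- the price of explainability for `k`-medians is at most
`1 + H_{k−1}`: for every reference clustering there is a threshold tree `T`
separating the centers whose induced assignment `π_T` (sending each point to the
unique center sharing its leaf region) has `cost₁(T) ≤ (1 + H_{k−1}) · cost₁(π, 𝒰)`. -/
theorem stmt0 (d k : ℕ) (hd : 1 ≤ d) (hk : 1 ≤ k)
    (𝒳 𝒰 : Finset (Fin d → ℝ)) (hcard : 𝒰.card = k)
    (π : (Fin d → ℝ) → (Fin d → ℝ)) (hπ : ∀ x ∈ 𝒳, π x ∈ 𝒰) :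
    ∃ T : ThresholdTree d, T.Separates 𝒰 ∧
      ∃ πT : (Fin d → ℝ) → (Fin d → ℝ),
        (∀ x ∈ 𝒳, πT x ∈ 𝒰) ∧
        (∀ x ∈ 𝒳, ∀ B ∈ T.leaves, x ∈ B → πT x ∈ B) ∧
        cost1 𝒳 πT ≤ (1 + harm (k - 1)) * cost1 𝒳 π := by
  classical
  set V : Finset ℝ := (𝒳 ∪ 𝒰).biUnion fun x => Finset.univ.image x with hV
  have hmem : ∀ x ∈ 𝒳 ∪ 𝒰, ∀ i, x i ∈ V := fun x hx i =>
    Finset.mem_biUnion.2 ⟨x, hx, Finset.mem_image_of_mem _ (Finset.mem_univ i)⟩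
  obtain ⟨w, hw0, hw⟩ := exists_weights V
  have hne : 𝒰.Nonempty := Finset.card_pos.1 (by omega)
  have hXV : ∀ x ∈ 𝒳, ∀ i, x i ∈ V := fun x hx => hmem x (Finset.mem_union_left _ hx)
  have hUV : ∀ x ∈ 𝒰, ∀ i, x i ∈ V := fun x hx => hmem x (Finset.mem_union_right _ hx)
  obtain ⟨T, hT, πT, h1, h2, h3⟩ := tree_exists V w hw0 hw 𝒰 hUV 𝒰 subset_rfl hne 𝒳 hXV
  refine ⟨T, hT, πT, h1, h2, h3.trans ?_⟩
  unfold cost1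
  rw [Finset.mul_sum]
  refine Finset.sum_le_sum fun x hx => ?_
  have := Ex_bound (fun c : Fin d × V => w c.2) (cutSet V 𝒰 x) (fun c => hw0 _) 𝒰 (π x) (hπ x hx)
  rw [zz_cutSet V w hw 𝒰 x (π x) (hXV x hx) (hUV _ (hπ x hx)) (hπ x hx), hcard] at this
  exact this
end

section
/- There is a universal constant C > 0 such that for every dimension d ≥ 1, every finite set of data points 𝒳 ⊂ ℝ^d, every set 𝒰 of k ≥ 3 distinct centers in ℝ^d, and every assignment π : 𝒳 → 𝒰, there exists a threshold tree T separating 𝒰 such that cost₂(T) ≤ C · k · ln(ln k) · cost₂(π, 𝒰). In particular, the price of explainability for k-means is at most O(k ln ln k). -/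
/-- The `k`-means cost of an assignment `π` on the data set `𝒳`. -/
noncomputable def cost2 {d : ℕ} (𝒳 : Finset (Fin d → ℝ))
    (π : (Fin d → ℝ) → (Fin d → ℝ)) : ℝ :=
  ∑ x ∈ 𝒳, ∑ i, (x i - π x i) ^ 2


/-- Consecutive pairs of a finite set of reals. -/
noncomputable def gaps (P : Finset ℝ) : Finset (ℝ × ℝ) :=
  (P ×ˢ P).filter fun p => p.1 < p.2 ∧ ∀ z ∈ P, z ≤ p.1 ∨ p.2 ≤ z

lemma mem_gaps {P : Finset ℝ} {p : ℝ × ℝ} :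
    p ∈ gaps P ↔ p.1 ∈ P ∧ p.2 ∈ P ∧ p.1 < p.2 ∧ ∀ z ∈ P, z ≤ p.1 ∨ p.2 ≤ z := by
  simp [gaps, and_assoc]

/-- the predecessor gap -/
lemma exists_gap {P : Finset ℝ} {c u : ℝ} (hc : c ∈ P) (hu : u ∈ P) (h : c < u) :
    ∃ a, c ≤ a ∧ (a, u) ∈ gaps P := by
  have hne : (P.filter fun z => z < u).Nonempty := ⟨c, by simp [hc, h]⟩
  obtain ⟨a, ha, hmax⟩ := Finset.exists_max_image _ id hne
  simp only [Finset.mem_filter, id] at ha hmax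
  refine ⟨a, hmax c ⟨hc, h⟩, mem_gaps.2 ⟨ha.1, hu, ha.2, fun z hz => ?_⟩⟩
  by_cases hzu : z < u
  · exact Or.inl (hmax z ⟨hz, hzu⟩)
  · exact Or.inr (not_lt.1 hzu)

lemma sum_gaps {P : Finset ℝ} {c : ℝ} (hc : c ∈ P) :
    ∀ n : ℕ, ∀ u ∈ P, (P.filter fun z => z < u).card = n → c ≤ u →
      ∑ p ∈ (gaps P).filter (fun p => c ≤ p.1 ∧ p.2 ≤ u), (p.2 - p.1) = u - c := by
  intro n
  induction n using Nat.strong_induction_on with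
  | _ n ih =>
    intro u hu hn hcu
    rcases hcu.eq_or_lt with rfl | hlt
    · rw [sub_self]
      apply Finset.sum_eq_zero
      intro p hp
      simp only [Finset.mem_filter, mem_gaps] at hp
      linarith [hp.1.2.2.1, hp.2.1, hp.2.2]
    · obtain ⟨a, hca, hg⟩ := exists_gap hc hu hlt
      obtain ⟨haP, -, hau, hz⟩ := mem_gaps.1 hg
      simp only at haP hau hz
      have hcard : (P.filter fun z => z < a).card < n := by
        rw [← hn]
        apply Finset.card_lt_card
        rw [Finset.ssubset_iff_of_subset]
        · exact ⟨a, by simp [haP, hau], by simp⟩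
        · intro z; simp only [Finset.mem_filter]; rintro ⟨h1, h2⟩; exact ⟨h1, h2.trans hau⟩
      have := ih _ hcard a haP rfl hca
      have hset : (gaps P).filter (fun p => c ≤ p.1 ∧ p.2 ≤ u) =
          insert (a, u) ((gaps P).filter (fun p => c ≤ p.1 ∧ p.2 ≤ a)) := by
        ext ⟨x, y⟩
        simp only [Finset.mem_filter, Finset.mem_insert, Prod.mk.injEq]
        constructor
        · rintro ⟨hxy, h1, h2⟩
          obtain ⟨hx, hy, hlt', hz'⟩ := mem_gaps.1 hxy
          simp only at hx hy hlt' hz'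
          rcases hz y hy with h | h
          · exact Or.inr ⟨hxy, h1, h⟩
          · have hyu : y = u := le_antisymm h2 h
            subst hyu
            left
            refine ⟨?_, rfl⟩
            rcases hz x hx with h | h
            · rcases hz' a haP with h' | h'
              · linarith
              · linarith
            · linarith
        · rintro (⟨rfl, rfl⟩ | ⟨hxy, h1, h2⟩)
          · exact ⟨hg, hca, le_rfl⟩
          · exact ⟨hxy, h1, h2.trans hau.le⟩
      rw [hset, Finset.sum_insert, this]
      · ring
      · simp only [Finset.mem_filter, not_and, not_le]
        intro _ _; exact hau

lemma sum_gaps' {P : Finset ℝ} {c u : ℝ} (hc : c ∈ P) (hu : u ∈ P) (h : c ≤ u) :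
      ∑ p ∈ (gaps P).filter (fun p => c ≤ p.1 ∧ p.2 ≤ u), (p.2 - p.1) = u - c :=
  sum_gaps hc _ u hu rfl h

lemma sum_sq_le' {ι : Type*} (s : Finset ι) (f : ι → ℝ) (hf : ∀ i ∈ s, 0 ≤ f i) :
    ∑ i ∈ s, f i ^ 2 ≤ (∑ i ∈ s, f i) ^ 2 := by
  have h : ∀ i ∈ s, f i ^ 2 ≤ f i * ∑ j ∈ s, f j := by
    intro i hi
    rw [sq]
    exact mul_le_mul_of_nonneg_left (Finset.single_le_sum hf hi) (hf i hi)
  calc _ ≤ ∑ i ∈ s, f i * ∑ j ∈ s, f j := Finset.sum_le_sum h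
    _ = _ := by rw [← Finset.sum_mul, sq]

/-- separation cost, upward -/
lemma sep_up {P : Finset ℝ} {c x : ℝ} (hc : c ∈ P) :
    ∑ p ∈ (gaps P).filter (fun p => c ≤ p.1 ∧ (p.1 + p.2) / 2 ≤ x), (p.2 - p.1) ^ 2
      ≤ 4 * (x - c) ^ 2 := by
  set S := (gaps P).filter (fun p => c ≤ p.1 ∧ (p.1 + p.2) / 2 ≤ x) with hS
  rcases S.eq_empty_or_nonempty with he | hne
  · rw [he, Finset.sum_empty]; positivity
  obtain ⟨⟨a, b⟩, hab, hmax⟩ := Finset.exists_max_image S (fun p => p.2) hne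
  have hpos : ∀ p ∈ gaps P, 0 ≤ p.2 - p.1 := fun p hp => by
    have := (mem_gaps.1 hp).2.2.1; linarith
  have hab' := hab
  simp only [hS, Finset.mem_filter] at hab'
  obtain ⟨hg, h1, h2⟩ := hab'
  obtain ⟨haP, hbP, hlt, -⟩ := mem_gaps.1 hg
  simp only at haP hbP hlt
  have hsum : ∑ p ∈ S, (p.2 - p.1) ≤ b - c := by
    rw [← sum_gaps' hc hbP (by linarith)]
    apply Finset.sum_le_sum_of_subset_of_nonneg
    · intro p hp
      have := hmax p hp
      simp only [hS, Finset.mem_filter] at hp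
      simp only [Finset.mem_filter]
      exact ⟨hp.1, hp.2.1, this⟩
    · intro p hp _
      exact hpos p (Finset.mem_filter.1 hp).1
  have hsub : S ⊆ gaps P := Finset.filter_subset _ _
  have h0 : 0 ≤ ∑ p ∈ S, (p.2 - p.1) := Finset.sum_nonneg fun p hp => hpos p (hsub hp)
  calc _ ≤ (∑ p ∈ S, (p.2 - p.1)) ^ 2 := sum_sq_le' _ _ fun p hp => hpos p (hsub hp)
    _ ≤ (2 * (x - c)) ^ 2 := by
        apply pow_le_pow_left₀ h0
        linarith
    _ = _ := by ring

lemma neg_mem_gaps {P : Finset ℝ} {a b : ℝ} :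
    (-b, -a) ∈ gaps (P.image fun z => -z) ↔ (a, b) ∈ gaps P := by
  simp only [mem_gaps, Finset.mem_image, neg_inj, exists_eq_right, neg_lt_neg_iff,
    forall_exists_index, and_imp, forall_apply_eq_imp_iff₂, neg_le_neg_iff]
  constructor
  · rintro ⟨h1, h2, h3, h4⟩; exact ⟨h2, h1, h3, fun z hz => (h4 z hz).symm⟩
  · rintro ⟨h1, h2, h3, h4⟩; exact ⟨h2, h1, h3, fun z hz => (h4 z hz).symm⟩

lemma sum_neg_gaps {P : Finset ℝ} (R : ℝ × ℝ → Prop) [DecidablePred R] (F : ℝ × ℝ → ℝ) :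
    ∑ p ∈ (gaps (P.image fun z => -z)).filter R, F p =
      ∑ p ∈ (gaps P).filter (fun p => R (-p.2, -p.1)), F (-p.2, -p.1) := by
  apply Finset.sum_nbij' (fun p => (-p.2, -p.1)) (fun p => (-p.2, -p.1))
  · rintro ⟨a, b⟩ h
    simp only [Finset.mem_filter, neg_neg] at h ⊢
    refine ⟨?_, h.2⟩
    rw [← neg_mem_gaps]; simpa using h.1
  · rintro ⟨a, b⟩ h
    simp only [Finset.mem_filter] at h ⊢
    exact ⟨neg_mem_gaps.2 h.1, h.2⟩
  · intro p _; simp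
  · intro p _; simp
  · intro p _; simp

lemma sep_down {P : Finset ℝ} {c x : ℝ} (hc : c ∈ P) :
    ∑ p ∈ (gaps P).filter (fun p => p.2 ≤ c ∧ x ≤ (p.1 + p.2) / 2), (p.2 - p.1) ^ 2
      ≤ 4 * (x - c) ^ 2 := by
  have h := sep_up (P := P.image fun z => -z) (c := -c) (x := -x)
    (Finset.mem_image_of_mem _ hc)
  rw [sum_neg_gaps] at h
  calc _ = _ := ?_
    _ ≤ _ := h
    _ = _ := by ring
  apply Finset.sum_congr
  · ext p
    simp only [Finset.mem_filter, neg_le_neg_iff]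
    constructor
    · rintro ⟨h1, h2, h3⟩; exact ⟨h1, h2, by linarith⟩
    · rintro ⟨h1, h2, h3⟩; exact ⟨h1, h2, by linarith⟩
  · intro p _; ring

/-- separation in one dimension -/
lemma sep_one {P : Finset ℝ} {c x : ℝ} (hc : c ∈ P) :
    ∑ p ∈ gaps P, (if (x ≤ (p.1 + p.2) / 2 ↔ c ≤ (p.1 + p.2) / 2) then 0 else (p.2 - p.1) ^ 2)
      ≤ 4 * (x - c) ^ 2 := by
  rcases le_total c x with hcx | hcx
  · refine le_trans ?_ (sep_up (x := x) hc)
    rw [Finset.sum_filter]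
    apply Finset.sum_le_sum
    intro p hp
    obtain ⟨h1, h2, h3, h4⟩ := mem_gaps.1 hp
    split_ifs with ha hb hb
    · positivity
    · exact le_rfl
    · exact le_rfl
    · exfalso
      apply hb
      rcases h4 c hc with h | h
      · refine ⟨h, ?_⟩
        by_contra hh
        apply ha
        constructor <;> intro <;> linarith
      · exfalso; apply ha; constructor <;> intro <;> linarith
  · refine le_trans ?_ (sep_down (x := x) hc)
    rw [Finset.sum_filter]
    apply Finset.sum_le_sum
    intro p hp
    obtain ⟨h1, h2, h3, h4⟩ := mem_gaps.1 hp
    split_ifs with ha hb hb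
    · positivity
    · exact le_rfl
    · exact le_rfl
    · exfalso
      apply hb
      rcases h4 c hc with h | h
      · exfalso; apply ha; constructor <;> intro <;> linarith
      · refine ⟨h, ?_⟩
        by_contra hh
        apply ha
        constructor <;> intro <;> linarith

lemma harm_le (q : ℝ) (hq : 0 < q) (N : ℕ) :
    ∑ n ∈ Finset.Icc 1 N, 1 / ((n : ℝ) + q) ≤ Real.log ((N + q) / q) := by
  induction N with
  | zero => simp [hq.ne']
  | succ N ih =>
    rw [Finset.sum_Icc_succ_top (by omega)]
    have h1 : (0 : ℝ) < N + q := by positivity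
    have h2 : (0 : ℝ) < N + 1 + q := by positivity
    have := Real.log_le_sub_one_of_pos (x := (N + q) / (N + 1 + q)) (by positivity)
    rw [Real.log_div h1.ne' h2.ne'] at this
    rw [Real.log_div h1.ne' hq.ne'] at ih
    push_cast
    rw [Real.log_div h2.ne' hq.ne']
    have e : (N + q) / (N + 1 + q) - 1 = - (1 / ((N : ℝ) + 1 + q)) := by field_simp; ring
    linarith

/-- the bulk lemma, upward -/
lemma bulk_up {V : Type*} (U : Finset V) (f : V → ℝ) {c u : V} (hc : c ∈ U) (hu : u ∈ U)
    (hcu : f c < f u) (N : ℕ) (hN : (U.filter fun v => (f c + f u) / 2 ≤ f v).card ≤ N)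
    (M : ℝ) (hM : 0 < M) :
    (f u - f c) ^ 2 ≤ 4 * Real.log (1 + M) *
      ∑ p ∈ (gaps (U.image f)).filter (fun p => f c ≤ p.1 ∧ p.2 ≤ f u),
        (p.2 - p.1) ^ 2 * (((U.filter fun v => p.2 ≤ f v).card : ℝ) + N / M) := by
  set P := U.image f with hP
  have hcP : f c ∈ P := Finset.mem_image_of_mem _ hc
  have huP : f u ∈ P := Finset.mem_image_of_mem _ hu
  set m := (f c + f u) / 2 with hm
  have hN1 : 1 ≤ N := by
    refine le_trans ?_ hN
    apply Finset.card_pos.2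
    exact ⟨u, by simp only [Finset.mem_filter]; exact ⟨hu, by rw [hm]; linarith⟩⟩
  obtain ⟨a, ha, hamax⟩ := Finset.exists_max_image (P.filter fun z => z ≤ m) id
    ⟨f c, by simp only [Finset.mem_filter]; exact ⟨hcP, by rw [hm]; linarith⟩⟩
  simp only [Finset.mem_filter, id] at ha hamax
  have hca : f c ≤ a := hamax _ ⟨hcP, by rw [hm]; linarith⟩
  set S := (gaps P).filter (fun p => a ≤ p.1 ∧ p.2 ≤ f u) with hS
  have hSg : ∀ p ∈ S, p ∈ gaps P := fun p hp => (Finset.mem_filter.1 hp).1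
  have hsum : ∑ p ∈ S, (p.2 - p.1) = f u - a := sum_gaps' ha.1 huP (by
    have := ha.2; rw [hm] at this; linarith)
  set n : ℝ → ℕ := fun b => (U.filter fun v => b ≤ f v).card with hn
  set q : ℝ := N / M with hq
  have hq0 : 0 < q := by
    have : (0 : ℝ) < N := by exact_mod_cast hN1
    positivity
  have hnanti : ∀ b ∈ P, ∀ b' ∈ P, b < b' → n b' < n b := by
    intro b hb b' hb' hlt
    apply Finset.card_lt_card
    obtain ⟨v, hv, rfl⟩ := Finset.mem_image.1 hb
    rw [Finset.ssubset_iff_of_subset]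
    · exact ⟨v, by simp [hv], by simp [hv, hlt]⟩
    · intro z; simp only [Finset.mem_filter]; rintro ⟨h1, h2⟩; exact ⟨h1, hlt.le.trans h2⟩
  have hharm : ∑ p ∈ S, 1 / ((n p.2 : ℝ) + q) ≤ Real.log (1 + M) := by
    have hinj : Set.InjOn (fun p : ℝ × ℝ => n p.2) S := by
      intro p hp p' hp' h
      obtain ⟨h1, h2, h3, h4⟩ := mem_gaps.1 (hSg p hp)
      obtain ⟨k1, k2, k3, k4⟩ := mem_gaps.1 (hSg p' hp')
      have e2 : p.2 = p'.2 := by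
        rcases lt_trichotomy p.2 p'.2 with hl | hl | hl
        · have := hnanti _ h2 _ k2 hl; simp only at h; omega
        · exact hl
        · have := hnanti _ k2 _ h2 hl; simp only at h; omega
      have e1 : p.1 = p'.1 := by
        rcases h4 _ k1 with h' | h' <;> rcases k4 _ h1 with k' | k' <;> linarith
      exact Prod.ext e1 e2
    calc _ = ∑ j ∈ S.image (fun p : ℝ × ℝ => n p.2), 1 / ((j : ℝ) + q) := by
            rw [Finset.sum_image hinj]
      _ ≤ ∑ j ∈ Finset.Icc 1 N, 1 / ((j : ℝ) + q) := by
            apply Finset.sum_le_sum_of_subset_of_nonneg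
            · intro j hj
              obtain ⟨p, hp, rfl⟩ := Finset.mem_image.1 hj
              obtain ⟨h1, h2, h3, h4⟩ := mem_gaps.1 (hSg p hp)
              have hpS := (Finset.mem_filter.1 hp).2
              rw [Finset.mem_Icc]
              constructor
              · apply Finset.card_pos.2
                exact ⟨u, by simp only [Finset.mem_filter]; exact ⟨hu, hpS.2⟩⟩
              · refine le_trans (Finset.card_le_card ?_) hN
                intro v
                simp only [Finset.mem_filter]
                rintro ⟨hv, hv'⟩
                refine ⟨hv, ?_⟩
                by_contra hlt
                have := hamax p.2 ⟨h2, by linarith⟩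
                linarith [hpS.1]
            · intro j _ _; positivity
      _ ≤ Real.log ((N + q) / q) := harm_le q hq0 N
      _ = Real.log (1 + M) := by
            congr 1
            rw [hq]
            have : (N : ℝ) ≠ 0 := by exact_mod_cast (by omega : N ≠ 0)
            field_simp
            ring
  have hCS : (∑ p ∈ S, (p.2 - p.1)) ^ 2 ≤
      (∑ p ∈ S, (p.2 - p.1) ^ 2 * ((n p.2 : ℝ) + q)) * ∑ p ∈ S, 1 / ((n p.2 : ℝ) + q) := by
    apply Finset.sum_sq_le_sum_mul_sum_of_sq_le_mul
    · intro p _; positivity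
    · intro p _; positivity
    · intro p _
      have : (n p.2 : ℝ) + q ≠ 0 := by positivity
      apply le_of_eq
      field_simp
  have hS2 : ∑ p ∈ S, (p.2 - p.1) ^ 2 * ((n p.2 : ℝ) + q) ≤
      ∑ p ∈ (gaps P).filter (fun p => f c ≤ p.1 ∧ p.2 ≤ f u),
        (p.2 - p.1) ^ 2 * ((n p.2 : ℝ) + q) := by
    apply Finset.sum_le_sum_of_subset_of_nonneg
    · intro p
      simp only [hS, Finset.mem_filter]
      rintro ⟨h1, h2, h3⟩; exact ⟨h1, hca.trans h2, h3⟩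
    · intro p _ _; positivity
  have hX0 : 0 ≤ ∑ p ∈ S, (p.2 - p.1) ^ 2 * ((n p.2 : ℝ) + q) :=
    Finset.sum_nonneg fun p _ => by positivity
  have hL0 : 0 ≤ Real.log (1 + M) := Real.log_nonneg (by linarith)
  have h1 : ((f u - f c) / 2) ^ 2 ≤ (∑ p ∈ S, (p.2 - p.1)) ^ 2 := by
    apply pow_le_pow_left₀ (by linarith)
    rw [hsum]
    have := ha.2
    rw [hm] at this
    linarith
  have h2 := h1.trans (hCS.trans (mul_le_mul hS2 hharm
    (Finset.sum_nonneg fun p _ => by positivity) (hX0.trans hS2)))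
  calc (f u - f c) ^ 2 = 4 * ((f u - f c) / 2) ^ 2 := by ring
    _ ≤ _ := by rw [mul_comm, mul_assoc] at *; linarith

lemma bulk_down {V : Type*} (U : Finset V) (f : V → ℝ) {c u : V} (hc : c ∈ U) (hu : u ∈ U)
    (hcu : f u < f c) (N : ℕ) (hN : (U.filter fun v => f v ≤ (f c + f u) / 2).card ≤ N)
    (M : ℝ) (hM : 0 < M) :
    (f u - f c) ^ 2 ≤ 4 * Real.log (1 + M) *
      ∑ p ∈ (gaps (U.image f)).filter (fun p => f u ≤ p.1 ∧ p.2 ≤ f c),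
        (p.2 - p.1) ^ 2 * (((U.filter fun v => f v ≤ p.1).card : ℝ) + N / M) := by
  have h := bulk_up U (fun v => - f v) hc hu (by linarith) N (by
    refine le_trans (Finset.card_le_card ?_) hN
    intro v; simp only [Finset.mem_filter]; rintro ⟨h1, h2⟩; exact ⟨h1, by linarith⟩) M hM
  have e : U.image (fun v => - f v) = (U.image f).image (fun z => -z) := by
    rw [Finset.image_image]; rfl
  rw [e, sum_neg_gaps] at h
  calc _ = _ := ?_
    _ ≤ _ := h
    _ = _ := ?_
  · ring
  · congr 1
    simp only [neg_le_neg_iff]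
    apply Finset.sum_congr
    · ext p; simp only [Finset.mem_filter]; tauto
    · intro p _; ring

/-- the bulk lemma -/
lemma bulk {V : Type*} (U : Finset V) (f : V → ℝ) {c u : V} (hc : c ∈ U) (hu : u ∈ U)
    (M : ℝ) (hM : 0 < M) :
    (f u - f c) ^ 2 ≤ 4 * Real.log (1 + M) *
      (∑ p ∈ gaps (U.image f), (p.2 - p.1) ^ 2 *
          ((U.filter fun v => ¬ (f v ≤ (p.1 + p.2) / 2 ↔ f c ≤ (p.1 + p.2) / 2)).card : ℝ)
       + ((U.filter fun v => (f u - f c) ^ 2 ≤ 4 * (f v - f c) ^ 2).card : ℝ) / M *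
         ∑ p ∈ gaps (U.image f), (p.2 - p.1) ^ 2 *
          (if (f u ≤ (p.1 + p.2) / 2 ↔ f c ≤ (p.1 + p.2) / 2) then 0 else 1)) := by
  have hL0 : 0 ≤ Real.log (1 + M) := Real.log_nonneg (by linarith)
  set N := (U.filter fun v => (f u - f c) ^ 2 ≤ 4 * (f v - f c) ^ 2).card with hNdef
  have gen : ∀ (R : ℝ × ℝ → Prop) [DecidablePred R] (K : ℝ × ℝ → ℕ),
      (∀ p ∈ gaps (U.image f), R p → ¬ (f u ≤ (p.1 + p.2) / 2 ↔ f c ≤ (p.1 + p.2) / 2) ∧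
        K p ≤ (U.filter fun v => ¬ (f v ≤ (p.1 + p.2) / 2 ↔ f c ≤ (p.1 + p.2) / 2)).card) →
      ∑ p ∈ (gaps (U.image f)).filter R, (p.2 - p.1) ^ 2 * ((K p : ℝ) + N / M) ≤
      (∑ p ∈ gaps (U.image f), (p.2 - p.1) ^ 2 *
          ((U.filter fun v => ¬ (f v ≤ (p.1 + p.2) / 2 ↔ f c ≤ (p.1 + p.2) / 2)).card : ℝ)
       + (N : ℝ) / M *
         ∑ p ∈ gaps (U.image f), (p.2 - p.1) ^ 2 *
          (if (f u ≤ (p.1 + p.2) / 2 ↔ f c ≤ (p.1 + p.2) / 2) then 0 else 1)) := by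
    intro R _ K h
    rw [Finset.mul_sum, ← Finset.sum_add_distrib, Finset.sum_filter]
    apply Finset.sum_le_sum
    intro p hp
    by_cases hR : R p
    · obtain ⟨h1, h2⟩ := h p hp hR
      rw [if_pos hR, if_neg h1]
      have h2' : (K p : ℝ) ≤ ((U.filter fun v =>
        ¬ (f v ≤ (p.1 + p.2) / 2 ↔ f c ≤ (p.1 + p.2) / 2)).card : ℝ) := by exact_mod_cast h2
      nlinarith [sq_nonneg (p.2 - p.1)]
    · rw [if_neg hR]
      split_ifs <;> positivity
  rcases lt_trichotomy (f c) (f u) with hlt | heq | hlt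
  · refine (bulk_up U f hc hu hlt N ?_ M hM).trans (mul_le_mul_of_nonneg_left ?_ (by positivity))
    · apply Finset.card_le_card
      intro v; simp only [Finset.mem_filter]; rintro ⟨h1, h2⟩; exact ⟨h1, by nlinarith⟩
    · apply gen _ (fun p => (U.filter fun v => p.2 ≤ f v).card)
      rintro p hp ⟨h1, h2⟩
      have h3 := (mem_gaps.1 hp).2.2.1
      refine ⟨fun h => by have := h.2 (by linarith); linarith, Finset.card_le_card ?_⟩
      intro v; simp only [Finset.mem_filter]; rintro ⟨k1, k2⟩
      exact ⟨k1, fun h => by have := h.2 (by linarith); linarith⟩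
  · rw [heq]
    have : (f u - f u) ^ 2 = 0 := by ring
    rw [this]
    apply mul_nonneg (by positivity)
    apply add_nonneg
    · exact Finset.sum_nonneg fun p _ => by positivity
    · apply mul_nonneg (by positivity)
      exact Finset.sum_nonneg fun p _ => by split_ifs <;> positivity
  · refine (bulk_down U f hc hu hlt N ?_ M hM).trans
      (mul_le_mul_of_nonneg_left ?_ (by positivity))
    · apply Finset.card_le_card
      intro v; simp only [Finset.mem_filter]; rintro ⟨h1, h2⟩; exact ⟨h1, by nlinarith⟩
    · apply gen _ (fun p => (U.filter fun v => f v ≤ p.1).card)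
      rintro p hp ⟨h1, h2⟩
      have h3 := (mem_gaps.1 hp).2.2.1
      refine ⟨fun h => by have := h.1 (by linarith); linarith, Finset.card_le_card ?_⟩
      intro v; simp only [Finset.mem_filter]; rintro ⟨k1, k2⟩
      exact ⟨k1, fun h => by have := h.1 (by linarith); linarith⟩

/-- squared euclidean distance -/
noncomputable def dist2 {d : ℕ} (u v : Fin d → ℝ) : ℝ := ∑ i, (u i - v i) ^ 2

lemma dist2_nonneg {d : ℕ} (u v : Fin d → ℝ) : 0 ≤ dist2 u v :=
  Finset.sum_nonneg fun _ _ => sq_nonneg _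

lemma dist2_pos {d : ℕ} {u v : Fin d → ℝ} (h : u ≠ v) : 0 < dist2 u v := by
  obtain ⟨i, hi⟩ := Function.ne_iff.1 h
  have : 0 < (u i - v i) ^ 2 := by
    have := sub_ne_zero.2 hi
    positivity
  exact this.trans_le (Finset.single_le_sum (f := fun i => (u i - v i) ^ 2)
    (fun _ _ => sq_nonneg _) (Finset.mem_univ i))

lemma dist2_tri {d : ℕ} (x c u : Fin d → ℝ) : dist2 x u ≤ 2 * dist2 x c + 2 * dist2 u c := by
  unfold dist2
  rw [Finset.mul_sum, Finset.mul_sum, ← Finset.sum_add_distrib]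
  apply Finset.sum_le_sum
  intro i _
  nlinarith [sq_nonneg ((x i - c i) + (u i - c i))]

/-- candidate cuts: a coordinate and a pair of consecutive projections -/
noncomputable def cuts {d : ℕ} (U : Finset (Fin d → ℝ)) : Finset (Σ _ : Fin d, ℝ × ℝ) :=
  Finset.univ.sigma fun i => gaps (U.image fun v => v i)

/-- threshold of a cut -/
noncomputable def th {d : ℕ} (t : Σ _ : Fin d, ℝ × ℝ) : ℝ := (t.2.1 + t.2.2) / 2

/-- weight of a cut -/
noncomputable def wt {d : ℕ} (t : Σ _ : Fin d, ℝ × ℝ) : ℝ := (t.2.2 - t.2.1) ^ 2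

/-- the two points are on the same side of the cut -/
def same {d : ℕ} (t : Σ _ : Fin d, ℝ × ℝ) (v w : Fin d → ℝ) : Prop :=
  v t.1 ≤ th t ↔ w t.1 ≤ th t

noncomputable instance {d : ℕ} (t : Σ _ : Fin d, ℝ × ℝ) (v w : Fin d → ℝ) :
    Decidable (same t v w) := inferInstanceAs (Decidable (_ ↔ _))

/-- centers on the side of `c` -/
noncomputable def side {d : ℕ} (U : Finset (Fin d → ℝ)) (c : Fin d → ℝ)
    (t : Σ _ : Fin d, ℝ × ℝ) : Finset (Fin d → ℝ) := U.filter fun v => same t v c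

lemma wt_nonneg {d : ℕ} (t : Σ _ : Fin d, ℝ × ℝ) : 0 ≤ wt t := sq_nonneg _

lemma wt_pos {d : ℕ} {U : Finset (Fin d → ℝ)} {t : Σ _ : Fin d, ℝ × ℝ} (h : t ∈ cuts U) :
    0 < wt t := by
  simp only [cuts, Finset.mem_sigma] at h
  have := (mem_gaps.1 h.2).2.2.1
  unfold wt
  have : 0 < t.2.2 - t.2.1 := by linarith
  positivity

lemma cuts_nonempty {d : ℕ} {U : Finset (Fin d → ℝ)} (h : 1 < U.card) : (cuts U).Nonempty := by
  obtain ⟨u, hu, v, hv, huv⟩ := Finset.one_lt_card.1 h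
  obtain ⟨i, hi⟩ := Function.ne_iff.1 huv
  have hu' : u i ∈ U.image fun v => v i := Finset.mem_image_of_mem (fun v => v i) hu
  have hv' : v i ∈ U.image fun v => v i := Finset.mem_image_of_mem (fun v => v i) hv
  rcases lt_or_gt_of_ne hi with h | h
  · obtain ⟨a, -, ha⟩ := exists_gap hu' hv' h
    exact ⟨⟨i, (a, v i)⟩, by simp only [cuts, Finset.mem_sigma]; exact ⟨Finset.mem_univ _, ha⟩⟩
  · obtain ⟨a, -, ha⟩ := exists_gap hv' hu' h
    exact ⟨⟨i, (a, u i)⟩, by simp only [cuts, Finset.mem_sigma]; exact ⟨Finset.mem_univ _, ha⟩⟩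

/-- a point is separated from its center with small weight -/
lemma sep_all {d : ℕ} {U : Finset (Fin d → ℝ)} {c : Fin d → ℝ} (hc : c ∈ U) (x : Fin d → ℝ) :
    ∑ t ∈ cuts U, wt t * (if same t x c then 0 else 1) ≤ 4 * dist2 x c := by
  unfold cuts dist2
  rw [Finset.sum_sigma, Finset.mul_sum]
  apply Finset.sum_le_sum
  intro i _
  refine le_trans (le_of_eq ?_) (sep_one (P := U.image fun v => v i) (c := c i) (x := x i)
    (Finset.mem_image_of_mem (fun v => v i) hc))
  apply Finset.sum_congr rfl
  intro p _
  by_cases h : (x i ≤ (p.1 + p.2) / 2 ↔ c i ≤ (p.1 + p.2) / 2)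
  · rw [if_pos h, if_pos (show same ⟨i, p⟩ x c from h), mul_zero]
  · rw [if_neg h, if_neg (show ¬ same ⟨i, p⟩ x c from h), mul_one, wt]

/-- kill rate -/
noncomputable def rate {d : ℕ} (U : Finset (Fin d → ℝ)) (c u : Fin d → ℝ) : ℝ :=
  ∑ t ∈ cuts U, wt t * (if same t u c then 0 else 1)

/-- slack rate -/
noncomputable def slackr {d : ℕ} (U : Finset (Fin d → ℝ)) (c : Fin d → ℝ) : ℝ :=
  ∑ t ∈ cuts U, wt t * ((U.filter fun v => ¬ same t v c).card : ℝ)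

lemma coord_arith (r Λ S N e M τ : ℝ) (hM : 0 < M) (hτ0 : 0 < τ) (hΛ0 : 0 ≤ Λ) (hr0 : 0 ≤ r)
    (hS0 : 0 ≤ S) (he0 : 0 ≤ e) (hN0 : 0 ≤ N) (hbulk : r ≤ 4 * Λ * (S + N / M * e)) :
    r ≤ 8 * Λ * S + τ / 2 * (r * N) + 4 * Λ / (M * τ) * e := by
  have hX : 0 ≤ τ / 2 * (r * N) := by positivity
  have hY : 0 ≤ 4 * Λ / (M * τ) * e := by positivity
  by_cases hcase : r ≤ 8 * Λ * S
  · linarith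
  · have h2 : r ≤ 8 * Λ * (N / M * e) := by nlinarith
    have h3 : r ^ 2 ≤ 4 * (τ / 2 * (r * N)) * (4 * Λ / (M * τ) * e) := by
      calc r ^ 2 = r * r := by ring
        _ ≤ r * (8 * Λ * (N / M * e)) := mul_le_mul_of_nonneg_left h2 hr0
        _ = _ := by field_simp; ring
    have h4 : r ≤ τ / 2 * (r * N) + 4 * Λ / (M * τ) * e := by
      apply le_of_sq_le_sq _ (by positivity)
      nlinarith [sq_nonneg (τ / 2 * (r * N) - 4 * Λ / (M * τ) * e)]
    have : 0 ≤ 8 * Λ * S := by positivity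
    linarith

lemma per_center {d : ℕ} {U : Finset (Fin d → ℝ)} {c u : Fin d → ℝ} (hc : c ∈ U) (hu : u ∈ U)
    (M : ℝ) (hM : 0 < M) (hb : 0 < dist2 u c) :
    3 / 4 * dist2 u c ≤ 8 * Real.log (1 + M) * slackr U c +
      32 * Real.log (1 + M) * (∑ v ∈ U, dist2 v c) / (M * dist2 u c) * rate U c u := by
  set B := ∑ v ∈ U, dist2 v c with hB
  set Λ := Real.log (1 + M) with hΛ
  have hΛ0 : 0 ≤ Λ := Real.log_nonneg (by linarith)
  have hB0 : 0 < B := hb.trans_le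
    (Finset.single_le_sum (f := fun v => dist2 v c) (fun v _ => dist2_nonneg v c) hu)
  set b := dist2 u c with hbdef
  set τ := b / (8 * B) with hτ
  have hτ0 : 0 < τ := by positivity
  let N : Fin d → ℝ := fun i =>
    ((U.filter fun v => (u i - c i) ^ 2 ≤ 4 * (v i - c i) ^ 2).card : ℝ)
  let S : Fin d → ℝ := fun i => ∑ p ∈ gaps (U.image fun v => v i), (p.2 - p.1) ^ 2 *
          ((U.filter fun v => ¬ (v i ≤ (p.1 + p.2) / 2 ↔ c i ≤ (p.1 + p.2) / 2)).card : ℝ)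
  let e : Fin d → ℝ := fun i => ∑ p ∈ gaps (U.image fun v => v i), (p.2 - p.1) ^ 2 *
          (if (u i ≤ (p.1 + p.2) / 2 ↔ c i ≤ (p.1 + p.2) / 2) then 0 else 1)
  have hS0 : ∀ i, 0 ≤ S i := fun i => Finset.sum_nonneg fun p _ => by positivity
  have he0 : ∀ i, 0 ≤ e i := fun i => Finset.sum_nonneg fun p _ => by split_ifs <;> positivity
  have hSsum : slackr U c = ∑ i, S i := by
    unfold slackr cuts
    rw [Finset.sum_sigma]
    apply Finset.sum_congr rfl
    intro i _
    apply Finset.sum_congr rfl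
    intro p _
    rfl
  have hesum : rate U c u = ∑ i, e i := by
    unfold rate cuts
    rw [Finset.sum_sigma]
    apply Finset.sum_congr rfl
    intro i _
    apply Finset.sum_congr rfl
    intro p _
    rfl
  have hN : ∑ i, (u i - c i) ^ 2 * N i ≤ 4 * B := by
    have h1 : ∀ i, (u i - c i) ^ 2 * N i ≤ 4 * ∑ v ∈ U, (v i - c i) ^ 2 := by
      intro i
      have h2 : (u i - c i) ^ 2 * N i =
          ∑ v ∈ U.filter (fun v => (u i - c i) ^ 2 ≤ 4 * (v i - c i) ^ 2), (u i - c i) ^ 2 := by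
        rw [Finset.sum_const, nsmul_eq_mul, mul_comm]
      rw [h2, Finset.mul_sum, Finset.sum_filter]
      apply Finset.sum_le_sum
      intro v _
      split_ifs with h
      · exact h
      · positivity
    calc _ ≤ ∑ i, 4 * ∑ v ∈ U, (v i - c i) ^ 2 := Finset.sum_le_sum fun i _ => h1 i
      _ = 4 * B := by
          rw [← Finset.mul_sum, Finset.sum_comm]; rfl
  have hcoord : ∀ i, (u i - c i) ^ 2 ≤ 8 * Λ * S i + τ / 2 * ((u i - c i) ^ 2 * N i) +
      4 * Λ / (M * τ) * e i := by
    intro i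
    have hbulk : (u i - c i) ^ 2 ≤ 4 * Λ * (S i + N i / M * e i) :=
      bulk U (fun v => v i) hc hu M hM
    exact coord_arith _ _ _ _ _ _ _ hM hτ0 hΛ0 (sq_nonneg _) (hS0 i) (he0 i) (Nat.cast_nonneg _) hbulk
  have htot : b ≤ 8 * Λ * slackr U c + τ / 2 * (∑ i, (u i - c i) ^ 2 * N i) +
      4 * Λ / (M * τ) * rate U c u := by
    rw [hSsum, hesum, Finset.mul_sum, Finset.mul_sum, Finset.mul_sum,
      ← Finset.sum_add_distrib, ← Finset.sum_add_distrib]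
    exact Finset.sum_le_sum fun i _ => hcoord i
  have h5 : τ / 2 * (∑ i, (u i - c i) ^ 2 * N i) ≤ b / 4 := by
    calc _ ≤ τ / 2 * (4 * B) := mul_le_mul_of_nonneg_left hN (by positivity)
      _ = b / 4 := by rw [hτ]; field_simp; ring
  have h6 : 4 * Λ / (M * τ) = 32 * Λ * B / (M * b) := by rw [hτ]; field_simp; ring
  rw [h6] at htot
  linarith

/-- soft maximum normalisation -/
noncomputable def Ef {V : Type*} (p : ℕ) (U : Finset V) (b : V → ℝ) : ℝ :=
  Real.exp (-(Real.log (∑ v ∈ U, b v ^ p) / p))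

lemma soft_drop {V : Type*} [DecidableEq V] (p : ℕ) (hp : 1 ≤ p) (U U' : Finset V) (hU : U' ⊆ U)
    (b : V → ℝ) (hb : ∀ v, 0 ≤ b v) (hQ : 0 < ∑ v ∈ U, b v ^ p) :
    (∑ v ∈ U, b v) * Ef p U b / p * ((∑ v ∈ U \ U', b v ^ p) / ∑ v ∈ U, b v ^ p) ≤
    (2 * (U.card : ℝ) - (∑ v ∈ U, b v) * Ef p U b) -
      (2 * (U'.card : ℝ) - (∑ v ∈ U', b v) * Ef p U' b) := by
  set Q := ∑ v ∈ U, b v ^ p with hQdef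
  set Q' := ∑ v ∈ U', b v ^ p with hQ'def
  set E := Ef p U b with hE
  set E' := Ef p U' b with hE'
  have hp0 : (0 : ℝ) < p := by exact_mod_cast hp
  have hp1 : (1 : ℝ) ≤ p := by exact_mod_cast hp
  have hsplit : ∑ v ∈ U \ U', b v ^ p = Q - Q' := by
    have := Finset.sum_sdiff (f := fun v => b v ^ p) hU
    linarith
  have hQ'0 : 0 ≤ Q' := Finset.sum_nonneg fun v _ => pow_nonneg (hb v) p
  have hQQ : Q' ≤ Q := by
    have : 0 ≤ ∑ v ∈ U \ U', b v ^ p := Finset.sum_nonneg fun v _ => pow_nonneg (hb v) p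
    linarith
  rw [hsplit]
  set f := (Q - Q') / Q with hf
  have hf0 : 0 ≤ f := div_nonneg (by linarith) hQ.le
  have hf1 : f ≤ 1 := by rw [hf, div_le_one hQ]; linarith
  have hE0 : 0 < E := Real.exp_pos _
  have hbE : ∀ v ∈ U, b v * E ≤ 1 := by
    intro v hv
    rcases (hb v).eq_or_lt with h | h
    · rw [← h]; simp
    · have h1 : b v ^ p ≤ Q :=
        Finset.single_le_sum (f := fun v => b v ^ p) (fun v _ => pow_nonneg (hb v) p) hv
      have h2 : p * Real.log (b v) ≤ Real.log Q := by
        rw [← Real.log_pow]; exact Real.log_le_log (by positivity) h1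
      have h3 : Real.log (b v) ≤ Real.log Q / p := by rw [le_div_iff₀ hp0]; linarith
      calc b v * E = Real.exp (Real.log (b v)) * Real.exp (-(Real.log Q / p)) := by
            rw [Real.exp_log h]; rfl
        _ = Real.exp (Real.log (b v) - Real.log Q / p) := by
            rw [← Real.exp_add]; rfl
        _ ≤ 1 := Real.exp_le_one_iff.2 (by linarith)
  have hfp : f / p ≤ 1 := by rw [div_le_one hp0]; linarith
  have hfp0 : 0 ≤ f / p := by positivity
  have hsurv : ∀ v ∈ U', b v * (E * (1 + f / p)) ≤ b v * E' := by
    intro v hv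
    rcases hQ'0.eq_or_lt with h | h
    · have : b v ^ p = 0 := by
        have h1 : b v ^ p ≤ Q' :=
          Finset.single_le_sum (f := fun v => b v ^ p) (fun v _ => pow_nonneg (hb v) p) hv
        exact le_antisymm (by linarith) (pow_nonneg (hb v) p)
      have : b v = 0 := by
        by_contra hne; exact (pow_ne_zero p hne) this
      rw [this]; simp
    · apply mul_le_mul_of_nonneg_left _ (hb v)
      have h1 := Real.log_le_sub_one_of_pos (x := Q' / Q) (by positivity)
      rw [Real.log_div h.ne' hQ.ne'] at h1
      have h2 : Q' / Q - 1 = -f := by rw [hf]; field_simp; ring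
      have h3 : Real.log Q' ≤ Real.log Q - f := by linarith
      have h4 : -(Real.log Q / p) + f / p ≤ -(Real.log Q' / p) := by
        have : Real.log Q' / p ≤ (Real.log Q - f) / p := by gcongr
        rw [sub_div] at this; linarith
      calc E * (1 + f / p) ≤ E * Real.exp (f / p) := by
            apply mul_le_mul_of_nonneg_left _ hE0.le
            linarith [Real.add_one_le_exp (f / p)]
        _ = Real.exp (-(Real.log Q / p) + f / p) := by rw [Real.exp_add]; rfl
        _ ≤ E' := Real.exp_le_exp.2 h4
  have hkill : ∀ v ∈ U \ U', b v * (E * (1 + f / p)) ≤ 2 := by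
    intro v hv
    have h1 := hbE v (Finset.mem_sdiff.1 hv).1
    have h2 : 0 ≤ b v * E := mul_nonneg (hb v) hE0.le
    nlinarith
  have hsum : (∑ v ∈ U, b v) * (E * (1 + f / p)) ≤
      2 * ((U.card : ℝ) - U'.card) + (∑ v ∈ U', b v) * E' := by
    rw [Finset.sum_mul, Finset.sum_mul, ← Finset.sum_sdiff hU]
    have hcard : ((U \ U').card : ℝ) = U.card - U'.card := by
      rw [Finset.card_sdiff_of_subset hU, Nat.cast_sub (Finset.card_le_card hU)]
    have k1 := Finset.sum_le_sum hsurv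
    have k2 := Finset.sum_le_sum hkill
    rw [Finset.sum_const, nsmul_eq_mul, hcard] at k2
    linarith
  have : (∑ v ∈ U, b v) * E / p * f = (∑ v ∈ U, b v) * (E * (1 + f / p)) - (∑ v ∈ U, b v) * E := by
    field_simp; ring
  rw [this]
  linarith

/-- the potential -/
noncomputable def Phi {d : ℕ} (p : ℕ) (U : Finset (Fin d → ℝ)) (c : Fin d → ℝ) : ℝ :=
  512 * Real.log (1 + (p : ℝ) ^ 2) * U.card +
    8192 * (2 * (U.card : ℝ) - (∑ v ∈ U, dist2 v c) * Ef p U (fun v => dist2 v c))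

lemma log_le_self (p : ℕ) : Real.log (1 + (p : ℝ) ^ 2) ≤ p := by
  rw [Real.log_le_iff_le_exp (by positivity)]
  have h := Real.sum_le_exp_of_nonneg (x := (p : ℝ)) (by positivity) 4
  simp [Finset.sum_range_succ, Nat.factorial] at h
  have hp : (0 : ℝ) ≤ p := by positivity
  nlinarith [mul_nonneg hp (sq_nonneg ((p : ℝ) - 3/2))]

lemma drop_nonneg {d : ℕ} {p : ℕ} (hp : 1 ≤ p) {U : Finset (Fin d → ℝ)} {c : Fin d → ℝ}
    (hQ : 0 < ∑ v ∈ U, dist2 v c ^ p) (t : Σ _ : Fin d, ℝ × ℝ) :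
    512 * Real.log (1 + (p : ℝ) ^ 2) * ((U.filter fun v => ¬ same t v c).card : ℝ) +
    8192 * ((∑ v ∈ U, dist2 v c) * Ef p U (fun v => dist2 v c) / p *
      ((∑ v ∈ U, dist2 v c ^ p * (if same t v c then 0 else 1)) / ∑ v ∈ U, dist2 v c ^ p))
      ≤ Phi p U c - Phi p (side U c t) c := by
  have h := soft_drop p hp U (side U c t) (Finset.filter_subset _ _) (fun v => dist2 v c)
    (fun v => dist2_nonneg v c) hQ
  have e : U \ side U c t = U.filter fun v => ¬ same t v c := by
    ext v; simp only [side, Finset.mem_sdiff, Finset.mem_filter]; tauto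
  have hc := Finset.card_sdiff_of_subset (Finset.filter_subset (fun v => same t v c) U)
  change (U \ side U c t).card = U.card - (side U c t).card at hc
  have hle : (side U c t).card ≤ U.card := Finset.card_le_card (Finset.filter_subset _ _)
  have hc' : ((U.filter fun v => ¬ same t v c).card : ℝ) = U.card - (side U c t).card := by
    rw [← e, hc, Nat.cast_sub hle]
  rw [e, Finset.sum_filter] at h
  have e2 : ∑ v ∈ U, dist2 v c ^ p * (if same t v c then 0 else 1) =
      ∑ v ∈ U, if ¬ same t v c then dist2 v c ^ p else 0 := by
    apply Finset.sum_congr rfl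
    intro v _
    by_cases hs : same t v c <;> simp [hs]
  rw [e2, hc']
  unfold Phi
  linarith

lemma fin_arith (R p Λ B E Q W : ℝ) (hR0 : 0 < R) (hp0 : 0 < p) (hΛ0 : 0 < Λ) (hΛp : Λ ≤ p)
    (hB0 : 0 < B) (hQ : 0 < Q) (hE : 1 / (2 * R) ≤ E)
    (hW : p ^ 2 * R ^ 2 / (256 * Λ * B) * (Q / 2) ≤ W) :
    8 * R ≤ 8192 * (B * E / p * (W / Q)) := by
  have hE0 : 0 < E := lt_of_lt_of_le (by positivity) hE
  calc 8 * R ≤ 8 * R * (p / Λ) := by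
        apply le_mul_of_one_le_right (by positivity)
        rw [one_le_div hΛ0]; exact hΛp
    _ = 8192 * (B * (1 / (2 * R)) / p *
          ((p ^ 2 * R ^ 2 / (256 * Λ * B) * (Q / 2)) / Q)) := by
        field_simp; norm_num
    _ ≤ _ := by gcongr

lemma key {d : ℕ} {p : ℕ} (hp : 1 ≤ p) {U : Finset (Fin d → ℝ)} (hU : 1 < U.card)
    (hUp : 2 * U.card ≤ 2 ^ p) {c : Fin d → ℝ} (hc : c ∈ U) :
    ∃ R : ℝ, (∀ w ∈ U, dist2 w c ≤ R) ∧
      8 * R ≤ ∑ t ∈ cuts U, wt t * (Phi p U c - Phi p (side U c t) c) := by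
  obtain ⟨w, hw, hmax⟩ := Finset.exists_max_image U (fun v => dist2 v c) ⟨c, hc⟩
  refine ⟨dist2 w c, hmax, ?_⟩
  set R := dist2 w c with hR
  have hR0 : 0 < R := by
    obtain ⟨v, hv, hvc⟩ := Finset.exists_mem_ne hU c
    exact (dist2_pos hvc).trans_le (hmax v hv)
  set b : (Fin d → ℝ) → ℝ := fun v => dist2 v c with hb
  have hb0 : ∀ v, 0 ≤ b v := fun v => dist2_nonneg v c
  set B := ∑ v ∈ U, dist2 v c with hB
  set Q := ∑ v ∈ U, dist2 v c ^ p with hQdef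
  set E := Ef p U (fun v => dist2 v c) with hE
  have hQR : R ^ p ≤ Q := Finset.single_le_sum (f := fun v => dist2 v c ^ p)
    (fun v _ => pow_nonneg (hb0 v) p) hw
  have hQ : 0 < Q := (pow_pos hR0 p).trans_le hQR
  have hB0 : 0 < B := hR0.trans_le
    (Finset.single_le_sum (f := fun v => dist2 v c) (fun v _ => hb0 v) hw)
  have hp0 : (0 : ℝ) < p := by exact_mod_cast hp
  set Λ := Real.log (1 + (p : ℝ) ^ 2) with hΛ
  have hΛ0 : 0 < Λ := Real.log_pos (by nlinarith)
  have hΛp : Λ ≤ p := log_le_self p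
  have hE0 : 0 < E := Real.exp_pos _
  have hUp' : 2 * (U.card : ℝ) ≤ 2 ^ p := by exact_mod_cast hUp
  -- lower bound for the total drop
  have htotal : 512 * Λ * slackr U c + 8192 * (B * E / p * ((∑ v ∈ U, b v ^ p * rate U c v) / Q))
      ≤ ∑ t ∈ cuts U, wt t * (Phi p U c - Phi p (side U c t) c) := by
    have h1 : ∀ t ∈ cuts U, wt t * (512 * Λ * ((U.filter fun v => ¬ same t v c).card : ℝ) +
        8192 * (B * E / p *
        ((∑ v ∈ U, dist2 v c ^ p * (if same t v c then 0 else 1)) / Q))) ≤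
        wt t * (Phi p U c - Phi p (side U c t) c) := fun t _ =>
      mul_le_mul_of_nonneg_left (drop_nonneg hp hQ t) (wt_nonneg t)
    refine le_trans (le_of_eq ?_) (Finset.sum_le_sum h1)
    have h2 : ∑ v ∈ U, b v ^ p * rate U c v =
        ∑ t ∈ cuts U, wt t * ∑ v ∈ U, dist2 v c ^ p * (if same t v c then 0 else 1) := by
      unfold rate
      simp only [Finset.mul_sum]
      rw [Finset.sum_comm]
      apply Finset.sum_congr rfl
      intro t _
      apply Finset.sum_congr rfl
      intro v _
      rw [hb]; ring
    rw [h2]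
    unfold slackr
    rw [Finset.sum_div, Finset.mul_sum, Finset.mul_sum, Finset.mul_sum, ← Finset.sum_add_distrib]
    apply Finset.sum_congr rfl
    intro t _
    ring
  refine le_trans ?_ htotal
  have hrate0 : ∀ v, 0 ≤ rate U c v := fun v => Finset.sum_nonneg fun t _ => by
    have := wt_nonneg t
    split_ifs <;> simp [this]
  have hslack0 : 0 ≤ slackr U c := Finset.sum_nonneg fun t _ => by
    have := wt_nonneg t
    positivity
  have hsum0 : 0 ≤ ∑ v ∈ U, b v ^ p * rate U c v := Finset.sum_nonneg fun v _ =>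
    mul_nonneg (pow_nonneg (hb0 v) p) (hrate0 v)
  by_cases hcase : R ≤ 64 * Λ * slackr U c
  · have : 0 ≤ 8192 * (B * E / p * ((∑ v ∈ U, b v ^ p * rate U c v) / Q)) := by positivity
    linarith
  · push Not at hcase
    -- far centers are killed fast
    have hfar : ∀ v ∈ U, R / 2 ≤ b v → (p : ℝ) ^ 2 * R ^ 2 / (256 * Λ * B) ≤ rate U c v := by
      intro v hv hRv
      have hbv : 0 < b v := by linarith
      have h := per_center hc hv ((p : ℝ) ^ 2) (by positivity) hbv
      change 3 / 4 * b v ≤ 8 * Λ * slackr U c +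
        32 * Λ * B / ((p : ℝ) ^ 2 * b v) * rate U c v at h
      have h1 : b v / 2 ≤ 32 * Λ * B / ((p : ℝ) ^ 2 * b v) * rate U c v := by linarith
      have h2 : b v / 2 * ((p : ℝ) ^ 2 * b v) ≤ 32 * Λ * B * rate U c v := by
        have := mul_le_mul_of_nonneg_right h1 (by positivity : 0 ≤ (p : ℝ) ^ 2 * b v)
        refine this.trans (le_of_eq ?_)
        field_simp
      rw [div_le_iff₀ (by positivity)]
      have h3 : R ^ 2 / 4 ≤ b v ^ 2 := by nlinarith
      have h4 : (p : ℝ) ^ 2 * (R ^ 2 / 4) ≤ (p : ℝ) ^ 2 * b v ^ 2 :=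
        mul_le_mul_of_nonneg_left h3 (by positivity)
      nlinarith
    set ρ := (p : ℝ) ^ 2 * R ^ 2 / (256 * Λ * B) with hρ
    have hρ0 : 0 < ρ := by positivity
    -- far centers carry half of `Q`
    have hhalf : ρ * (Q / 2) ≤ ∑ v ∈ U, b v ^ p * rate U c v := by
      have h1 : ∀ v ∈ U, ρ * (b v ^ p - (R / 2) ^ p) ≤ b v ^ p * rate U c v := by
        intro v hv
        have hbp := pow_nonneg (hb0 v) p
        by_cases hRv : R / 2 ≤ b v
        · have := hfar v hv hRv
          have h2 : 0 ≤ (R / 2) ^ p := by positivity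
          nlinarith
        · have h2 : b v ^ p ≤ (R / 2) ^ p := pow_le_pow_left₀ (hb0 v) (by linarith) p
          have h3 : ρ * (b v ^ p - (R / 2) ^ p) ≤ 0 :=
            mul_nonpos_of_nonneg_of_nonpos hρ0.le (by linarith)
          have := mul_nonneg hbp (hrate0 v)
          linarith
      refine le_trans ?_ (Finset.sum_le_sum h1)
      rw [← Finset.mul_sum, Finset.sum_sub_distrib, Finset.sum_const, nsmul_eq_mul]
      apply mul_le_mul_of_nonneg_left _ hρ0.le
      have h2 : (U.card : ℝ) * (R / 2) ^ p ≤ R ^ p / 2 := by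
        rw [div_pow, mul_div_assoc', div_le_div_iff₀ (by positivity) (by positivity)]
        have := pow_pos hR0 p
        nlinarith
      change Q / 2 ≤ Q - (U.card : ℝ) * (R / 2) ^ p
      linarith
    have hElow : 1 / (2 * R) ≤ E := by
      have h1 : Q ≤ (2 * R) ^ p := by
        calc Q ≤ ∑ v ∈ U, R ^ p := Finset.sum_le_sum fun v hv =>
              pow_le_pow_left₀ (hb0 v) (hmax v hv) p
          _ = U.card * R ^ p := by rw [Finset.sum_const, nsmul_eq_mul]
          _ ≤ 2 ^ p * R ^ p := by
              apply mul_le_mul_of_nonneg_right _ (by positivity)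
              have : (0 : ℝ) ≤ U.card := by positivity
              linarith
          _ = (2 * R) ^ p := by rw [mul_pow]
      have h2 : Real.log Q / p ≤ Real.log (2 * R) := by
        rw [div_le_iff₀ hp0, mul_comm, ← Real.log_pow]
        exact Real.log_le_log hQ h1
      calc 1 / (2 * R) = Real.exp (-Real.log (2 * R)) := by
            rw [Real.exp_neg, Real.exp_log (by positivity), one_div]
        _ ≤ E := Real.exp_le_exp.2 (by linarith)
    have hfin : 8 * R ≤ 8192 * (B * E / p * ((∑ v ∈ U, b v ^ p * rate U c v) / Q)) := by
      exact fin_arith R p Λ B E Q _ hR0 hp0 hΛ0 hΛp hB0 hQ hElow hhalf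
    have : 0 ≤ 512 * Λ * slackr U c := by positivity
    linarith

lemma Phi_nonneg {d : ℕ} {p : ℕ} (hp : 1 ≤ p) (U : Finset (Fin d → ℝ)) (c : Fin d → ℝ) :
    0 ≤ Phi p U c := by
  have hL : 0 ≤ Real.log (1 + (p : ℝ) ^ 2) := Real.log_nonneg (by nlinarith [sq_nonneg (p : ℝ)])
  have h1 : 0 ≤ 2 * (U.card : ℝ) - (∑ v ∈ U, dist2 v c) * Ef p U (fun v => dist2 v c) := by
    have hQ0 : 0 ≤ ∑ v ∈ U, dist2 v c ^ p :=
      Finset.sum_nonneg fun v _ => pow_nonneg (dist2_nonneg v c) p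
    rcases hQ0.eq_or_lt with h | h
    · have hz : ∀ v ∈ U, dist2 v c = 0 := by
        intro v hv
        have := (Finset.sum_eq_zero_iff_of_nonneg
          (fun v _ => pow_nonneg (dist2_nonneg v c) p)).1 h.symm v hv
        by_contra hne
        exact pow_ne_zero p hne this
      rw [Finset.sum_eq_zero hz]
      simp
    · have := soft_drop p hp U ∅ (Finset.empty_subset _) (fun v => dist2 v c)
        (fun v => dist2_nonneg v c) h
      simp only [Finset.sdiff_empty, Finset.card_empty, Finset.sum_empty] at this
      have h2 : 0 ≤ (∑ v ∈ U, dist2 v c) * Ef p U (fun v => dist2 v c) / p *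
          ((∑ v ∈ U, dist2 v c ^ p) / ∑ v ∈ U, dist2 v c ^ p) := by
        have : 0 ≤ ∑ v ∈ U, dist2 v c := Finset.sum_nonneg fun v _ => dist2_nonneg v c
        have : 0 ≤ Ef p U (fun v => dist2 v c) := (Real.exp_pos _).le
        positivity
      have h3 := h2.trans this
      simpa using h3
  unfold Phi
  positivity

lemma Phi_le {d : ℕ} {p : ℕ} (U : Finset (Fin d → ℝ)) (c : Fin d → ℝ) :
    Phi p U c ≤ U.card * (512 * Real.log (1 + (p : ℝ) ^ 2) + 16384) := by
  have h1 : 0 ≤ (∑ v ∈ U, dist2 v c) * Ef p U (fun v => dist2 v c) :=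
    mul_nonneg (Finset.sum_nonneg fun v _ => dist2_nonneg v c) (Real.exp_pos _).le
  unfold Phi
  linarith

/-- choice of the cut at a node -/
lemma exists_cut {d : ℕ} {p : ℕ} (hp : 1 ≤ p) {U : Finset (Fin d → ℝ)} (hU : 1 < U.card)
    (hUp : 2 * U.card ≤ 2 ^ p) (X : Finset (Fin d → ℝ)) (π : (Fin d → ℝ) → (Fin d → ℝ))
    (hπ : ∀ x ∈ X, π x ∈ U) :
    ∃ R : (Fin d → ℝ) → ℝ, (∀ c ∈ U, ∀ w ∈ U, dist2 w c ≤ R c) ∧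
    ∃ t ∈ cuts U, ∑ x ∈ X, (if same t x (π x) then 0 else 2 * R (π x)) ≤
      ∑ x ∈ X, (Phi p U (π x) - Phi p (side U (π x) t) (π x)) * dist2 x (π x) := by
  have hk : ∀ c : Fin d → ℝ, ∃ R : ℝ, c ∈ U → (∀ w ∈ U, dist2 w c ≤ R) ∧
      8 * R ≤ ∑ t ∈ cuts U, wt t * (Phi p U c - Phi p (side U c t) c) := by
    intro c
    by_cases hc : c ∈ U
    · obtain ⟨R, hR⟩ := key hp hU hUp hc
      exact ⟨R, fun _ => hR⟩
    · exact ⟨0, fun h => absurd h hc⟩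
  choose R hR using hk
  refine ⟨R, fun c hc => (hR c hc).1, ?_⟩
  have hR0 : ∀ c ∈ U, 0 ≤ R c := fun c hc => (dist2_nonneg c c).trans ((hR c hc).1 c hc)
  by_contra hcon
  push Not at hcon
  have hlt : ∑ t ∈ cuts U, wt t *
      ∑ x ∈ X, (Phi p U (π x) - Phi p (side U (π x) t) (π x)) * dist2 x (π x) <
      ∑ t ∈ cuts U, wt t * ∑ x ∈ X, (if same t x (π x) then 0 else 2 * R (π x)) :=
    Finset.sum_lt_sum_of_nonempty (cuts_nonempty hU) fun t ht =>
      mul_lt_mul_of_pos_left (hcon t ht) (wt_pos ht)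
  apply absurd hlt
  rw [not_lt]
  have e1 : ∑ t ∈ cuts U, wt t * ∑ x ∈ X, (if same t x (π x) then 0 else 2 * R (π x)) =
      ∑ x ∈ X, 2 * R (π x) * ∑ t ∈ cuts U, wt t * (if same t x (π x) then 0 else 1) := by
    simp only [Finset.mul_sum]
    rw [Finset.sum_comm]
    apply Finset.sum_congr rfl
    intro x _
    apply Finset.sum_congr rfl
    intro t _
    split_ifs <;> ring
  have e2 : ∑ t ∈ cuts U, wt t *
      ∑ x ∈ X, (Phi p U (π x) - Phi p (side U (π x) t) (π x)) * dist2 x (π x) =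
      ∑ x ∈ X, (∑ t ∈ cuts U, wt t * (Phi p U (π x) - Phi p (side U (π x) t) (π x))) *
        dist2 x (π x) := by
    simp only [Finset.mul_sum, Finset.sum_mul]
    rw [Finset.sum_comm]
    apply Finset.sum_congr rfl
    intro x _
    apply Finset.sum_congr rfl
    intro t _
    ring
  rw [e1, e2]
  apply Finset.sum_le_sum
  intro x hx
  have hc := hπ x hx
  have h1 := sep_all hc x
  have h2 := (hR _ hc).2
  have h3 := hR0 _ hc
  calc _ ≤ 2 * R (π x) * (4 * dist2 x (π x)) := mul_le_mul_of_nonneg_left h1 (by linarith)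
    _ = 8 * R (π x) * dist2 x (π x) := by ring
    _ ≤ _ := mul_le_mul_of_nonneg_right h2 (dist2_nonneg _ _)

lemma build {d : ℕ} {p : ℕ} (hp : 1 ≤ p) : ∀ n : ℕ, ∀ U : Finset (Fin d → ℝ), U.card = n →
    U.Nonempty → 2 * U.card ≤ 2 ^ p → ∀ (X : Finset (Fin d → ℝ)) (π : (Fin d → ℝ) → (Fin d → ℝ)),
    (∀ x ∈ X, π x ∈ U) → ∃ T : ThresholdTree d, T.Separates U ∧
      ∃ f : (Fin d → ℝ) → (Fin d → ℝ), (∀ x, f x ∈ U) ∧ (∀ x, ∀ B ∈ T.leaves, x ∈ B → f x ∈ B) ∧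
      ∑ x ∈ X, dist2 x (f x) ≤ ∑ x ∈ X, (2 + Phi p U (π x)) * dist2 x (π x) := by
  intro n
  induction n using Nat.strong_induction_on with
  | _ n ih =>
    intro U hn hne hUp X π hπ
    by_cases hU : 1 < U.card
    · obtain ⟨R, hR, t, ht, hcut⟩ := exists_cut hp hU hUp X π hπ
      set i := t.1 with hi
      set θ := th t with hθ
      have ht' := ht
      simp only [cuts, Finset.mem_sigma] at ht'
      obtain ⟨g1, g2, g3, -⟩ := mem_gaps.1 ht'.2
      obtain ⟨va, hva, eva⟩ := Finset.mem_image.1 g1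
      obtain ⟨vb, hvb, evb⟩ := Finset.mem_image.1 g2
      have hva' : va i ≤ θ := by rw [hi, eva, hθ, th]; linarith
      have hvb' : ¬ vb i ≤ θ := by rw [hi, evb, hθ, th]; linarith
      set Ul := U.filter fun v => v i ≤ θ with hUl
      set Ur := U.filter fun v => ¬ v i ≤ θ with hUr
      have hval : va ∈ Ul := Finset.mem_filter.2 ⟨hva, hva'⟩
      have hvbr : vb ∈ Ur := Finset.mem_filter.2 ⟨hvb, hvb'⟩
      have hl : Ul.card < U.card := Finset.card_lt_card (by
        rw [Finset.ssubset_iff_of_subset (Finset.filter_subset _ _)]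
        exact ⟨vb, hvb, fun h => hvb' (Finset.mem_filter.1 h).2⟩)
      have hr : Ur.card < U.card := Finset.card_lt_card (by
        rw [Finset.ssubset_iff_of_subset (Finset.filter_subset _ _)]
        exact ⟨va, hva, fun h => (Finset.mem_filter.1 h).2 hva'⟩)
      set Xl := X.filter fun x => x i ≤ θ ∧ π x i ≤ θ with hXl
      set Xr := X.filter fun x => ¬ x i ≤ θ ∧ ¬ π x i ≤ θ with hXr
      obtain ⟨Tl, hTl, fl, hfl, hfl', hcl⟩ := ih _ (by omega) Ul rfl ⟨va, hval⟩ (by omega) Xl π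
        (fun x hx => by
          have := Finset.mem_filter.1 hx
          exact Finset.mem_filter.2 ⟨hπ x this.1, this.2.2⟩)
      obtain ⟨Tr, hTr, fr, hfr, hfr', hcr⟩ := ih _ (by omega) Ur rfl ⟨vb, hvbr⟩ (by omega) Xr π
        (fun x hx => by
          have := Finset.mem_filter.1 hx
          exact Finset.mem_filter.2 ⟨hπ x this.1, this.2.2⟩)
      let f : (Fin d → ℝ) → (Fin d → ℝ) := fun x => if x i ≤ θ then fl x else fr x
      have hfU : ∀ x, f x ∈ U := by
        intro x
        by_cases h : x i ≤ θ
        · simp only [f, if_pos h]; exact (Finset.mem_filter.1 (hfl x)).1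
        · simp only [f, if_neg h]; exact (Finset.mem_filter.1 (hfr x)).1
      refine ⟨ThresholdTree.node i θ Tl Tr, ?_, f, hfU, ?_, ?_⟩
      · intro B hB
        simp only [ThresholdTree.leaves, List.mem_append, List.mem_map] at hB
        rcases hB with ⟨B', hB', rfl⟩ | ⟨B', hB', rfl⟩
        · obtain ⟨u, ⟨hu1, hu2⟩, huniq⟩ := hTl B' hB'
          have := Finset.mem_filter.1 hu1
          refine ⟨u, ⟨this.1, hu2, this.2⟩, ?_⟩
          rintro v ⟨hv1, hv2, hv3⟩
          exact huniq v ⟨Finset.mem_filter.2 ⟨hv1, hv3⟩, hv2⟩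
        · obtain ⟨u, ⟨hu1, hu2⟩, huniq⟩ := hTr B' hB'
          have := Finset.mem_filter.1 hu1
          refine ⟨u, ⟨this.1, hu2, not_le.1 this.2⟩, ?_⟩
          rintro v ⟨hv1, hv2, hv3⟩
          exact huniq v ⟨Finset.mem_filter.2 ⟨hv1, not_le.2 hv3⟩, hv2⟩
      · intro x B hB hxB
        simp only [ThresholdTree.leaves, List.mem_append, List.mem_map] at hB
        rcases hB with ⟨B', hB', rfl⟩ | ⟨B', hB', rfl⟩
        · have hx : x i ≤ θ := hxB.2
          simp only [f, if_pos hx]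
          exact ⟨hfl' x B' hB' hxB.1, (Finset.mem_filter.1 (hfl x)).2⟩
        · have hx : ¬ x i ≤ θ := not_le.2 hxB.2
          simp only [f, if_neg hx]
          exact ⟨hfr' x B' hB' hxB.1, not_le.1 (Finset.mem_filter.1 (hfr x)).2⟩
      · -- the cost
        rw [hXl, Finset.sum_filter, Finset.sum_filter] at hcl
        rw [hXr, Finset.sum_filter, Finset.sum_filter] at hcr
        have hpt : ∀ x ∈ X, dist2 x (f x) +
            (if x i ≤ θ ∧ π x i ≤ θ then (2 + Phi p Ul (π x)) * dist2 x (π x) else 0) +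
            (if ¬ x i ≤ θ ∧ ¬ π x i ≤ θ then (2 + Phi p Ur (π x)) * dist2 x (π x) else 0) +
            (Phi p U (π x) - Phi p (side U (π x) t) (π x)) * dist2 x (π x) ≤
            (if x i ≤ θ ∧ π x i ≤ θ then dist2 x (fl x) else 0) +
            (if ¬ x i ≤ θ ∧ ¬ π x i ≤ θ then dist2 x (fr x) else 0) +
            (if same t x (π x) then 0 else 2 * R (π x)) +
            (2 + Phi p U (π x)) * dist2 x (π x) := by
          intro x hx
          have hsep : ¬ same t x (π x) → dist2 x (f x) +
            (Phi p U (π x) - Phi p (side U (π x) t) (π x)) * dist2 x (π x) ≤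
              2 * R (π x) + (2 + Phi p U (π x)) * dist2 x (π x) := by
            intro _
            have k1 := dist2_tri x (π x) (f x)
            have k2 := hR _ (hπ x hx) _ (hfU x)
            have k3 : 0 ≤ Phi p (side U (π x) t) (π x) * dist2 x (π x) :=
              mul_nonneg (Phi_nonneg hp _ _) (dist2_nonneg _ _)
            linarith
          by_cases h1 : x i ≤ θ <;> by_cases h2 : π x i ≤ θ
          · have hs : same t x (π x) := ⟨fun _ => h2, fun _ => h1⟩
            have hside : side U (π x) t = Ul := by
              ext v; simp only [side, hUl, Finset.mem_filter, same, ← hi, ← hθ, h2, iff_true]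
            simp only [h1, h2, hs, hside, f, if_true, not_true, and_self, if_false]
            linarith
          · have hs : ¬ same t x (π x) := fun h => h2 (h.1 h1)
            have := hsep hs
            simp only [h1, h2, hs, if_false, not_true, and_false, false_and]
            linarith
          · have hs : ¬ same t x (π x) := fun h => h1 (h.2 h2)
            have := hsep hs
            simp only [h1, h2, hs, if_false, not_true, and_false, false_and]
            linarith
          · have hs : same t x (π x) := ⟨fun h => absurd h h1, fun h => absurd h h2⟩
            have hside : side U (π x) t = Ur := by
              ext v; simp only [side, hUr, Finset.mem_filter, same, ← hi, ← hθ, h2, iff_false]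
            simp only [h1, h2, hs, hside, f, if_true, not_false_eq_true, and_self, if_false]
            linarith
        have hsum := Finset.sum_le_sum hpt
        simp only [Finset.sum_add_distrib] at hsum
        linarith
    · have h1 : U.card = 1 := by
        have := Finset.card_pos.2 hne
        omega
      obtain ⟨c, rfl⟩ := Finset.card_eq_one.1 h1
      refine ⟨ThresholdTree.leaf, ?_, fun _ => c, fun _ => by simp, ?_, ?_⟩
      · intro B hB
        simp only [ThresholdTree.leaves, List.mem_singleton] at hB
        subst hB
        exact ⟨c, by simp, fun y hy => by simpa using hy.1⟩
      · intro x B hB _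
        simp only [ThresholdTree.leaves, List.mem_singleton] at hB
        subst hB
        trivial
      · apply Finset.sum_le_sum
        intro x hx
        have hpx : π x = c := by simpa using hπ x hx
        rw [hpx]
        have k1 := Phi_nonneg hp {c} c
        have k2 := dist2_nonneg x c
        nlinarith

lemma final_arith {k : ℕ} (hk : 3 ≤ k) :
    ∃ p : ℕ, 1 ≤ p ∧ 2 * k ≤ 2 ^ p ∧ Real.log (1 + (p : ℝ) ^ 2) ≤
      Real.log 17 + 2 * Real.log (Real.log k) := by
  refine ⟨Nat.clog 2 (2 * k), ?_, Nat.le_pow_clog (by norm_num) _, ?_⟩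
  · exact Nat.clog_pos (by norm_num) (by omega)
  set p := Nat.clog 2 (2 * k) with hp
  have hp1 : 1 ≤ p := Nat.clog_pos (by norm_num) (by omega)
  have h1 : 2 ^ (p - 1) < 2 * k := Nat.pow_pred_clog_lt_self (by norm_num) (by omega)
  have hk3 : (3 : ℝ) ≤ k := by exact_mod_cast hk
  have hx : 1 ≤ Real.log k := by
    rw [Real.le_log_iff_exp_le (by linarith)]
    linarith [Real.exp_one_lt_d9]
  have h2 : ((2 : ℝ)) ^ (p - 1) ≤ 2 * k := by exact_mod_cast h1.le
  have h3 := Real.log_le_log (by positivity) h2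
  rw [Real.log_pow, Real.log_mul (by norm_num) (by positivity), Nat.cast_sub hp1] at h3
  push_cast at h3
  have h4 : (p : ℝ) ≤ 4 * Real.log k := by
    have := Real.log_two_gt_d9
    have := Real.log_two_lt_d9
    nlinarith
  have h5 : 1 + (p : ℝ) ^ 2 ≤ 17 * Real.log k ^ 2 := by
    have : (0 : ℝ) ≤ p := by positivity
    nlinarith
  calc _ ≤ Real.log (17 * Real.log k ^ 2) := Real.log_le_log (by positivity) h5
    _ = _ := by
      rw [Real.log_mul (by norm_num) (by positivity), Real.log_pow]
      push_cast; rfl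

/-- the price of explainability for `k`-means is `O(k ln ln k)`:
there is a universal constant `C > 0` such that for every reference clustering
there is a threshold tree `T` separating the centers whose induced assignment
`π_T` has `cost₂(T) ≤ C · k · ln(ln k) · cost₂(π, 𝒰)`. -/
theorem stmt2 :
    ∃ C : ℝ, 0 < C ∧
      ∀ (d k : ℕ), 1 ≤ d → 3 ≤ k →
        ∀ (𝒳 𝒰 : Finset (Fin d → ℝ)), 𝒰.card = k →
          ∀ π : (Fin d → ℝ) → (Fin d → ℝ), (∀ x ∈ 𝒳, π x ∈ 𝒰) →
            ∃ T : ThresholdTree d, T.Separates 𝒰 ∧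
              ∃ πT : (Fin d → ℝ) → (Fin d → ℝ),
                (∀ x ∈ 𝒳, πT x ∈ 𝒰) ∧
                (∀ x ∈ 𝒳, ∀ B ∈ T.leaves, x ∈ B → πT x ∈ B) ∧
                cost2 𝒳 πT ≤
                  C * (k : ℝ) * Real.log (Real.log (k : ℝ)) * cost2 𝒳 π := by
  have hy0 : 0 < Real.log (Real.log 3) := by
    apply Real.log_pos
    rw [Real.lt_log_iff_exp_lt (by norm_num)]
    linarith [Real.exp_one_lt_d9]
  set y0 := Real.log (Real.log 3) with hy0def
  have hl17 : 0 ≤ Real.log 17 := Real.log_nonneg (by norm_num)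
  refine ⟨1024 + (512 * Real.log 17 + 16386) / y0, by positivity, ?_⟩
  intro d k _ hk 𝒳 𝒰 hcard π hπ
  obtain ⟨p, hp, hkp, hlog⟩ := final_arith hk
  obtain ⟨T, hT, f, hf, hf', hcost⟩ := build hp k 𝒰 hcard
    (Finset.card_pos.1 (by omega)) (by rw [hcard]; exact hkp) 𝒳 π hπ
  refine ⟨T, hT, f, fun x _ => hf x, fun x _ => hf' x, ?_⟩
  have hk3 : (3 : ℝ) ≤ k := by exact_mod_cast hk
  have hl3 : 0 < Real.log 3 := Real.log_pos (by norm_num)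
  have hy : y0 ≤ Real.log (Real.log k) :=
    Real.log_le_log hl3 (Real.log_le_log (by norm_num) hk3)
  set y := Real.log (Real.log (k : ℝ)) with hydef
  have hbound : ∀ x ∈ 𝒳, (2 + Phi p 𝒰 (π x)) * dist2 x (π x) ≤
      (1024 + (512 * Real.log 17 + 16386) / y0) * (k : ℝ) * y * dist2 x (π x) := by
    intro x _
    apply mul_le_mul_of_nonneg_right _ (dist2_nonneg _ _)
    have h1 := Phi_le (p := p) 𝒰 (π x)
    rw [hcard] at h1
    have h2 : (512 * Real.log 17 + 16386) ≤ (512 * Real.log 17 + 16386) / y0 * y := by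
      rw [div_mul_eq_mul_div, le_div_iff₀ hy0]
      exact mul_le_mul_of_nonneg_left hy (by positivity)
    have h3 : (k : ℝ) * (512 * Real.log (1 + (p : ℝ) ^ 2) + 16384) ≤
        k * (512 * (Real.log 17 + 2 * y) + 16384) := by gcongr
    have h4 : (k : ℝ) * (512 * Real.log 17 + 16386) ≤
        k * ((512 * Real.log 17 + 16386) / y0 * y) := by gcongr
    nlinarith
  calc cost2 𝒳 f = ∑ x ∈ 𝒳, dist2 x (f x) := rfl
    _ ≤ _ := hcost
    _ ≤ _ := Finset.sum_le_sum hbound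
    _ = _ := by rw [← Finset.mul_sum]; rfl
end

section
/- There exist a constant C > 0 and k₀ ∈ ℕ such that for every k ≥ k₀ there exist s ∈ ℕ with 3 ≤ s ≤ k and subsets S₁,…,S_k of {1,…,k}, each of size exactly s, such that every hitting set H of the family (i.e., every H ⊆ {1,…,k} with H ∩ S_i ≠ ∅ for all i ∈ {1,…,k}) satisfies |H| · (s − 2) ≥ k · (ln k − C · ln ln k). -/
lemma aux_comb (k s h : ℕ) (hh : h ≤ k)
    (hlt : k.choose h * (k.choose s - (k - h).choose s) ^ k < k.choose s ^ k) :
    ∃ Sets : Fin k → Finset (Fin k), (∀ i, (Sets i).card = s) ∧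
      ∀ H : Finset (Fin k), (∀ i, (H ∩ Sets i).Nonempty) → h < H.card := by
  classical
  let A : Finset (Fin k → Finset (Fin k)) :=
    Fintype.piFinset (fun _ => Finset.powersetCard s Finset.univ)
  let Bd : Finset (Fin k) → Finset (Fin k → Finset (Fin k)) := fun H =>
    Fintype.piFinset (fun _ => Finset.powersetCard s Finset.univ \ Finset.powersetCard s Hᶜ)
  let B := (Finset.powersetCard h (Finset.univ : Finset (Fin k))).biUnion Bd
  have hA : A.card = k.choose s ^ k := by
    simp [A, Fintype.card_piFinset]
  have hB : B.card ≤ k.choose h * (k.choose s - (k - h).choose s) ^ k := by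
    have := Finset.card_biUnion_le_card_mul (Finset.powersetCard h (Finset.univ : Finset (Fin k)))
      Bd ((k.choose s - (k - h).choose s) ^ k) (by
        intro H hH
        rw [Finset.mem_powersetCard] at hH
        have h1 : (Finset.powersetCard s (Finset.univ : Finset (Fin k)) \
            Finset.powersetCard s Hᶜ).card = k.choose s - (k - h).choose s := by
          rw [Finset.card_sdiff_of_subset (Finset.powersetCard_mono (Finset.subset_univ _))]
          simp [Finset.card_compl, hH.2]
        simp only [Bd, Fintype.card_piFinset, h1]
        simp)
    simpa using this
  obtain ⟨F, hFA, hFB⟩ := Finset.exists_mem_notMem_of_card_lt_card (s := B) (t := A) (by omega)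
  have hF : ∀ i, (F i).card = s := by
    intro i
    have := Fintype.mem_piFinset.1 hFA i
    exact (Finset.mem_powersetCard.1 this).2
  refine ⟨F, hF, fun H hH => ?_⟩
  by_contra hcon
  obtain ⟨H', hsub, hc⟩ := Finset.exists_superset_card_eq (s := H) (n := h) (by omega) (by simpa using hh)
  apply hFB
  refine Finset.mem_biUnion.2 ⟨H', Finset.mem_powersetCard.2 ⟨Finset.subset_univ _, hc⟩, ?_⟩
  refine Fintype.mem_piFinset.2 fun i => ?_
  rw [Finset.mem_sdiff]
  refine ⟨Fintype.mem_piFinset.1 hFA i, fun hi => ?_⟩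
  obtain ⟨x, hx⟩ := hH i
  rw [Finset.mem_inter] at hx
  have := (Finset.mem_powersetCard.1 hi).1 hx.2
  exact (Finset.mem_compl.1 this) (hsub hx.1)

lemma aux_choose (s M h : ℕ) (hM : s < M) :
    ((M + h).choose s : ℝ) ≤ Real.exp (h * (s / ((M : ℝ) - s))) * (M.choose s : ℝ) := by
  have hMs : (0 : ℝ) < (M : ℝ) - s := by
    have : (s : ℝ) < M := by exact_mod_cast hM
    linarith
  induction h with
  | zero => simp
  | succ h ih =>
    have h1 : ((M + h + 1).choose s : ℝ) * ((M : ℝ) + h + 1 - s) = ((M + h).choose s : ℝ) * (M + h + 1) := by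
      have := Nat.choose_mul_succ_eq (M + h) s
      have h2 : ((M + h + 1 - s : ℕ) : ℝ) = (M : ℝ) + h + 1 - s := by
        rw [Nat.cast_sub (by omega)]; push_cast; ring
      rw [← h2]
      exact_mod_cast this.symm
    have hpos : (0 : ℝ) < (M : ℝ) + h + 1 - s := by linarith [(Nat.cast_nonneg h : (0:ℝ) ≤ h)]
    have h3 : ((M : ℝ) + h + 1) ≤ ((M : ℝ) + h + 1 - s) * Real.exp (s / ((M : ℝ) - s)) := by
      have e1 := Real.add_one_le_exp ((s : ℝ) / ((M : ℝ) - s))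
      have e2 : (s : ℝ) ≤ ((M : ℝ) + h + 1 - s) * ((s : ℝ) / ((M : ℝ) - s)) := by
        rw [← mul_div_assoc, le_div_iff₀ hMs]
        nlinarith [(Nat.cast_nonneg h : (0:ℝ) ≤ h), (Nat.cast_nonneg s : (0:ℝ) ≤ s)]
      nlinarith
    have h4 : ((M + h + 1).choose s : ℝ) ≤ Real.exp (s / ((M : ℝ) - s)) * ((M + h).choose s : ℝ) := by
      refine le_of_mul_le_mul_right ?_ hpos
      rw [h1]
      nlinarith [mul_le_mul_of_nonneg_left h3 (Nat.cast_nonneg ((M + h).choose s) : (0:ℝ) ≤ _)]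
    have h5 : Real.exp (((h + 1 : ℕ) : ℝ) * (s / ((M : ℝ) - s)))
        = Real.exp (s / ((M : ℝ) - s)) * Real.exp (h * (s / ((M : ℝ) - s))) := by
      rw [← Real.exp_add]; congr 1; push_cast; ring
    rw [h5, mul_assoc]
    exact h4.trans (mul_le_mul_of_nonneg_left ih (Real.exp_pos _).le)

/-- the probabilistic inequality -/
lemma aux_prob (k s h : ℕ) (E : ℝ) (hk : 0 < k) (hs : s + h < k)
    (hE : (h : ℝ) * (s / ((k : ℝ) - h - s)) ≤ E)
    (hlt : h * Real.log k < k * Real.exp (-E)) :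
    k.choose h * (k.choose s - (k - h).choose s) ^ k < k.choose s ^ k := by
  have hk' : (0 : ℝ) < k := by exact_mod_cast hk
  have hc := aux_choose s (k - h) h (by omega)
  rw [Nat.sub_add_cancel (by omega), Nat.cast_sub (by omega)] at hc
  set N : ℝ := (k.choose s : ℝ) with hN
  have hNpos : 0 < N := by
    rw [hN]; exact_mod_cast Nat.choose_pos (by omega)
  have hle : (k - h).choose s ≤ k.choose s := Nat.choose_le_choose s (by omega)
  set q : ℝ := ((k - h).choose s : ℝ) with hq
  have hq0 : 0 ≤ q := Nat.cast_nonneg _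
  have hqN : q ≤ N := by rw [hq, hN]; exact_mod_cast hle
  have hc2 : N * Real.exp (-E) ≤ q := by
    have : N ≤ Real.exp E * q := hc.trans (mul_le_mul_of_nonneg_right (Real.exp_le_exp.2 hE) hq0)
    rw [Real.exp_neg, ← div_eq_mul_inv, div_le_iff₀ (Real.exp_pos _)]
    linarith
  have h1 : N - q ≤ N * Real.exp (-Real.exp (-E)) := by
    have := Real.add_one_le_exp (-Real.exp (-E))
    nlinarith
  have h2 : (N - q) ^ k ≤ N ^ k * Real.exp (-(k * Real.exp (-E))) := by
    calc (N - q) ^ k ≤ (N * Real.exp (-Real.exp (-E))) ^ k :=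
          pow_le_pow_left₀ (by linarith) h1 k
      _ = _ := by
          rw [mul_pow, ← Real.exp_nat_mul]; congr 2; ring
  have h3 : (k.choose h : ℝ) ≤ Real.exp (h * Real.log k) := by
    have : (k.choose h : ℝ) ≤ (k : ℝ) ^ h := by exact_mod_cast Nat.choose_le_pow k h
    rwa [Real.exp_nat_mul, Real.exp_log hk']
  have h4 : (k.choose h : ℝ) * (N - q) ^ k < N ^ k := by
    calc (k.choose h : ℝ) * (N - q) ^ k
        ≤ Real.exp (h * Real.log k) * (N ^ k * Real.exp (-(k * Real.exp (-E)))) :=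
          mul_le_mul h3 h2 (pow_nonneg (by linarith) _) (Real.exp_pos _).le
      _ = N ^ k * Real.exp (h * Real.log k - k * Real.exp (-E)) := by
          rw [sub_eq_add_neg, Real.exp_add]; ring
      _ < N ^ k * 1 := by
          refine mul_lt_mul_of_pos_left ?_ (pow_pos hNpos k)
          rw [Real.exp_lt_one_iff]; linarith
      _ = N ^ k := mul_one _
  have h5 : ((k.choose h * (k.choose s - (k - h).choose s) ^ k : ℕ) : ℝ) < ((k.choose s ^ k : ℕ) : ℝ) := by
    push_cast [Nat.cast_sub hle]
    exact h4
  exact_mod_cast h5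

/-- the real-number estimates -/
lemma aux_num (k L B s h : ℝ) (hL : 200 ≤ L) (hk : 100 * L ^ 4 ≤ k) (hB0 : 0 ≤ B) (hBL : B ≤ L)
    (hs1 : s ≤ k / L ^ 2) (hs2 : k / L ^ 2 < s + 1) (hh0 : 0 ≤ h) (hh : h * (s - 2) ≤ k * B) :
    100 ≤ s ∧ h + s ≤ k / L ∧ h ≤ 2 * L ^ 3 ∧ h * (s / (k - h - s)) ≤ B + 4 := by
  have hL0 : 0 < L := by linarith
  have hk0 : 0 < k := lt_of_lt_of_le (by positivity) hk
  set t := k / L ^ 2 with ht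
  have hkt : k = t * L ^ 2 := by rw [ht]; field_simp
  have ht1 : 100 * L ^ 2 ≤ t := by
    rw [ht, le_div_iff₀ (by positivity)]; nlinarith
  have ht0 : 20000 * L ≤ t := by nlinarith
  have hs100 : 100 ≤ s := by linarith
  have hs3 : t / 2 ≤ s - 2 := by linarith
  have hh3 : h ≤ 2 * L ^ 3 := by
    have a : h * (t / 2) ≤ k * L := by
      calc h * (t/2) ≤ h * (s - 2) := mul_le_mul_of_nonneg_left hs3 hh0
        _ ≤ k * B := hh
        _ ≤ k * L := mul_le_mul_of_nonneg_left hBL hk0.le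
    have : h * (t / 2) ≤ 2 * L ^ 3 * (t / 2) := by
      rw [hkt] at a; nlinarith
    exact le_of_mul_le_mul_right this (by linarith)
  have hkL : k / L = t * L := by rw [hkt]; field_simp
  have hsum : h + s ≤ k / L := by
    rw [hkL]
    have : 2 * L ^ 3 ≤ t * L / 2 := by nlinarith
    nlinarith
  refine ⟨hs100, hsum, hh3, ?_⟩
  have hden : k * (1 - 1 / L) ≤ k - h - s := by
    have : k * (1 - 1 / L) = k - k / L := by ring
    linarith
  have hinv : 1 / L ≤ 1 / 200 := one_div_le_one_div_of_le (by norm_num) hL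
  set u := 1 / L with hu
  have hu0 : 0 < u := by positivity
  have huL : u * L = 1 := by rw [hu]; field_simp
  have hdpos : 0 < k - h - s := lt_of_lt_of_le (by apply mul_pos hk0; linarith) hden
  rw [← mul_div_assoc, div_le_iff₀ hdpos]
  have hsu : s ≤ (1 + u) * (s - 2) := by
    have : 2 * (1 + u) ≤ u * s := by
      have : u * (20000 * L - 1) ≤ u * s := mul_le_mul_of_nonneg_left (by linarith) hu0.le
      nlinarith
    linarith
  have hBu : B * (1 + u) ≤ (B + 4) * (1 - u) := by
    have : B * u ≤ 1 := by nlinarith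
    nlinarith
  calc h * s ≤ h * ((1 + u) * (s - 2)) := mul_le_mul_of_nonneg_left hsu hh0
    _ = (1 + u) * (h * (s - 2)) := by ring
    _ ≤ (1 + u) * (k * B) := mul_le_mul_of_nonneg_left hh (by linarith)
    _ = k * (B * (1 + u)) := by ring
    _ ≤ k * ((B + 4) * (1 - u)) := mul_le_mul_of_nonneg_left hBu hk0.le
    _ = (B + 4) * (k * (1 - u)) := by ring
    _ ≤ (B + 4) * (k - h - s) := mul_le_mul_of_nonneg_left hden (by linarith)

open Filter in
lemma aux_large : ∃ k₀ : ℕ, ∀ k : ℕ, k₀ ≤ k → 200 ≤ Real.log k ∧ 100 * Real.log k ^ 4 ≤ k ∧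
    6 * Real.log (Real.log k) ≤ Real.log k := by
  have hT : Tendsto (fun k : ℕ => Real.log (k : ℝ)) atTop atTop :=
    Real.tendsto_log_atTop.comp tendsto_natCast_atTop_atTop
  have e1 := hT.eventually_ge_atTop 200
  have e2 : ∀ᶠ x : ℝ in atTop, 100 * Real.log x ^ 4 ≤ x := by
    have := (Real.isLittleO_pow_log_id_atTop (n := 4)).bound (show (0:ℝ) < 1 / 100 by norm_num)
    filter_upwards [this, eventually_ge_atTop 1] with x hx h1
    have h0 := Real.log_nonneg h1
    simp only [id, Real.norm_eq_abs] at hx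
    rw [abs_of_nonneg (by positivity), abs_of_nonneg (by linarith)] at hx
    linarith
  have e3 : ∀ᶠ x : ℝ in atTop, 6 * Real.log x ≤ x := by
    have := Real.isLittleO_log_id_atTop.bound (show (0:ℝ) < 1 / 6 by norm_num)
    filter_upwards [this, eventually_ge_atTop 1] with x hx h1
    have h0 := Real.log_nonneg h1
    simp only [id, Real.norm_eq_abs] at hx
    rw [abs_of_nonneg h0, abs_of_nonneg (by linarith)] at hx
    linarith
  have := (e1.and ((tendsto_natCast_atTop_atTop.eventually e2).and (hT.eventually e3)))
  exact eventually_atTop.1 this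


/-- there exist `s`-uniform set systems with `k` sets on a ground set
of size `k` in which every hitting set `H` satisfies
`|H| · (s − 2) ≥ k · (ln k − C · ln ln k)`. -/
theorem stmt16 :
    ∃ C : ℝ, 0 < C ∧ ∃ k₀ : ℕ, ∀ k : ℕ, k₀ ≤ k →
      ∃ s : ℕ, 3 ≤ s ∧ s ≤ k ∧
        ∃ Sets : Fin k → Finset (Fin k),
          (∀ i, (Sets i).card = s) ∧
          ∀ H : Finset (Fin k), (∀ i, (H ∩ Sets i).Nonempty) →
            (k : ℝ) * (Real.log k - C * Real.log (Real.log k)) ≤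
              (H.card : ℝ) * ((s : ℝ) - 2) := by
  obtain ⟨k₀, hk₀⟩ := aux_large
  refine ⟨6, by norm_num, k₀, fun k hk => ?_⟩
  obtain ⟨hL, hk4, hLL⟩ := hk₀ k hk
  set L := Real.log k with hLdef
  have hL0 : 0 < L := by linarith
  set B := L - 6 * Real.log L with hB
  have hB0 : 0 ≤ B := by linarith
  have hBL : B ≤ L := by linarith [Real.log_nonneg (show 1 ≤ L by linarith)]
  have hkR : (0 : ℝ) < k := lt_of_lt_of_le (by positivity) hk4
  have hkN : 0 < k := by exact_mod_cast hkR
  set s := ⌊(k : ℝ) / L ^ 2⌋₊ with hs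
  have hs1 : (s : ℝ) ≤ k / L ^ 2 := Nat.floor_le (by positivity)
  have hs2 : (k : ℝ) / L ^ 2 < s + 1 := Nat.lt_floor_add_one _
  have hs100 := (aux_num k L B s 0 hL hk4 hB0 hBL hs1 hs2 le_rfl (by
    rw [zero_mul]; positivity)).1
  have hsp : (0 : ℝ) < (s : ℝ) - 2 := by linarith
  set h := ⌊(k : ℝ) * B / ((s : ℝ) - 2)⌋₊ with hh
  have hh1 : (h : ℝ) * (s - 2) ≤ k * B := by
    rw [← le_div_iff₀ hsp]; exact Nat.floor_le (by positivity)
  obtain ⟨-, hsum, hh3, hE⟩ := aux_num k L B s h hL hk4 hB0 hBL hs1 hs2 (Nat.cast_nonneg h) hh1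
  have hsumlt : (s : ℝ) + h < k := by
    have : (k : ℝ) / L < k := div_lt_self hkR (by linarith)
    linarith
  have hsl : s + h < k := by exact_mod_cast hsumlt
  have hexp : (k : ℝ) * Real.exp (-(B + 4)) = L ^ 6 * Real.exp (-4) := by
    have : -(B + 4) = -L + (6 : ℕ) * Real.log L + -4 := by rw [hB]; push_cast; ring
    rw [this, Real.exp_add, Real.exp_add, Real.exp_nat_mul, Real.exp_log hL0, Real.exp_neg,
      hLdef, Real.exp_log hkR]
    field_simp
  have he4 : (1 : ℝ) / 81 ≤ Real.exp (-4) := by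
    have h3 : Real.exp 4 ≤ 81 := by
      have : Real.exp 4 = Real.exp 1 ^ 4 := by rw [← Real.exp_nat_mul]; norm_num
      rw [this]
      calc Real.exp 1 ^ 4 ≤ 3 ^ 4 := pow_le_pow_left₀ (Real.exp_pos _).le (by
            linarith [Real.exp_one_lt_d9]) 4
        _ = 81 := by norm_num
    rw [Real.exp_neg, ← one_div]
    exact one_div_le_one_div_of_le (Real.exp_pos _) h3
  have hlt : (h : ℝ) * Real.log k < k * Real.exp (-(B + 4)) := by
    rw [hexp, ← hLdef]
    have a1 : (h : ℝ) * L ≤ 2 * L ^ 4 := by nlinarith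
    have a2 : L ^ 6 * (1 / 81) ≤ L ^ 6 * Real.exp (-4) :=
      mul_le_mul_of_nonneg_left he4 (by positivity)
    have a3 : 0 < L ^ 4 := by positivity
    have a4 : 2 * L ^ 4 < L ^ 6 * (1 / 81) := by
      have : L ^ 6 = L ^ 4 * L ^ 2 := by ring
      rw [this]
      have a5 : 200 < L ^ 2 := by nlinarith
      linarith [mul_lt_mul_of_pos_left a5 a3]
    linarith
  obtain ⟨F, hF, hH⟩ := aux_comb k s h (by omega) (aux_prob k s h (B + 4) hkN hsl hE hlt)
  refine ⟨s, ?_, by omega, F, hF, fun H hHit => ?_⟩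
  · have : (3 : ℝ) ≤ s := by linarith
    exact_mod_cast this
  · have h1 := hH H hHit
    have h2 : (k : ℝ) * B / ((s : ℝ) - 2) < H.card := (Nat.floor_lt' (by omega)).1 h1
    rw [div_lt_iff₀ hsp] at h2
    exact h2.le
end

section
/- Let d, k ≥ 1, s ≥ 2, and let S₁,…,S_k be pairwise distinct nonempty subsets of {1,…,d}, each of size exactly s; let h be the minimum size of a hitting set of this family. For an integer M ≥ 1, let 𝒳_M ⊂ ℝ^d be the multiset consisting of the d standard basis vectors e₁,…,e_d together with M copies of μ₀ := 0 and, for each i ∈ {1,…,k}, M copies of μ_i := Σ_{j∈S_i} e_j. Let OPT_M denote the minimum, over all threshold trees T with at most k+1 leaves, of Σ over leaves ℓ of T of inf_{μ∈ℝ^d} Σ_{x∈𝒳_M∩B_ℓ} ‖x − μ‖₁. Then: (a) OPT_M ≤ d + h·(s−2) for every M ≥ 1; and (b) for every ε > 0 there exists M₀ such that OPT_M ≥ d + h·(s−2−ε) for every M ≥ M₀. -/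
/-- The optimal 1-median cost of the points of the multiset `𝒳` lying in the
region `B`: `inf_{μ∈ℝ^d} Σ_{x∈𝒳∩B} ‖x − μ‖₁`. -/
noncomputable def leafMedCost {d : ℕ} (𝒳 : Multiset (Fin d → ℝ))
    (B : Set (Fin d → ℝ)) : ℝ :=
  ⨅ μ : Fin d → ℝ,
    (letI := Classical.decPred (fun x : Fin d → ℝ => x ∈ B)
     ((𝒳.filter (fun x => x ∈ B)).map (fun x => ∑ i, |x i - μ i|)).sum)

/-- The explainable medians cost of a threshold tree `T` on `𝒳`: the sum over
leaves of the optimal 1-median cost of the points in the leaf's region. -/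
noncomputable def explCost {d : ℕ} (T : ThresholdTree d)
    (𝒳 : Multiset (Fin d → ℝ)) : ℝ :=
  (T.leaves.map (leafMedCost 𝒳)).sum

/-- The 0/1 indicator vector of a subset `S` of the coordinates. -/
def ind {d : ℕ} (S : Finset (Fin d)) : Fin d → ℝ := fun j => if j ∈ S then 1 else 0

/-- The data multiset `𝒳_M`: the `d` standard basis vectors, together with `M`
copies of `μ₀ := 0` and `M` copies of `μ_i := Σ_{j ∈ Sᵢ} e_j` for each `i`. -/
def dataSet (d k M : ℕ) (Sets : Fin k → Finset (Fin d)) : Multiset (Fin d → ℝ) :=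
  (Finset.univ.val.map (fun j : Fin d => ind {j})) +
    M • ((fun _ => (0 : ℝ)) ::ₘ Finset.univ.val.map (fun i : Fin k => ind (Sets i)))

/-- `OPT_M`: the minimum, over threshold trees with at most `k+1` leaves, of the
explainable medians cost on `𝒳_M`. -/
noncomputable def OPTM (d k M : ℕ) (Sets : Fin k → Finset (Fin d)) : ℝ :=
  sInf {c : ℝ | ∃ T : ThresholdTree d,
    T.leaves.length ≤ k + 1 ∧ c = explCost T (dataSet d k M Sets)}

open Classical in
/-- The leaf region containing `x`. -/
noncomputable def ThresholdTree.loc {d : ℕ} : ThresholdTree d → (Fin d → ℝ) → Set (Fin d → ℝ)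
  | .leaf, _ => Set.univ
  | .node i θ l r, x =>
      if x i ≤ θ then l.loc x ∩ {x | x i ≤ θ} else r.loc x ∩ {x | θ < x i}

open ThresholdTree

lemma loc_mem_leaves {d : ℕ} (T : ThresholdTree d) (x : Fin d → ℝ) : T.loc x ∈ T.leaves := by
  induction T with
  | leaf => simp [loc, leaves]
  | node i θ l r hl hr =>
    simp only [loc, leaves, List.mem_append, List.mem_map]
    split_ifs with h
    · exact Or.inl ⟨_, hl, rfl⟩
    · exact Or.inr ⟨_, hr, rfl⟩

lemma mem_loc {d : ℕ} (T : ThresholdTree d) (x : Fin d → ℝ) : x ∈ T.loc x := by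
  induction T with
  | leaf => simp [loc]
  | node i θ l r hl hr =>
    simp only [loc]
    split_ifs with h
    · exact ⟨hl, h⟩
    · exact ⟨hr, not_le.mp h⟩

lemma loc_eq {d : ℕ} (T : ThresholdTree d) (x y : Fin d → ℝ) (hy : y ∈ T.loc x) :
    T.loc y = T.loc x := by
  induction T with
  | leaf => simp [loc]
  | node i θ l r hl hr =>
    simp only [loc] at hy ⊢
    by_cases h : x i ≤ θ
    · rw [if_pos h] at hy ⊢
      have h2 : y i ≤ θ := hy.2
      rw [if_pos h2, hl hy.1]
    · rw [if_neg h] at hy ⊢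
      have h2 : ¬ y i ≤ θ := not_le.mpr hy.2
      rw [if_neg h2, hr hy.1]

open Classical in
lemma sum_loc {d : ℕ} (T : ThresholdTree d) (x : Fin d → ℝ) {A : Type*} [AddCommMonoid A]
    (φ : Set (Fin d → ℝ) → A) :
    (T.leaves.map (fun B => if x ∈ B then φ B else 0)).sum = φ (T.loc x) := by
  induction T generalizing φ with
  | leaf => simp [loc, leaves]
  | node i θ l r hl hr =>
    simp only [loc, leaves, List.map_append, List.map_map, List.sum_append]
    by_cases h : x i ≤ θ
    · rw [if_pos h, ← hl (fun B => φ (B ∩ {x | x i ≤ θ}))]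
      have h' : ¬ θ < x i := not_lt.mpr h
      simp [Function.comp_def, h, h']
    · rw [if_neg h, ← hr (fun B => φ (B ∩ {x | θ < x i}))]
      have h' : θ < x i := not_le.mp h
      simp [Function.comp_def, h, h']

lemma box_prop {d : ℕ} (T : ThresholdTree d) (B) (hB : B ∈ T.leaves) (S : Finset (Fin d))
    (h0 : ind ∅ ∈ B) (hS : ind S ∉ B) : ∃ j ∈ S, ind {j} ∉ B := by
  induction T generalizing B with
  | leaf => simp [leaves] at hB; subst hB; simp at hS
  | node i θ l r hl hr =>
    simp only [leaves, List.mem_append, List.mem_map] at hB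
    rcases hB with ⟨B, hB, rfl⟩ | ⟨B, hB, rfl⟩
    · by_cases h : ind S ∈ B
      · have h1 : ¬ (ind S i ≤ θ) := fun h' => hS ⟨h, h'⟩
        have h2 : ind ∅ i ≤ θ := h0.2
        by_cases hi : i ∈ S
        · refine ⟨i, hi, fun h3 => h1 ?_⟩
          have h4 : ind {i} i ≤ θ := h3.2
          simpa [ind, hi] using h4
        · exact absurd (by simpa [ind, hi] using h2) h1
      · obtain ⟨j, hj, hj'⟩ := hl B hB h0.1 h
        exact ⟨j, hj, fun h => hj' h.1⟩
    · by_cases h : ind S ∈ B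
      · have h1 : ¬ (θ < ind S i) := fun h' => hS ⟨h, h'⟩
        have h2 : θ < ind ∅ i := h0.2
        by_cases hi : i ∈ S
        · simp [ind, hi] at h1 h2
          linarith
        · exact absurd (by simpa [ind, hi] using h2) h1
      · obtain ⟨j, hj, hj'⟩ := hr B hB h0.1 h
        exact ⟨j, hj, fun h => hj' h.1⟩

lemma ind_inj {d : ℕ} {S S' : Finset (Fin d)} (h : ind S = ind S') : S = S' := by
  ext j
  have := congrFun h j
  simp only [ind] at this
  by_cases h1 : j ∈ S <;> by_cases h2 : j ∈ S' <;> simp_all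

/-- Any nonempty finite set can be separated. -/
lemma exists_sep {d : ℕ} (n : ℕ) (F : Finset (Fin d → ℝ)) (hn : F.card = n) (hF : F.Nonempty) :
    ∃ T : ThresholdTree d, T.leaves.length = F.card ∧ T.Separates F := by
  classical
  induction n using Nat.strong_induction_on generalizing F with
  | _ n ih =>
  by_cases h1 : F.card ≤ 1
  · have h2 : F.card = 1 := le_antisymm h1 hF.card_pos
    obtain ⟨a, rfl⟩ := Finset.card_eq_one.mp h2
    refine ⟨.leaf, by simp [leaves], ?_⟩
    intro B hB
    simp [leaves] at hB
    subst hB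
    exact ⟨a, by simp, by simp⟩
  · push Not at h1
    obtain ⟨u, hu, v, hv, huv⟩ : ∃ u ∈ F, ∃ v ∈ F, ∃ i, u i < v i := by
      obtain ⟨u, hu, v, hv, huv⟩ := Finset.one_lt_card.mp h1
      obtain ⟨i, hi⟩ := Function.ne_iff.mp huv
      rcases lt_or_gt_of_ne hi with h | h
      · exact ⟨u, hu, v, hv, i, h⟩
      · exact ⟨v, hv, u, hu, i, h⟩
    obtain ⟨i, hi⟩ := huv
    have hsum := Finset.card_filter_add_card_filter_not (s := F) (fun x => x i ≤ u i)
    have hul : u ∈ F.filter (fun x => x i ≤ u i) := by simp [hu]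
    have hvr : v ∈ F.filter (fun x => ¬ x i ≤ u i) := by simp [hv, hi]
    have c1 := Finset.card_pos.mpr ⟨_, hul⟩
    have c2 := Finset.card_pos.mpr ⟨_, hvr⟩
    obtain ⟨Tl, hl, sl⟩ := ih _ (by omega) (F.filter (fun x => x i ≤ u i)) rfl ⟨_, hul⟩
    obtain ⟨Tr, hr, sr⟩ := ih _ (by omega) (F.filter (fun x => ¬ x i ≤ u i)) rfl ⟨_, hvr⟩
    refine ⟨.node i (u i) Tl Tr, by simp [leaves, hl, hr]; simpa using hsum, ?_⟩
    intro B hB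
    simp only [leaves, List.mem_append, List.mem_map] at hB
    rcases hB with ⟨B, hB, rfl⟩ | ⟨B, hB, rfl⟩
    · obtain ⟨w, ⟨hw, hw'⟩, hun⟩ := sl B hB
      rw [Finset.mem_filter] at hw
      refine ⟨w, ⟨hw.1, hw', hw.2⟩, ?_⟩
      rintro y ⟨hy, hy1, hy2⟩
      exact hun y ⟨Finset.mem_filter.mpr ⟨hy, hy2⟩, hy1⟩
    · obtain ⟨w, ⟨hw, hw'⟩, hun⟩ := sr B hB
      rw [Finset.mem_filter] at hw
      refine ⟨w, ⟨hw.1, hw', not_le.mp hw.2⟩, ?_⟩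
      rintro y ⟨hy, hy1, hy2⟩
      exact hun y ⟨Finset.mem_filter.mpr ⟨hy, not_le.mpr hy2⟩, hy1⟩

lemma exists_comb {d : ℕ} (H : Finset (Fin d)) (F : Finset (Finset (Fin d)))
    (hhit : ∀ S ∈ F, ∃ j ∈ H, j ∈ S)
    (hpriv : ∀ j ∈ H, ∃ S ∈ F, j ∈ S ∧ ∀ j' ∈ H, j' ∈ S → j' = j) :
    ∃ T : ThresholdTree d, T.leaves.length ≤ F.card + 1 ∧
      (∀ B ∈ T.leaves, ∀ S ∈ insert ∅ F, ∀ S' ∈ insert ∅ F, ind S ∈ B → ind S' ∈ B → S = S') ∧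
      (∀ j ∉ H, ind ∅ ∈ T.loc (ind {j})) ∧
      (∀ j ∈ H, ∃ S ∈ F, j ∈ S ∧ ind S ∈ T.loc (ind {j})) := by
  classical
  induction H using Finset.induction_on generalizing F with
  | empty =>
    have : F = ∅ := by
      apply Finset.eq_empty_of_forall_notMem
      intro S hS
      simpa using hhit S hS
    subst this
    exact ⟨.leaf, by simp [leaves], by simp, by simp [loc], by simp⟩
  | insert a H ha ih =>
    have hsum := Finset.card_filter_add_card_filter_not (s := F) (fun S => a ∈ S)
    obtain ⟨T, hT1, hT2, hT3, hT4⟩ := ih (F.filter (fun S => ¬ a ∈ S)) (by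
        intro S hS
        rw [Finset.mem_filter] at hS
        obtain ⟨j, hj, hjS⟩ := hhit S hS.1
        rcases Finset.mem_insert.mp hj with rfl | hj
        · exact absurd hjS hS.2
        · exact ⟨j, hj, hjS⟩) (by
        intro j hj
        obtain ⟨S, hS, hjS, hu⟩ := hpriv j (Finset.mem_insert_of_mem hj)
        refine ⟨S, Finset.mem_filter.mpr ⟨hS, fun haS => ?_⟩, hjS, fun j' hj' =>
          hu j' (Finset.mem_insert_of_mem hj')⟩
        have := hu a (Finset.mem_insert_self _ _) haS
        exact ha (this ▸ hj))
    obtain ⟨S0, hS0, haS0, -⟩ := hpriv a (Finset.mem_insert_self _ _)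
    obtain ⟨R, hR1, hR2⟩ := exists_sep _ ((F.filter (fun S => a ∈ S)).image ind) rfl
      ⟨ind S0, Finset.mem_image_of_mem _ (Finset.mem_filter.mpr ⟨hS0, haS0⟩)⟩
    have hR3 : R.leaves.length ≤ (F.filter (fun S => a ∈ S)).card :=
      hR1.trans_le Finset.card_image_le
    have hlow : ∀ S : Finset (Fin d), ind S a ≤ 1 / 2 → a ∉ S := by
      intro S h1 h2
      simp [ind, h2] at h1
      norm_num at h1
    have hhigh : ∀ S : Finset (Fin d), 1 / 2 < ind S a → a ∈ S := by
      intro S h1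
      by_contra h2
      simp [ind, h2] at h1
      norm_num at h1
    have hlow' : ∀ S : Finset (Fin d), a ∉ S → ind S a ≤ 1 / 2 := by
      intro S h1
      simp [ind, h1]
    have hhigh' : ∀ S : Finset (Fin d), a ∈ S → 1 / 2 < ind S a := by
      intro S h1
      simp [ind, h1]
      norm_num
    refine ⟨.node a (1/2) T R, ?_, ?_, ?_, ?_⟩
    · simp only [leaves, List.length_append, List.length_map]
      omega
    · intro B hB S hS S' hS' h1 h2
      simp only [leaves, List.mem_append, List.mem_map] at hB
      rcases hB with ⟨B, hB, rfl⟩ | ⟨B, hB, rfl⟩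
      · have a1 := hlow S h1.2
        have a2 := hlow S' h2.2
        refine hT2 B hB S ?_ S' ?_ h1.1 h2.1
        · simp only [Finset.mem_insert, Finset.mem_filter] at hS ⊢
          tauto
        · simp only [Finset.mem_insert, Finset.mem_filter] at hS' ⊢
          tauto
      · have a1 := hhigh S h1.2
        have a2 := hhigh S' h2.2
        have key : ∀ S, S ∈ insert ∅ F → a ∈ S →
            ind S ∈ (F.filter (fun S => a ∈ S)).image ind := by
          intro S hS haS
          apply Finset.mem_image_of_mem
          rw [Finset.mem_filter]
          refine ⟨?_, haS⟩
          rcases Finset.mem_insert.mp hS with rfl | h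
          · simp at haS
          · exact h
        exact ind_inj ((hR2 B hB).unique ⟨key S hS a1, h1.1⟩ ⟨key S' hS' a2, h2.1⟩)
    · intro j hj
      rw [Finset.mem_insert, not_or] at hj
      have h1 : ind {j} a ≤ 1 / 2 := hlow' _ (by simpa using fun h => hj.1 h.symm)
      simp only [loc]
      rw [if_pos h1]
      exact ⟨hT3 j hj.2, hlow' _ (by simp)⟩
    · intro j hj
      by_cases hja : j = a
      · subst hja
        have h1 : ¬ ind {j} j ≤ 1 / 2 := not_le.mpr (hhigh' _ (by simp))
        simp only [loc]
        rw [if_neg h1]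
        obtain ⟨w, ⟨hw, hw'⟩, -⟩ := hR2 _ (loc_mem_leaves R (ind {j}))
        obtain ⟨S, hS, rfl⟩ := Finset.mem_image.mp hw
        rw [Finset.mem_filter] at hS
        exact ⟨S, hS.1, hS.2, hw', hhigh' _ hS.2⟩
      · have hjH : j ∈ H := (Finset.mem_insert.mp hj).resolve_left hja
        have h1 : ind {j} a ≤ 1 / 2 := hlow' _ (by simpa using fun h => hja h.symm)
        simp only [loc]
        rw [if_pos h1]
        obtain ⟨S, hS, hjS, hm⟩ := hT4 j hjH
        rw [Finset.mem_filter] at hS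
        exact ⟨S, hS.1, hjS, hm, hlow' _ hS.2⟩

/-- The `ℓ₁` distance. -/
noncomputable def l1 {d : ℕ} (x y : Fin d → ℝ) : ℝ := ∑ i, |x i - y i|

lemma l1_nonneg {d : ℕ} (x y : Fin d → ℝ) : 0 ≤ l1 x y :=
  Finset.sum_nonneg fun _ _ => abs_nonneg _

lemma l1_self {d : ℕ} (x : Fin d → ℝ) : l1 x x = 0 := by simp [l1]

lemma l1_tri {d : ℕ} (x y z : Fin d → ℝ) : l1 x z ≤ l1 x y + l1 y z := by
  unfold l1
  rw [← Finset.sum_add_distrib]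
  exact Finset.sum_le_sum fun _ _ => abs_sub_le _ _ _

lemma l1_comm {d : ℕ} (x y : Fin d → ℝ) : l1 x y = l1 y x := by
  unfold l1
  exact Finset.sum_congr rfl fun _ _ => abs_sub_comm _ _

lemma l1_ind {d : ℕ} (S S' : Finset (Fin d)) : l1 (ind S) (ind S') = ((symmDiff S S').card : ℝ) := by
  unfold l1
  rw [Finset.card_eq_sum_ones, Nat.cast_sum, ← Finset.sum_filter_add_sum_filter_not Finset.univ (· ∈ symmDiff S S')]
  rw [Finset.filter_univ_mem]
  rw [Finset.sum_eq_zero (s := Finset.filter (fun x => x ∉ symmDiff S S') Finset.univ), add_zero]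
  · apply Finset.sum_congr rfl
    intro j hj
    rw [Finset.mem_symmDiff] at hj
    rcases hj with ⟨h1, h2⟩ | ⟨h1, h2⟩ <;> simp [ind, h1, h2]
  · intro j hj
    rw [Finset.mem_filter, Finset.mem_symmDiff] at hj
    by_cases h1 : j ∈ S <;> by_cases h2 : j ∈ S' <;> simp_all [ind]

lemma l1_ind_ne {d : ℕ} {S S' : Finset (Fin d)} (h : S ≠ S') : 1 ≤ l1 (ind S) (ind S') := by
  rw [l1_ind]
  have : 0 < (symmDiff S S').card := by
    rw [Finset.card_pos, Finset.nonempty_iff_ne_empty]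
    intro h'
    exact h (symmDiff_eq_bot.mp h')
  exact_mod_cast this

lemma l1_e_zero {d : ℕ} (j : Fin d) : l1 (ind {j}) (ind ∅) = 1 := by
  rw [l1_ind]
  have : symmDiff ({j} : Finset (Fin d)) ∅ = {j} := symmDiff_bot _
  simp [this]

lemma l1_e_mem {d : ℕ} (j : Fin d) (S : Finset (Fin d)) (hj : j ∈ S) :
    l1 (ind {j}) (ind S) = (S.card : ℝ) - 1 := by
  rw [l1_ind]
  have : symmDiff ({j} : Finset (Fin d)) S = S.erase j := by
    ext x
    by_cases hx : x = j
    · subst hx; simp [Finset.mem_symmDiff, hj]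
    · simp [Finset.mem_symmDiff, hx]
  rw [this, Finset.card_erase_of_mem hj, Nat.cast_sub (Finset.card_pos.mpr ⟨_, hj⟩)]
  simp

lemma l1_e_ge {d : ℕ} (j : Fin d) (S : Finset (Fin d)) :
    (S.card : ℝ) - 1 ≤ l1 (ind {j}) (ind S) := by
  have h1 := l1_tri (ind S) (ind {j}) (ind ∅)
  rw [l1_e_zero, l1_ind S ∅, l1_comm (ind S)] at h1
  have : symmDiff S ∅ = S := symmDiff_bot _
  rw [this] at h1
  linarith

/-- Centers, as sets. -/
def Dc {d k : ℕ} (Sets : Fin k → Finset (Fin d)) : Option (Fin k) → Finset (Fin d)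
  | none => ∅
  | some i => Sets i

open Classical in
/-- Cost of the points in `B` to `μ`. -/
noncomputable def gc {d k : ℕ} (M : ℕ) (Sets : Fin k → Finset (Fin d)) (B : Set (Fin d → ℝ))
    (μ : Fin d → ℝ) : ℝ :=
  (∑ j : Fin d, if ind {j} ∈ B then l1 (ind {j}) μ else 0) +
    M * ∑ c, if ind (Dc Sets c) ∈ B then l1 (ind (Dc Sets c)) μ else 0

lemma gc_nonneg {d k : ℕ} (M : ℕ) (Sets : Fin k → Finset (Fin d)) (B : Set (Fin d → ℝ))
    (μ : Fin d → ℝ) : 0 ≤ gc M Sets B μ := by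
  unfold gc
  have h : ∀ x : Fin d → ℝ, 0 ≤ l1 x μ := fun x => l1_nonneg _ _
  refine add_nonneg (Finset.sum_nonneg fun _ _ => ?_)
    (mul_nonneg (Nat.cast_nonneg _) (Finset.sum_nonneg fun _ _ => ?_)) <;> split_ifs <;> simp [h]

open Classical in
lemma filter_map_sum {α : Type*} (s : Multiset α) (p : α → Prop) (f : α → ℝ) :
    ((s.filter p).map f).sum = (s.map (fun x => if p x then f x else 0)).sum := by
  induction s using Multiset.induction_on with
  | empty => simp
  | cons a s ih => by_cases h : p a <;> simp [h, ih]

lemma leafMed_eq {d k : ℕ} (M : ℕ) (Sets : Fin k → Finset (Fin d)) (B : Set (Fin d → ℝ)) :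
    leafMedCost (dataSet d k M Sets) B = ⨅ μ, gc M Sets B μ := by
  classical
  unfold leafMedCost
  congr 1
  funext μ
  have h0 : (fun _ => (0:ℝ)) = ind (∅ : Finset (Fin d)) := by funext j; simp [ind]
  have := filter_map_sum (dataSet d k M Sets) (· ∈ B) (fun x => ∑ i, |x i - μ i|)
  convert this using 1
  unfold dataSet gc
  rw [h0]
  simp only [Multiset.map_add, Multiset.sum_add, Multiset.map_nsmul, Multiset.sum_nsmul,
    Multiset.map_cons, Multiset.sum_cons, Multiset.map_map, Fintype.sum_option, nsmul_eq_mul]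
  rfl

lemma leafMed_le {d k : ℕ} (M : ℕ) (Sets : Fin k → Finset (Fin d)) (B : Set (Fin d → ℝ)) (μ) :
    leafMedCost (dataSet d k M Sets) B ≤ gc M Sets B μ := by
  rw [leafMed_eq]
  exact ciInf_le ⟨0, by rintro _ ⟨ν, rfl⟩; exact gc_nonneg _ _ _ _⟩ μ

lemma le_leafMed {d k : ℕ} (M : ℕ) (Sets : Fin k → Finset (Fin d)) (B : Set (Fin d → ℝ)) (a : ℝ)
    (h : ∀ μ, a ≤ gc M Sets B μ) : a ≤ leafMedCost (dataSet d k M Sets) B := by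
  rw [leafMed_eq]
  exact le_ciInf h

lemma leafMed_nonneg {d k : ℕ} (M : ℕ) (Sets : Fin k → Finset (Fin d)) (B : Set (Fin d → ℝ)) :
    0 ≤ leafMedCost (dataSet d k M Sets) B :=
  le_leafMed _ _ _ _ fun _ => gc_nonneg _ _ _ _

lemma explCost_nonneg {d k : ℕ} (M : ℕ) (Sets : Fin k → Finset (Fin d)) (T : ThresholdTree d) :
    0 ≤ explCost T (dataSet d k M Sets) := by
  apply List.sum_nonneg
  intro x hx
  obtain ⟨B, -, rfl⟩ := List.mem_map.mp hx
  exact leafMed_nonneg _ _ _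

lemma list_sum_swap {α ι : Type*} [Fintype ι] {A : Type*} [AddCommMonoid A] (l : List α)
    (f : α → ι → A) :
    (l.map (fun B => ∑ j, f B j)).sum = ∑ j, (l.map (fun B => f B j)).sum := by
  induction l with
  | nil => simp
  | cons a l ih => simp [ih, Finset.sum_add_distrib]

lemma explCost_le {d k : ℕ} (M : ℕ) (Sets : Fin k → Finset (Fin d)) (T : ThresholdTree d)
    (m : Set (Fin d → ℝ) → (Fin d → ℝ)) :
    explCost T (dataSet d k M Sets) ≤ (∑ j, l1 (ind {j}) (m (T.loc (ind {j})))) +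
      M * ∑ c, l1 (ind (Dc Sets c)) (m (T.loc (ind (Dc Sets c)))) := by
  classical
  have h1 : explCost T (dataSet d k M Sets) ≤ (T.leaves.map (fun B => gc M Sets B (m B))).sum := by
    apply List.sum_le_sum
    intro B _
    exact leafMed_le _ _ _ _
  refine h1.trans (le_of_eq ?_)
  unfold gc
  rw [List.sum_map_add, List.sum_map_mul_left, list_sum_swap, list_sum_swap]
  congr 1
  · refine Finset.sum_congr rfl fun j _ => ?_
    exact sum_loc T (ind {j}) (fun B => l1 (ind {j}) (m B))
  · congr 1
    refine Finset.sum_congr rfl fun c _ => ?_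
    exact sum_loc T (ind (Dc Sets c)) (fun B => l1 (ind (Dc Sets c)) (m B))

lemma Dc_inj {d k : ℕ} (Sets : Fin k → Finset (Fin d)) (hinj : Function.Injective Sets)
    (hne : ∀ i, (Sets i).Nonempty) : Function.Injective (Dc Sets) := by
  rintro (_ | i) (_ | i') h
  · rfl
  · exact absurd h.symm (hne i').ne_empty
  · exact absurd h (hne i).ne_empty
  · exact congrArg some (hinj h)

lemma sum_two_values {d : ℕ} (H : Finset (Fin d)) (a : ℝ) :
    (∑ j : Fin d, if j ∈ H then a else 1) = (d : ℝ) + H.card * (a - 1) := by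
  have : ∀ j : Fin d, (if j ∈ H then a else 1) = 1 + (if j ∈ H then a - 1 else 0) := by
    intro j; split_ifs <;> ring
  simp [this, Finset.sum_add_distrib]
  ring

lemma part_a (d k s : ℕ) 
    (Sets : Fin k → Finset (Fin d)) (hinj : Function.Injective Sets)
    (hcard : ∀ i, (Sets i).card = s)
    (H : Finset (Fin d)) (hH : ∀ i, (H ∩ Sets i).Nonempty)
    (hmin : ∀ H' : Finset (Fin d), (∀ i, (H' ∩ Sets i).Nonempty) → H.card ≤ H'.card) (M : ℕ) :
    OPTM d k M Sets ≤ (d : ℝ) + (H.card : ℝ) * ((s : ℝ) - 2) := by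
  classical
  obtain ⟨T, hT1, hT2, hT3, hT4⟩ := exists_comb H (Finset.univ.image Sets) (by
      intro S hS
      obtain ⟨i, -, rfl⟩ := Finset.mem_image.mp hS
      obtain ⟨j, hj⟩ := hH i
      exact ⟨j, (Finset.mem_inter.mp hj).1, (Finset.mem_inter.mp hj).2⟩) (by
      intro j hj
      have h1 : ¬ ∀ i, (H.erase j ∩ Sets i).Nonempty := by
        intro h
        have := hmin _ h
        have := Finset.card_erase_lt_of_mem hj
        omega
      push Not at h1
      obtain ⟨i, hi⟩ := h1
      have hu : ∀ j' ∈ H, j' ∈ Sets i → j' = j := by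
        intro j' h1 h2
        by_contra h3
        have : j' ∈ H.erase j ∩ Sets i := by simp [h1, h2, h3]
        rw [hi] at this
        simp at this
      obtain ⟨j', hj'⟩ := hH i
      rw [Finset.mem_inter] at hj'
      have := hu j' hj'.1 hj'.2
      subst this
      exact ⟨Sets i, by simp, hj'.2, hu⟩)
  rw [Finset.card_image_of_injective _ hinj, Finset.card_univ, Fintype.card_fin] at hT1
  have hle : OPTM d k M Sets ≤ explCost T (dataSet d k M Sets) := by
    apply csInf_le
    · refine ⟨0, ?_⟩
      rintro _ ⟨T, -, rfl⟩
      exact explCost_nonneg _ _ _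
    · exact ⟨T, hT1, rfl⟩
  refine hle.trans ?_
  let m : Set (Fin d → ℝ) → (Fin d → ℝ) := fun B =>
    if h : ∃ S ∈ insert ∅ (Finset.univ.image Sets), ind S ∈ B then ind h.choose else 0
  have hm : ∀ B ∈ T.leaves, ∀ S ∈ insert ∅ (Finset.univ.image Sets), ind S ∈ B → m B = ind S := by
    intro B hB S hS hSB
    have h : ∃ S ∈ insert ∅ (Finset.univ.image Sets), ind S ∈ B := ⟨S, hS, hSB⟩
    simp only [m]
    rw [dif_pos h]
    rw [hT2 B hB _ h.choose_spec.1 S hS h.choose_spec.2 hSB]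
  refine (explCost_le M Sets T m).trans ?_
  have hz : ∑ c, l1 (ind (Dc Sets c)) (m (T.loc (ind (Dc Sets c)))) = 0 := by
    apply Finset.sum_eq_zero
    intro c _
    rw [hm _ (loc_mem_leaves _ _) (Dc Sets c) ?_ (mem_loc _ _), l1_self]
    rcases c with _ | i <;> simp [Dc]
  rw [hz, mul_zero, add_zero]
  have h2 := sum_two_values H ((s : ℝ) - 1)
  have : (d : ℝ) + (H.card : ℝ) * ((s : ℝ) - 2) = ∑ j : Fin d, if j ∈ H then (s : ℝ) - 1 else 1 := by
    rw [h2]; ring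
  rw [this]
  apply Finset.sum_le_sum
  intro j _
  by_cases hj : j ∈ H
  · rw [if_pos hj]
    obtain ⟨S, hS, hjS, hSl⟩ := hT4 j hj
    rw [hm _ (loc_mem_leaves _ _) S (Finset.mem_insert_of_mem hS) hSl, l1_e_mem j S hjS]
    obtain ⟨i, -, rfl⟩ := Finset.mem_image.mp hS
    rw [hcard]
  · rw [if_neg hj]
    rw [hm _ (loc_mem_leaves _ _) ∅ (by simp) (hT3 j hj), l1_e_zero]

lemma leaf_two {d k : ℕ} (M : ℕ) (Sets : Fin k → Finset (Fin d)) (B : Set (Fin d → ℝ))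
    (c c' : Option (Fin k)) (hcc : Dc Sets c ≠ Dc Sets c')
    (h1 : ind (Dc Sets c) ∈ B) (h2 : ind (Dc Sets c') ∈ B) :
    (M : ℝ) ≤ leafMedCost (dataSet d k M Sets) B := by
  classical
  apply le_leafMed
  intro μ
  unfold gc
  have hn : ∀ x : Fin d → ℝ, 0 ≤ (if x ∈ B then l1 x μ else 0) := by
    intro x; split_ifs
    · exact l1_nonneg _ _
    · exact le_rfl
  have a1 : 0 ≤ ∑ j : Fin d, (if ind {j} ∈ B then l1 (ind {j}) μ else 0) :=
    Finset.sum_nonneg fun _ _ => hn _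
  have a2 : 1 ≤ ∑ c, if ind (Dc Sets c) ∈ B then l1 (ind (Dc Sets c)) μ else 0 := by
    have hne : c ≠ c' := fun h => hcc (by rw [h])
    have b1 := Finset.sum_le_sum_of_subset_of_nonneg (Finset.subset_univ {c, c'})
      (f := fun c => if ind (Dc Sets c) ∈ B then l1 (ind (Dc Sets c)) μ else 0)
      (fun i _ _ => hn _)
    rw [Finset.sum_pair hne, if_pos h1, if_pos h2] at b1
    have b2 := l1_tri (ind (Dc Sets c)) μ (ind (Dc Sets c'))
    rw [l1_comm μ] at b2
    have b3 := l1_ind_ne hcc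
    linarith
  have := mul_le_mul_of_nonneg_left a2 (Nat.cast_nonneg (α := ℝ) M)
  linarith

open Classical in
lemma leaf_one {d k : ℕ} (M : ℕ) (hM : d ≤ M) (Sets : Fin k → Finset (Fin d))
    (B : Set (Fin d → ℝ)) (c : Option (Fin k)) (h1 : ind (Dc Sets c) ∈ B) :
    (∑ j : Fin d, if ind {j} ∈ B then l1 (ind {j}) (ind (Dc Sets c)) else 0) ≤
      leafMedCost (dataSet d k M Sets) B := by
  apply le_leafMed
  intro μ
  unfold gc
  have hn : ∀ x : Fin d → ℝ, 0 ≤ (if x ∈ B then l1 x μ else 0) := by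
    intro x; split_ifs
    · exact l1_nonneg _ _
    · exact le_rfl
  have a2 := Finset.single_le_sum
      (f := fun c => if ind (Dc Sets c) ∈ B then l1 (ind (Dc Sets c)) μ else 0)
      (fun i _ => hn _) (Finset.mem_univ c)
  simp only [if_pos h1] at a2
  have a3 : (∑ j : Fin d, if ind {j} ∈ B then l1 (ind {j}) (ind (Dc Sets c)) else 0) ≤
      ∑ j : Fin d, ((if ind {j} ∈ B then l1 (ind {j}) μ else 0) + l1 (ind (Dc Sets c)) μ) := by
    apply Finset.sum_le_sum
    intro j _
    split_ifs
    · rw [l1_comm (ind (Dc Sets c)) μ]; exact l1_tri _ _ _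
    · simpa using l1_nonneg _ _
  rw [Finset.sum_add_distrib] at a3
  simp only [Finset.sum_const, Finset.card_univ, Fintype.card_fin, nsmul_eq_mul] at a3
  have a4 : (d : ℝ) * l1 (ind (Dc Sets c)) μ ≤ M * l1 (ind (Dc Sets c)) μ :=
    mul_le_mul_of_nonneg_right (by exact_mod_cast hM) (l1_nonneg _ _)
  have a5 := mul_le_mul_of_nonneg_left a2 (Nat.cast_nonneg (α := ℝ) M)
  linarith

lemma list_count {α : Type*} (l : List α) (f : α → ℕ) (h1 : ∀ x ∈ l, f x ≤ 1)
    (h2 : l.length ≤ (l.map f).sum) : ∀ x ∈ l, f x = 1 := by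
  induction l with
  | nil => simp
  | cons a l ih =>
    have hl : (l.map f).sum ≤ l.length := by
      have := List.sum_le_card_nsmul (l.map f) 1 (by
        intro y hy
        obtain ⟨x, hx, rfl⟩ := List.mem_map.mp hy
        exact h1 x (List.mem_cons_of_mem _ hx))
      simpa using this
    have ha := h1 a List.mem_cons_self
    simp only [List.map_cons, List.sum_cons, List.length_cons] at h2
    intro x hx
    rcases List.mem_cons.mp hx with rfl | hx
    · omega
    · exact ih (fun y hy => h1 y (List.mem_cons_of_mem _ hy)) (by omega) x hx

lemma part_b (d k s : ℕ) (hs : 2 ≤ s)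
    (Sets : Fin k → Finset (Fin d)) (hinj : Function.Injective Sets)
    (hne : ∀ i, (Sets i).Nonempty) (hcard : ∀ i, (Sets i).card = s) (h : ℕ)
    (hmin : ∀ H : Finset (Fin d), (∀ i, (H ∩ Sets i).Nonempty) → h ≤ H.card) (M : ℕ)
    (hM : d + h * (s - 2) ≤ M) (T : ThresholdTree d) (hT : T.leaves.length ≤ k + 1) :
    (d : ℝ) + (h : ℝ) * ((s : ℝ) - 2) ≤ explCost T (dataSet d k M Sets) := by
  classical
  have hD := Dc_inj Sets hinj hne
  have hs' : (2 : ℝ) ≤ s := by exact_mod_cast hs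
  by_cases h1 : ∃ B ∈ T.leaves, ∃ c c', c ≠ c' ∧ ind (Dc Sets c) ∈ B ∧ ind (Dc Sets c') ∈ B
  · obtain ⟨B, hB, c, c', hcc, hc, hc'⟩ := h1
    have a1 := leaf_two M Sets B c c' (fun h => hcc (hD h)) hc hc'
    have a2 : leafMedCost (dataSet d k M Sets) B ≤ explCost T (dataSet d k M Sets) := by
      apply List.single_le_sum
      · intro x hx
        obtain ⟨B, -, rfl⟩ := List.mem_map.mp hx
        exact leafMed_nonneg _ _ _
      · exact List.mem_map_of_mem hB
    have a3 : (d : ℝ) + (h : ℝ) * ((s : ℝ) - 2) ≤ M := by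
      have : ((d + h * (s - 2) : ℕ) : ℝ) ≤ M := by exact_mod_cast hM
      rwa [Nat.cast_add, Nat.cast_mul, Nat.cast_sub hs] at this
    linarith
  · push Not at h1
    have hone : ∀ B ∈ T.leaves, ∃ c, ind (Dc Sets c) ∈ B := by
      have key := list_count T.leaves
        (fun B => ∑ c : Option (Fin k), if ind (Dc Sets c) ∈ B then 1 else 0) (by
          intro B hB
          rw [← Finset.sum_filter, ← Finset.card_eq_sum_ones, Finset.card_le_one]
          intro a ha b hb
          by_contra hab
          exact h1 B hB a b hab (Finset.mem_filter.mp ha).2 (Finset.mem_filter.mp hb).2) (by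
          rw [list_sum_swap]
          have : ∀ c : Option (Fin k),
              (T.leaves.map (fun B => if ind (Dc Sets c) ∈ B then 1 else 0)).sum = 1 :=
            fun c => sum_loc T (ind (Dc Sets c)) (fun _ => 1)
          simp only [this]
          simpa using hT)
      intro B hB
      have := key B hB
      by_contra hcon
      push Not at hcon
      simp [hcon] at this
    -- per-leaf lower bound
    have hleaf : ∀ B ∈ T.leaves,
        (∑ j : Fin d, if ind {j} ∈ B then (if ind ∅ ∈ B then (1 : ℝ) else s - 1) else 0) ≤
          leafMedCost (dataSet d k M Sets) B := by
      intro B hB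
      obtain ⟨c, hc⟩ := hone B hB
      refine le_trans ?_ (leaf_one M (by nlinarith) Sets B c hc)
      apply Finset.sum_le_sum
      intro j _
      by_cases hj : ind {j} ∈ B
      · rw [if_pos hj, if_pos hj]
        rcases c with _ | i
        · have hc0 : ind ∅ ∈ B := hc
          rw [if_pos hc0]
          exact (l1_e_zero j).ge
        · have hc0 : ind ∅ ∉ B := fun h0 => h1 B hB none (some i) (by simp) h0 hc
          rw [if_neg hc0]
          have := l1_e_ge j (Sets i)
          rw [hcard] at this
          exact this
      · rw [if_neg hj, if_neg hj]
    have hsum : (∑ j : Fin d, if ind ∅ ∈ T.loc (ind {j}) then (1 : ℝ) else s - 1) ≤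
        explCost T (dataSet d k M Sets) := by
      have := List.sum_le_sum hleaf
      rw [list_sum_swap] at this
      refine le_trans (le_of_eq ?_) this
      refine Finset.sum_congr rfl fun j _ => ?_
      exact (sum_loc T (ind {j}) (fun B => if ind ∅ ∈ B then (1 : ℝ) else s - 1)).symm
    let H : Finset (Fin d) := Finset.univ.filter (fun j => ind ∅ ∉ T.loc (ind {j}))
    have hH : ∀ i, (H ∩ Sets i).Nonempty := by
      intro i
      obtain ⟨j, hj, hj'⟩ := box_prop T (T.loc (ind ∅)) (loc_mem_leaves _ _) (Sets i) (mem_loc _ _)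
        (fun hi => h1 _ (loc_mem_leaves T (ind ∅)) none (some i) (by simp) (mem_loc T (ind ∅)) hi)
      refine ⟨j, Finset.mem_inter.mpr ⟨Finset.mem_filter.mpr ⟨Finset.mem_univ _, fun h0 => hj' ?_⟩, hj⟩⟩
      rw [loc_eq T _ _ h0]
      exact mem_loc _ _
    have hHc : (h : ℝ) ≤ H.card := by exact_mod_cast hmin H hH
    have h2 := sum_two_values H ((s : ℝ) - 1)
    have h3 : (∑ j : Fin d, if j ∈ H then (s : ℝ) - 1 else 1) =
        ∑ j : Fin d, if ind ∅ ∈ T.loc (ind {j}) then (1 : ℝ) else s - 1 := by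
      refine Finset.sum_congr rfl fun j _ => ?_
      by_cases h0 : ind ∅ ∈ T.loc (ind {j}) <;> simp [H, h0]
    rw [← h3, h2] at hsum
    have : (h : ℝ) * (s - 2) ≤ H.card * (s - 2) := mul_le_mul_of_nonneg_right hHc (by linarith)
    linarith

/-- the hitting-set reduction. For the instance `𝒳_M` built from an
`s`-uniform family `S₁,…,S_k` with minimum hitting set size `h`:
(a) `OPT_M ≤ d + h(s−2)` for all `M ≥ 1`, and
(b) for every `ε > 0`, `OPT_M ≥ d + h(s−2−ε)` for all large enough `M`. -/
theorem stmt17 (d k s : ℕ) (hd : 1 ≤ d) (hk : 1 ≤ k) (hs : 2 ≤ s)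
    (Sets : Fin k → Finset (Fin d)) (hinj : Function.Injective Sets)
    (hne : ∀ i, (Sets i).Nonempty) (hcard : ∀ i, (Sets i).card = s)
    (h : ℕ)
    (hex : ∃ H : Finset (Fin d), (∀ i, (H ∩ Sets i).Nonempty) ∧ H.card = h)
    (hmin : ∀ H : Finset (Fin d), (∀ i, (H ∩ Sets i).Nonempty) → h ≤ H.card) :
    (∀ M : ℕ, 1 ≤ M →
        OPTM d k M Sets ≤ (d : ℝ) + (h : ℝ) * ((s : ℝ) - 2)) ∧
    (∀ ε : ℝ, 0 < ε → ∃ M₀ : ℕ, ∀ M : ℕ, M₀ ≤ M →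
        (d : ℝ) + (h : ℝ) * ((s : ℝ) - 2 - ε) ≤ OPTM d k M Sets) := by

  obtain ⟨H, hH, rfl⟩ := hex
  refine ⟨fun M _ => part_a d k s Sets hinj hcard H hH hmin M, fun ε hε => ⟨d + H.card * (s - 2), ?_⟩⟩
  intro M hM
  apply le_csInf
  · exact ⟨_, .leaf, by simp [ThresholdTree.leaves], rfl⟩
  · rintro _ ⟨T, hT, rfl⟩
    have := part_b d k s hs Sets hinj hne hcard H.card hmin M hM T hT
    have h2 : 0 ≤ (H.card : ℝ) * ε := by positivity
    nlinarith
end
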